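/- Let 0 < r1 ≤ r2 and let n be an integer with 2 ≤ n ≤ 5. Then there exist real numbers ṽ* and ṽ** with 0 < ṽ* ≤ ṽ** such that the isoperimetric profile of T^2 × R^n = S^1_{r1} × S^1_{r2} × R^n satisfies: for every v with 0 < v ≤ ṽ*, I_{T^2×R^n}(v) = I_{S^1_{r1}×R^{n+1}}(v), and for every v ≥ ṽ**, I_{T^2×R^n}(v) = f_n(v). -/

import Mathlib

open MeasureTheory Real ENNReal NNReal

noncomputable section

/-- The flat circle of radius `r` (circumference `2πr`), i.e. `ℝ / (2πr)ℤ`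
with the quotient (arc-length) metric. -/
abbrev Circ (r : ℝ) : Type := AddCircle (2 * Real.pi * r)

/-- `d`-dimensional Hausdorff (Riemannian) measure of a subset of a metric space. -/
noncomputable def haus (X : Type*) [EMetricSpace X] (d : ℕ) (s : Set X) : ℝ≥0∞ :=
  letI : MeasurableSpace X := borel X
  haveI : BorelSpace X := ⟨rfl⟩
  (MeasureTheory.Measure.hausdorffMeasure (d : ℝ) : Measure X) s

/-- A closed region is the closure of an open set. -/
def IsClosedRegion {X : Type*} [TopologicalSpace X] (U : Set X) : Prop :=
  ∃ V : Set X, IsOpen V ∧ U = closure V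

/-- The isoperimetric profile of an `m`-dimensional space `X`:
the infimum of the `(m-1)`-dimensional boundary measures of closed regions
of `m`-dimensional measure `v`. -/
noncomputable def isoProfile (X : Type*) [EMetricSpace X] (m : ℕ) (v : ℝ≥0∞) : ℝ≥0∞ :=
  ⨅ (U : Set X) (_ : IsClosedRegion U ∧ haus X m U = v), haus X (m - 1) (frontier U)

/-- An isoperimetric region in the `m`-dimensional space `X`. -/
def IsIsoRegion (X : Type*) [EMetricSpace X] (m : ℕ) (Ω : Set X) : Prop :=
  IsClosedRegion Ω ∧ haus X (m - 1) (frontier Ω) = isoProfile X m (haus X m Ω)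

/-- Euclidean `n`-space. -/
abbrev EucSp (n : ℕ) : Type := EuclideanSpace ℝ (Fin n)

/-- The Riemannian product `S¹_r × ℝ^m` (with the `ℓ²` product metric). -/
abbrev S1R (r : ℝ) (m : ℕ) : Type := WithLp 2 (Circ r × EucSp m)

/-- The Riemannian product `S¹_{r1} × S¹_{r2} × ℝ^n = T² × ℝ^n`. -/
abbrev T2R (r1 r2 : ℝ) (n : ℕ) : Type := WithLp 2 (Circ r1 × S1R r2 n)

/-- first circle coordinate of a point of `T² × ℝ^n` -/
def t2fst {r1 r2 : ℝ} {n : ℕ} (p : T2R r1 r2 n) : Circ r1 :=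
  (WithLp.equiv 2 (Circ r1 × S1R r2 n) p).1

/-- second circle coordinate of a point of `T² × ℝ^n` -/
def t2snd {r1 r2 : ℝ} {n : ℕ} (p : T2R r1 r2 n) : Circ r2 :=
  (WithLp.equiv 2 (Circ r2 × EucSp n) ((WithLp.equiv 2 (Circ r1 × S1R r2 n) p).2)).1

/-- Euclidean coordinate of a point of `T² × ℝ^n` -/
def t2euc {r1 r2 : ℝ} {n : ℕ} (p : T2R r1 r2 n) : EucSp n :=
  (WithLp.equiv 2 (Circ r2 × EucSp n) ((WithLp.equiv 2 (Circ r1 × S1R r2 n) p).2)).2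

/-- `ω_n`, the `n`-dimensional volume of the unit round sphere `Sⁿ ⊂ ℝ^{n+1}`. -/
noncomputable def omegaS (n : ℕ) : ℝ :=
  (haus (EucSp (n+1)) n (Metric.sphere (0 : EucSp (n+1)) 1)).toReal

/-- `β_n(r) = n^{(n-1)(n+1)} (2πr ω_{n-1})^{n+1} (1+n)^{-n²} ω_n^{-n}`. -/
noncomputable def betaC (n : ℕ) (r : ℝ) : ℝ :=
  (n : ℝ) ^ ((n-1)*(n+1)) * (2 * Real.pi * r * omegaS (n-1)) ^ (n+1) *
    ((1 + (n : ℝ)) ^ (n^2))⁻¹ * ((omegaS n) ^ n)⁻¹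

/-- The isoperimetric profile of `ℝ^m`: `I_{ℝ^m}(v) = m^{(m-1)/m} ω_{m-1}^{1/m} v^{(m-1)/m}`. -/
noncomputable def eucProfile (m : ℕ) (v : ℝ) : ℝ :=
  (m : ℝ) ^ (((m : ℝ) - 1)/m) * omegaS (m-1) ^ ((1 : ℝ)/m) * v ^ (((m : ℝ) - 1)/m)

/-- The region `S¹_{r1} × S¹_{r2} × B^n_R` in `T² × ℝ^n`. -/
def tball (r1 r2 : ℝ) (n : ℕ) (R : ℝ) : Set (T2R r1 r2 n) :=
  {p | ‖t2euc p‖ ≤ R}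

/-- `f_n(v) = V^{n+1}(∂(S¹_{r1} × S¹_{r2} × B^n_R))`, where `R > 0` is such that
`V^{n+2}(S¹_{r1} × S¹_{r2} × B^n_R) = v`. -/
noncomputable def fA (r1 r2 : ℝ) (n : ℕ) (v : ℝ≥0∞) : ℝ≥0∞ :=
  ⨅ (R : ℝ) (_ : 0 < R ∧ haus (T2R r1 r2 n) (n+2) (tball r1 r2 n R) = v),
    haus (T2R r1 r2 n) (n+1) (frontier (tball r1 r2 n R))

/-- The slice function `F₁(t) = V^{n+1}(Ω ∩ ({t} × S¹_{r2} × ℝ^n))`. -/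
noncomputable def sliceF1 {r1 r2 : ℝ} {n : ℕ} (Ω : Set (T2R r1 r2 n)) (t : Circ r1) : ℝ≥0∞ :=
  haus (T2R r1 r2 n) (n+1) (Ω ∩ {p | t2fst p = t})

/-- The slice function `F₂(s) = V^{n+1}(Ω ∩ (S¹_{r1} × {s} × ℝ^n))`. -/
noncomputable def sliceF2 {r1 r2 : ℝ} {n : ℕ} (Ω : Set (T2R r1 r2 n)) (s : Circ r2) : ℝ≥0∞ :=
  haus (T2R r1 r2 n) (n+1) (Ω ∩ {p | t2snd p = s})

/-- `θ_m`, the minimum (infimum) of the slice function `F₁`. -/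
noncomputable def thetaMin {r1 r2 : ℝ} {n : ℕ} (Ω : Set (T2R r1 r2 n)) : ℝ≥0∞ :=
  ⨅ t : Circ r1, sliceF1 Ω t

/-- `θ_M`, the maximum (supremum) of the slice function `F₁`. -/
noncomputable def thetaMax {r1 r2 : ℝ} {n : ℕ} (Ω : Set (T2R r1 r2 n)) : ℝ≥0∞ :=
  ⨆ t : Circ r1, sliceF1 Ω t

/-- `σ_m`, the minimum (infimum) of the slice function `F₂`. -/
noncomputable def sigmaMin {r1 r2 : ℝ} {n : ℕ} (Ω : Set (T2R r1 r2 n)) : ℝ≥0∞ :=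
  ⨅ s : Circ r2, sliceF2 Ω s

/-- `σ_M`, the maximum (supremum) of the slice function `F₂`. -/
noncomputable def sigmaMax {r1 r2 : ℝ} {n : ℕ} (Ω : Set (T2R r1 r2 n)) : ℝ≥0∞ :=
  ⨆ s : Circ r2, sliceF2 Ω s

/-- The region `S¹_r × B^m_R` in `S¹_r × ℝ^m`. -/
def s1ball (r : ℝ) (m : ℕ) (R : ℝ) : Set (S1R r m) :=
  {p | ‖(WithLp.equiv 2 (Circ r × EucSp m) p).2‖ ≤ R}


section

open Filter Topology Set

/-!
Unrolling the circles turns a region of the product into a periodic set in a Euclidean space, and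
mollifying its indicator bounds the Hausdorff measure of its frontier below by the gradient
integrals of smooth periodic functions. Functional isoperimetric inequalities on `ℝ × V` or
`S¹ × V` follow from those on `V` by slicing: test the gradient against a field `(α, σ)` of length
at most one that depends only on the slice volume `A t`. The `σ` part is bounded below by the
inequality on the slices, the `α` part by twice `∫ α` over the range of `A`.

* With the unit normals of the concentric spheres cut into caps, this gives the Euclidean inequality
  by induction on the dimension.
* On a circle the same field applies when the slice volume gets down to `0`. If its least value is
  positive, the missing caps cost little, and since a small volume leaves slices of small radius
  over half of the circle, enlarging `σ` there recovers the loss. So small volumes obey the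
  Euclidean inequality in the torus product as well as in the cylinder, with equality for balls.
* For large volumes a large oscillation of `A` already costs too much perimeter. A small one is paid
  for by a constant field, and the bound is then, up to its slack, the one for constant `A`: the
  perimeter of the product of the circle with a region of `V`. Applied to both circles this is
  the perimeter of the torus times a ball of `ℝⁿ`.
-/

section Oscillation

variable {E : Type*} [NormedAddCommGroup E] [NormedSpace ℝ E] [CompleteSpace E]

lemma enorm_sub_le_lintegral_deriv {h : ℝ → E} (hh : ContDiff ℝ 1 h) {a b : ℝ} (hab : a ≤ b) :
    ‖h b - h a‖ₑ ≤ ∫⁻ t in Ioc a b, ‖deriv h t‖ₑ := by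
  have hc : Continuous (deriv h) := hh.continuous_deriv le_rfl
  rw [← intervalIntegral.integral_deriv_eq_sub
    (fun x _ => hh.differentiable one_ne_zero x) (hc.intervalIntegrable _ _),
    intervalIntegral.integral_of_le hab]
  exact enorm_integral_le_lintegral_enorm _

lemma two_mul_enorm_sub_le_lintegral_deriv {h : ℝ → E} (hh : ContDiff ℝ 1 h) {a b s t : ℝ}
    (hab : h a = h b) (hs : s ∈ Icc a b) (ht : t ∈ Icc a b) :
    2 * ‖h s - h t‖ₑ ≤ ∫⁻ u in Ioc a b, ‖deriv h u‖ₑ := by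
  wlog hst : s ≤ t generalizing s t
  · rw [← enorm_neg, neg_sub]
    exact this ht hs (le_of_not_ge hst)
  have hsplit : ∫⁻ u in Ioc a b, ‖deriv h u‖ₑ = (∫⁻ u in Ioc a s, ‖deriv h u‖ₑ) +
      (∫⁻ u in Ioc s t, ‖deriv h u‖ₑ) + ∫⁻ u in Ioc t b, ‖deriv h u‖ₑ := by
    rw [← Ioc_union_Ioc_eq_Ioc (hs.1.trans hst) ht.2, ← Ioc_union_Ioc_eq_Ioc hs.1 hst,
      lintegral_union measurableSet_Ioc, lintegral_union measurableSet_Ioc]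
    · exact Ioc_disjoint_Ioc_of_le le_rfl
    · rw [Ioc_union_Ioc_eq_Ioc hs.1 hst]
      exact Ioc_disjoint_Ioc_of_le le_rfl
  have hinner : ‖h s - h t‖ₑ ≤ ∫⁻ u in Ioc s t, ‖deriv h u‖ₑ := by
    rw [← enorm_neg, neg_sub]
    exact enorm_sub_le_lintegral_deriv hh hst
  have houter : ‖h s - h t‖ₑ ≤ (∫⁻ u in Ioc a s, ‖deriv h u‖ₑ) +
      ∫⁻ u in Ioc t b, ‖deriv h u‖ₑ :=
    calc ‖h s - h t‖ₑ = ‖(h s - h a) + (h b - h t)‖ₑ := by rw [hab]; congr 1; abel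
      _ ≤ ‖h s - h a‖ₑ + ‖h b - h t‖ₑ := enorm_add_le _ _
      _ ≤ _ := add_le_add (enorm_sub_le_lintegral_deriv hh hs.1)
        (enorm_sub_le_lintegral_deriv hh ht.2)
  calc 2 * ‖h s - h t‖ₑ ≤ (∫⁻ u in Ioc s t, ‖deriv h u‖ₑ) +
        ((∫⁻ u in Ioc a s, ‖deriv h u‖ₑ) + ∫⁻ u in Ioc t b, ‖deriv h u‖ₑ) := by
        rw [two_mul]; exact add_le_add hinner houter
    _ = _ := by rw [hsplit]; ring

/-- The total variation over `I` of a `C¹` function with periods in `Λ`, constant far out on `I`,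
is at least twice its oscillation. This is what the two one-dimensional factors, a period `[0, L)`
of a circle and the whole line, have in common. -/
def OscillationBound (I Λ : Set ℝ) : Prop :=
  ∀ h : ℝ → ℝ, ContDiff ℝ 1 h → (∀ l ∈ Λ, ∀ t, h (t + l) = h t) →
    (∃ R c, ∀ t ∈ I, R < |t| → h t = c) → ∀ t₁ ∈ I, ∀ t₂ ∈ I,
      2 * ‖h t₁ - h t₂‖ₑ ≤ ∫⁻ t in I, ‖deriv h t‖ₑ

lemma oscillationBound_Ico (L : ℝ) : OscillationBound (Ico 0 L) {L} := by
  intro h hh hper _ t₁ ht₁ t₂ ht₂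
  rw [setLIntegral_congr Ico_ae_eq_Ioc]
  exact two_mul_enorm_sub_le_lintegral_deriv hh (by simpa using (hper L rfl 0).symm)
    (Ico_subset_Icc_self ht₁) (Ico_subset_Icc_self ht₂)

lemma oscillationBound_univ : OscillationBound univ ∅ := by
  rintro h hh - ⟨R, c, hR⟩ t₁ - t₂ -
  set S := max (R + 1) (max |t₁| |t₂|)
  have hRS : R < |S| := (lt_add_one R).trans_le ((le_max_left _ _).trans (le_abs_self S))
  have hends : h (-S) = h S := by
    rw [hR S trivial hRS, hR (-S) trivial (by rwa [abs_neg])]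
  have ht₁ : t₁ ∈ Icc (-S) S := abs_le.mp ((le_max_left _ _).trans (le_max_right _ _))
  have ht₂ : t₂ ∈ Icc (-S) S := abs_le.mp ((le_max_right _ _).trans (le_max_right _ _))
  exact (two_mul_enorm_sub_le_lintegral_deriv hh hends ht₁ ht₂).trans
    (lintegral_mono_set (subset_univ _))

end Oscillation

/-- The Riemannian product `ℝ × V` of a line with `V`. -/
abbrev LineProd (V : Type*) : Type _ := WithLp 2 (ℝ × V)

namespace LineProd

/-- The point of `ℝ × V` with the given coordinates. -/
abbrev pair {V : Type*} (t : ℝ) (x : V) : LineProd V := WithLp.toLp 2 (t, x)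

variable {V : Type*} [NormedAddCommGroup V]

lemma pair_add_pair (s t : ℝ) (x y : V) : pair s x + pair t y = pair (s + t) (x + y) := rfl

lemma norm_sq_eq (q : LineProd V) : ‖q‖ ^ 2 = q.fst ^ 2 + ‖q.snd‖ ^ 2 := by
  rw [WithLp.prod_norm_sq_eq_of_L2, Real.norm_eq_abs, sq_abs]

lemma norm_pair_le (t : ℝ) (x : V) : ‖pair t x‖ ≤ |t| + ‖x‖ :=
  calc ‖pair t x‖ = ‖pair t (0 : V) + pair 0 x‖ := by rw [pair_add_pair, add_zero, zero_add]
    _ ≤ ‖pair t (0 : V)‖ + ‖pair 0 x‖ := norm_add_le _ _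
    _ = |t| + ‖x‖ := by rw [WithLp.norm_toLp_fst, WithLp.norm_toLp_snd, Real.norm_eq_abs]

lemma norm_le_norm_pair (t : ℝ) (x : V) : ‖x‖ ≤ ‖pair t x‖ := WithLp.norm_snd_le ℝ (pair t x)

lemma abs_le_norm_pair (t : ℝ) (x : V) : |t| ≤ ‖pair t x‖ := WithLp.norm_fst_le ℝ (pair t x)

lemma continuous_pair : Continuous fun p : ℝ × V => pair p.1 p.2 :=
  WithLp.prod_continuous_toLp 2 ℝ V

lemma continuous_pair_right (t : ℝ) : Continuous fun x : V => pair t x :=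
  continuous_pair.comp (Continuous.prodMk_right t)

lemma continuous_pair_left (x : V) : Continuous fun t => pair t x :=
  continuous_pair.comp (Continuous.prodMk_left x)

variable [NormedSpace ℝ V]

variable (V) in
/-- The inclusion of the factor `V`. -/
def inr : V →L[ℝ] LineProd V :=
  (WithLp.prodContinuousLinearEquiv 2 ℝ ℝ V).symm.toContinuousLinearMap.comp
    (ContinuousLinearMap.inr ℝ ℝ V)

@[simp] lemma inr_apply (x : V) : inr V x = pair 0 x := rfl

variable (V) in
/-- The inclusion of the line. -/
def inl : ℝ →L[ℝ] LineProd V :=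
  (WithLp.prodContinuousLinearEquiv 2 ℝ ℝ V).symm.toContinuousLinearMap.comp
    (ContinuousLinearMap.inl ℝ ℝ V)

@[simp] lemma inl_apply (t : ℝ) : inl V t = pair t 0 := rfl

lemma pair_eq_inl_add_inr (t : ℝ) (x : V) : pair t x = inl V t + inr V x := by
  rw [inl_apply, inr_apply, pair_add_pair, add_zero, zero_add]

/-- The derivative of `g` along the line factor. -/
def fstDeriv (g : LineProd V → ℝ) (q : LineProd V) : ℝ := fderiv ℝ g q (inl V 1)

variable {g : LineProd V → ℝ}

lemma continuous_fstDeriv (hg : ContDiff ℝ 1 g) : Continuous (fstDeriv g) :=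
  (hg.continuous_fderiv one_ne_zero).clm_apply continuous_const

lemma hasDerivAt_pair_left (hg : ContDiff ℝ 1 g) (t : ℝ) (x : V) :
    HasDerivAt (fun t => g (pair t x)) (fstDeriv g (pair t x)) t := by
  have hpair : HasDerivAt (fun t : ℝ => pair t x) (inl V 1) t := by
    simp_rw [pair_eq_inl_add_inr]
    exact (inl V).hasDerivAt.add_const _
  exact (hg.differentiable one_ne_zero _).hasFDerivAt.comp_hasDerivAt t hpair

lemma fderiv_pair_right (hg : ContDiff ℝ 1 g) (t : ℝ) (x : V) :
    fderiv ℝ (fun x => g (pair t x)) x = (fderiv ℝ g (pair t x)).comp (inr V) := by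
  have hpair : HasFDerivAt (fun x : V => pair t x) (inr V) x := by
    simp_rw [pair_eq_inl_add_inr]
    exact (inr V).hasFDerivAt.const_add _
  exact ((hg.differentiable one_ne_zero _).hasFDerivAt.comp x hpair).fderiv

lemma contDiff_pair_right (hg : ContDiff ℝ 1 g) (t : ℝ) :
    ContDiff ℝ 1 fun x : V => g (pair t x) := by
  simp_rw [pair_eq_inl_add_inr]
  exact hg.comp (contDiff_const.add (inr V).contDiff)

end LineProd

namespace LineProd

variable {V : Type*} [NormedAddCommGroup V] [InnerProductSpace ℝ V] [CompleteSpace V]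

lemma norm_sq_dual (φ : LineProd V →L[ℝ] ℝ) :
    ‖φ‖ ^ 2 = φ (inl V 1) ^ 2 + ‖φ.comp (inr V)‖ ^ 2 := by
  obtain ⟨w, rfl⟩ := (InnerProductSpace.toDual ℝ (LineProd V)).surjective φ
  have hinr : (InnerProductSpace.toDual ℝ (LineProd V) w).comp (inr V) =
      InnerProductSpace.toDual ℝ V w.snd := by
    ext x; simp
  rw [hinr, LinearIsometryEquiv.norm_map, LinearIsometryEquiv.norm_map, norm_sq_eq]
  simp

lemma mul_add_mul_le_norm_dual (φ : LineProd V →L[ℝ] ℝ) {α σ : ℝ}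
    (h : α ^ 2 + σ ^ 2 ≤ 1) : α * ‖φ (inl V 1)‖ + σ * ‖φ.comp (inr V)‖ ≤ ‖φ‖ := by
  refine abs_le_of_sq_le_sq' ?_ (norm_nonneg φ) |>.2
  set a := ‖φ (inl V 1)‖ with ha
  set b := ‖φ.comp (inr V)‖
  have hφ : ‖φ‖ ^ 2 = a ^ 2 + b ^ 2 := by rw [norm_sq_dual, ha, Real.norm_eq_abs, sq_abs]
  calc (α * a + σ * b) ^ 2 = (α ^ 2 + σ ^ 2) * (a ^ 2 + b ^ 2) - (α * b - σ * a) ^ 2 := by ring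
    _ ≤ 1 * (a ^ 2 + b ^ 2) - 0 := by gcongr; positivity
    _ = ‖φ‖ ^ 2 := by rw [hφ, one_mul, sub_zero]

end LineProd

open LineProd

/-- The product of `I ⊆ ℝ` and `D ⊆ V`, as a subset of `ℝ × V`. -/
def prodDom {V : Type*} (I : Set ℝ) (D : Set V) : Set (LineProd V) := {p | p.fst ∈ I ∧ p.snd ∈ D}

/-- The periods of a product: those of either factor. -/
def prodPeriods {V : Type*} [Zero V] (Λt : Set ℝ) (Λ : Set V) : Set (LineProd V) :=
  {p | (p.fst ∈ Λt ∧ p.snd = 0) ∨ (p.fst = 0 ∧ p.snd ∈ Λ)}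

/-- The functions approximating a set upstairs: `C¹`, with periods in `Λ`, and compactly supported
modulo `Λ`. A quotient of `V` is represented by a fundamental domain `D` and its set `Λ` of periods;
as `D` need not be open, the support condition also concerns points near `D`. -/
structure IsAdmissible {V : Type*} [NormedAddCommGroup V] [NormedSpace ℝ V]
    (D Λ : Set V) (g : V → ℝ) : Prop where
  contDiff : ContDiff ℝ 1 g
  periodic : ∀ l ∈ Λ, ∀ x, g (x + l) = g x
  support : ∀ r : ℝ, ∃ R : ℝ, ∀ x ∈ D, ∀ b, ‖b‖ ≤ r → R < ‖x‖ → g (x + b) = 0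

section BoundedSupport

variable {V : Type*} [NormedAddCommGroup V] [ProperSpace V] [MeasurableSpace V] [BorelSpace V]
  {μ : Measure V} [IsFiniteMeasureOnCompacts μ]

lemma integrable_indicator_closedBall (R C : ℝ) :
    Integrable ((Metric.closedBall (0 : V) R).indicator fun _ => C) μ :=
  (integrable_indicator_iff Metric.isClosed_closedBall.measurableSet).2
    (integrableOn_const measure_closedBall_lt_top.ne)

lemma integrableOn_of_bounded_support {D : Set V} (hD : MeasurableSet D) {f : V → ℝ}
    (hf : Continuous f) {R : ℝ} (h : ∀ x ∈ D, R < ‖x‖ → f x = 0) : IntegrableOn f D μ := by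
  obtain ⟨C, hC⟩ := (isCompact_closedBall (0 : V) R).exists_bound_of_continuousOn hf.continuousOn
  refine (integrable_indicator_closedBall R C).integrableOn.mono' hf.aestronglyMeasurable ?_
  refine (ae_restrict_iff' hD).2 (Eventually.of_forall fun x hx => ?_)
  by_cases hxR : x ∈ Metric.closedBall (0 : V) R
  · rw [indicator_of_mem hxR]
    exact hC x hxR
  · rw [indicator_of_notMem hxR, h x hx (by simpa using hxR), norm_zero]

end BoundedSupport

namespace IsAdmissible

section Slice

variable {V : Type*} [NormedAddCommGroup V] [NormedSpace ℝ V]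
  {I Λt : Set ℝ} {D Λ : Set V} {g : LineProd V → ℝ}

lemma slice (hg : IsAdmissible (prodDom I D) (prodPeriods Λt Λ) g) (h0 : (0 : ℝ) ∈ I) (t : ℝ) :
    IsAdmissible D Λ fun x => g (pair t x) where
  contDiff := contDiff_pair_right hg.contDiff t
  periodic l hl x := by
    simpa [pair_add_pair] using hg.periodic (pair 0 l) (Or.inr ⟨rfl, hl⟩) (pair t x)
  support r := by
    obtain ⟨R, hR⟩ := hg.support (|t| + r)
    refine ⟨R, fun x hx b hb hxR => ?_⟩
    simpa [pair_add_pair] using hR (pair 0 x) ⟨h0, hx⟩ (pair t b)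
      ((norm_pair_le t b).trans (by gcongr)) (hxR.trans_le (norm_le_norm_pair _ _))

lemma exists_slice_eq_zero (hg : IsAdmissible (prodDom I D) (prodPeriods Λt Λ) g)
    (h0 : (0 : ℝ) ∈ I) (T : ℝ) : ∃ R, ∀ t, |t| ≤ T → ∀ x ∈ D, R < ‖x‖ → g (pair t x) = 0 := by
  obtain ⟨R, hR⟩ := hg.support T
  refine ⟨R, fun t ht x hx hxR => ?_⟩
  simpa [pair_add_pair] using hR (pair 0 x) ⟨h0, hx⟩ (pair t 0)
    ((norm_pair_le t 0).trans (by simpa)) (hxR.trans_le (norm_le_norm_pair _ _))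

lemma exists_norm_fstDeriv_le [ProperSpace V]
    (hg : IsAdmissible (prodDom I D) (prodPeriods Λt Λ) g) (h0 : (0 : ℝ) ∈ I) (T : ℝ) :
    ∃ R C, ∀ t, |t| < T → ∀ x ∈ D, ‖fstDeriv g (pair t x)‖ ≤
      (Metric.closedBall (0 : V) R).indicator (fun _ => C) x := by
  obtain ⟨R, hR⟩ := hg.exists_slice_eq_zero h0 T
  have hc : Continuous fun p : ℝ × V => fstDeriv g (pair p.1 p.2) :=
    (continuous_fstDeriv hg.contDiff).comp continuous_pair
  obtain ⟨C, hC⟩ := ((isCompact_Icc (a := -T) (b := T)).prod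
    (isCompact_closedBall (0 : V) R)).exists_bound_of_continuousOn hc.continuousOn
  refine ⟨R, C, fun t ht x hx => ?_⟩
  by_cases hxR : x ∈ Metric.closedBall (0 : V) R
  · rw [indicator_of_mem hxR]
    exact hC (t, x) ⟨abs_le.1 ht.le, hxR⟩
  · have hzero : (fun t => g (pair t x)) =ᶠ[𝓝 t] fun _ => 0 := by
      filter_upwards [(isOpen_lt continuous_abs continuous_const).mem_nhds ht] with s hs
      exact hR s hs.le x hx (by simpa using hxR)
    rw [indicator_of_notMem hxR, ((hasDerivAt_pair_left hg.contDiff t x).congr_of_eventuallyEq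
      hzero.symm).unique (hasDerivAt_const t (0 : ℝ)), norm_zero]

end Slice

section SliceIntegral

variable {V : Type*} [NormedAddCommGroup V] [InnerProductSpace ℝ V] [FiniteDimensional ℝ V]
  [MeasurableSpace V] [BorelSpace V] {D Λ : Set V}

lemma integrableOn (hD : MeasurableSet D) {g : V → ℝ} (hg : IsAdmissible D Λ g) :
    IntegrableOn g D := by
  obtain ⟨R, hR⟩ := hg.support 0
  exact integrableOn_of_bounded_support hD hg.contDiff.continuous
    fun x hx h => by simpa using hR x hx 0 (by simp) h

variable {I Λt : Set ℝ} {g : LineProd V → ℝ}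

lemma hasDerivAt_integral (hg : IsAdmissible (prodDom I D) (prodPeriods Λt Λ) g)
    (hD : MeasurableSet D) (h0 : (0 : ℝ) ∈ I) (t : ℝ) :
    HasDerivAt (fun t => ∫ x in D, g (pair t x)) (∫ x in D, fstDeriv g (pair t x)) t := by
  obtain ⟨R, C, hRC⟩ := hg.exists_norm_fstDeriv_le h0 (|t| + 1)
  have hc : Continuous fun x : V => fstDeriv g (pair t x) :=
    (continuous_fstDeriv hg.contDiff).comp (continuous_pair_right t)
  exact (hasDerivAt_integral_of_dominated_loc_of_deriv_le
    (F := fun t x => g (pair t x)) (F' := fun t x => fstDeriv g (pair t x))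
    ((isOpen_lt continuous_abs continuous_const).mem_nhds (lt_add_one |t|))
    (Eventually.of_forall fun s =>
      (contDiff_pair_right hg.contDiff s).continuous.aestronglyMeasurable)
    ((hg.slice h0 t).integrableOn hD) hc.aestronglyMeasurable
    ((ae_restrict_iff' hD).2 (Eventually.of_forall fun x hx s hs => hRC s hs x hx))
    (integrable_indicator_closedBall R C)
    (Eventually.of_forall fun x s _ => hasDerivAt_pair_left hg.contDiff s x)).2

lemma contDiff_integral (hg : IsAdmissible (prodDom I D) (prodPeriods Λt Λ) g)
    (hD : MeasurableSet D) (h0 : (0 : ℝ) ∈ I) : ContDiff ℝ 1 fun t => ∫ x in D, g (pair t x) := by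
  have hderiv : deriv (fun t => ∫ x in D, g (pair t x)) =
      fun t => ∫ x in D, fstDeriv g (pair t x) :=
    funext fun t => (hg.hasDerivAt_integral hD h0 t).deriv
  rw [contDiff_one_iff_deriv, hderiv, continuous_iff_continuousAt]
  refine ⟨fun t => (hg.hasDerivAt_integral hD h0 t).differentiableAt, fun t => ?_⟩
  obtain ⟨R, C, hRC⟩ := hg.exists_norm_fstDeriv_le h0 (|t| + 1)
  have hc := continuous_fstDeriv hg.contDiff
  refine continuousAt_of_dominated
    (Eventually.of_forall fun s => (hc.comp (continuous_pair_right s)).aestronglyMeasurable) ?_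
    (integrable_indicator_closedBall R C)
    (Eventually.of_forall fun x => (hc.comp (continuous_pair_left x)).continuousAt)
  filter_upwards [(isOpen_lt continuous_abs continuous_const).mem_nhds (lt_add_one |t|)] with s hs
  exact (ae_restrict_iff' hD).2 (Eventually.of_forall fun x hx => hRC s hs x hx)

lemma integral_periodic (hg : IsAdmissible (prodDom I D) (prodPeriods Λt Λ) g) {l : ℝ}
    (hl : l ∈ Λt) (t : ℝ) : ∫ x in D, g (pair (t + l) x) = ∫ x in D, g (pair t x) := by
  congr 1
  ext x
  simpa [pair_add_pair] using hg.periodic (pair l 0) (Or.inl ⟨hl, rfl⟩) (pair t x)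

lemma exists_integral_eq_zero (hg : IsAdmissible (prodDom I D) (prodPeriods Λt Λ) g) :
    ∃ R, ∀ t ∈ I, R < |t| → ∫ x in D, g (pair t x) = 0 := by
  obtain ⟨R, hR⟩ := hg.support 0
  refine ⟨R, fun t ht htR => setIntegral_eq_zero_of_forall_eq_zero fun x hx => ?_⟩
  simpa using hR (pair t x) ⟨ht, hx⟩ 0 (by simp) (htR.trans_le (abs_le_norm_pair _ _))

end SliceIntegral

end IsAdmissible

section Fubini

variable {V : Type*} [NormedAddCommGroup V] [InnerProductSpace ℝ V] [FiniteDimensional ℝ V]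
  [MeasurableSpace V] [BorelSpace V] {I : Set ℝ} {D : Set V} {E : Set (LineProd V)}

lemma measurableSet_prodDom (hI : MeasurableSet I) (hD : MeasurableSet D) :
    MeasurableSet (prodDom I D) := by
  have hofLp := WithLp.prod_continuous_ofLp 2 ℝ V
  exact ((continuous_fst.comp hofLp).measurable hI).inter
    ((continuous_snd.comp hofLp).measurable hD)

lemma lintegral_prodDom (hI : MeasurableSet I) (hD : MeasurableSet D)
    {f : LineProd V → ℝ≥0∞} (hf : Measurable f) :
    ∫⁻ p in prodDom I D, f p = ∫⁻ t in I, ∫⁻ x in D, f (pair t x) := by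
  rw [← (WithLp.volume_preserving_toLp (U := ℝ) (V := V)).setLIntegral_comp_preimage
    (measurableSet_prodDom hI hD) hf]
  have hpre : (WithLp.toLp 2 : ℝ × V → LineProd V) ⁻¹' prodDom I D = I ×ˢ D := rfl
  rw [hpre, Measure.volume_eq_prod, ← Measure.prod_restrict, lintegral_prod]
  exact (hf.comp continuous_pair.measurable).aemeasurable

lemma measurable_lintegral_pair {f : LineProd V → ℝ≥0∞} (hf : Measurable f) :
    Measurable fun t => ∫⁻ x in D, f (pair t x) :=
  (hf.comp continuous_pair.measurable).lintegral_prod_right'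

lemma measurableSet_slice (hE : MeasurableSet E) (t : ℝ) : MeasurableSet (pair t ⁻¹' E) :=
  (continuous_pair_right t).measurable hE

lemma volume_slice (hE : MeasurableSet E) (t : ℝ) :
    volume (pair t ⁻¹' E ∩ D) = ∫⁻ x in D, E.indicator 1 (pair t x) := by
  rw [← Measure.restrict_apply (measurableSet_slice hE t),
    ← lintegral_indicator_one (measurableSet_slice hE t)]
  rfl

lemma measurable_volume_slice (hE : MeasurableSet E) :
    Measurable fun t => volume (pair t ⁻¹' E ∩ D) := by
  simp_rw [volume_slice hE]
  exact measurable_lintegral_pair (measurable_one.indicator hE)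

lemma lintegral_volume_slice (hI : MeasurableSet I) (hD : MeasurableSet D)
    (hE : MeasurableSet E) :
    ∫⁻ t in I, volume (pair t ⁻¹' E ∩ D) = volume (E ∩ prodDom I D) := by
  simp_rw [volume_slice hE]
  rw [← lintegral_prodDom hI hD (measurable_one.indicator hE), lintegral_indicator_one hE,
    Measure.restrict_apply hE]

lemma ae_volume_slice_lt_top (hI : MeasurableSet I) (hD : MeasurableSet D) (hE : MeasurableSet E)
    (hfin : volume (E ∩ prodDom I D) ≠ ∞) :
    ∀ᵐ t ∂volume.restrict I, volume (pair t ⁻¹' E ∩ D) < ∞ :=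
  ae_lt_top (measurable_volume_slice hE) (by rwa [lintegral_volume_slice hI hD hE])

/-- The volume in `D` of the slice of `E` over a point of the line. -/
def sliceVol (D : Set V) (E : Set (LineProd V)) (t : ℝ) : ℝ := volume.real (pair t ⁻¹' E ∩ D)

lemma sliceVol_nonneg (t : ℝ) : 0 ≤ sliceVol D E t := measureReal_nonneg

lemma measurable_sliceVol (hE : MeasurableSet E) : Measurable (sliceVol D E) :=
  (measurable_volume_slice hE).ennreal_toReal

lemma lintegral_sliceVol (hI : MeasurableSet I) (hD : MeasurableSet D) (hE : MeasurableSet E)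
    (hfin : volume (E ∩ prodDom I D) ≠ ∞) :
    ∫⁻ t in I, ENNReal.ofReal (sliceVol D E t) = volume (E ∩ prodDom I D) := by
  rw [← lintegral_volume_slice hI hD hE]
  refine lintegral_congr_ae ?_
  filter_upwards [ae_volume_slice_lt_top hI hD hE hfin] with t ht
  exact ENNReal.ofReal_toReal ht.ne

lemma integrableOn_sliceVol (hI : MeasurableSet I) (hD : MeasurableSet D) (hE : MeasurableSet E)
    (hfin : volume (E ∩ prodDom I D) ≠ ∞) : IntegrableOn (sliceVol D E) I := by
  rw [IntegrableOn, ← lintegral_ofReal_ne_top_iff_integrable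
    (measurable_sliceVol hE).aestronglyMeasurable (Eventually.of_forall sliceVol_nonneg),
    lintegral_sliceVol hI hD hE hfin]
  exact hfin

lemma integral_sliceVol (hI : MeasurableSet I) (hD : MeasurableSet D) (hE : MeasurableSet E)
    (hfin : volume (E ∩ prodDom I D) ≠ ∞) :
    ∫ t in I, sliceVol D E t = volume.real (E ∩ prodDom I D) := by
  rw [integral_eq_lintegral_of_nonneg_ae (Eventually.of_forall sliceVol_nonneg)
    (measurable_sliceVol hE).aestronglyMeasurable, lintegral_sliceVol hI hD hE hfin]
  rfl

end Fubini

/-- A field of length at most one on `ℝ × V`, with components `α` along the line and `σ` along `V`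
that depend only on the volume of the slice. Testing the gradient against it bounds the perimeter
from below. -/
structure IsCalibration (α σ : ℝ → ℝ) : Prop where
  continuous_left : Continuous α
  continuous_right : Continuous σ
  nonneg_right : ∀ a, 0 ≤ σ a
  sq_add_sq_le_one : ∀ a, α a ^ 2 + σ a ^ 2 ≤ 1

section SliceInequality

lemma OscillationBound.enorm_integral_le {I Λt : Set ℝ} (hosc : OscillationBound I Λt)
    {α A : ℝ → ℝ} (hα : Continuous α) (hA : ContDiff ℝ 1 A) (hper : ∀ l ∈ Λt, ∀ t, A (t + l) = A t)
    (hsupp : ∃ R, ∀ t ∈ I, R < |t| → A t = 0) {t₁ t₂ : ℝ} (ht₁ : t₁ ∈ I) (ht₂ : t₂ ∈ I) :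
    2 * ‖∫ a in A t₁..A t₂, α a‖ₑ ≤ ∫⁻ t in I, ‖α (A t) * deriv A t‖ₑ := by
  set F : ℝ → ℝ := fun y => ∫ a in (0 : ℝ)..y, α a
  have hF : ∀ y, HasDerivAt F (α y) y := fun y =>
    intervalIntegral.integral_hasDerivAt_right (hα.intervalIntegrable _ _)
      (hα.stronglyMeasurableAtFilter _ _) hα.continuousAt
  have hFc : ContDiff ℝ 1 F :=
    contDiff_one_iff_deriv.2 ⟨fun y => (hF y).differentiableAt, by
      rwa [funext fun y => (hF y).deriv]⟩
  obtain ⟨R, hR⟩ := hsupp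
  have hderiv : deriv (F ∘ A) = fun t => α (A t) * deriv A t := funext fun t =>
    ((hF (A t)).comp t (hA.differentiable one_ne_zero t).hasDerivAt).deriv
  have hFA := hosc (F ∘ A) (hFc.comp hA) (fun l hl t => by simp only [Function.comp, hper l hl t])
    ⟨R, F 0, fun t ht htR => by simp only [Function.comp, hR t ht htR]⟩ t₂ ht₂ t₁ ht₁
  rw [hderiv] at hFA
  rwa [← intervalIntegral.integral_interval_sub_left (hα.intervalIntegrable 0 _)
    (hα.intervalIntegrable 0 _)]

variable {V : Type*} [NormedAddCommGroup V] [InnerProductSpace ℝ V] [FiniteDimensional ℝ V]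
  [MeasurableSpace V] [BorelSpace V] {I Λt : Set ℝ} {D Λ : Set V} {g : LineProd V → ℝ}

lemma measurable_lintegral_fderiv_pair (hg : ContDiff ℝ 1 g) :
    Measurable fun t => ∫⁻ x in D, ‖fderiv ℝ (fun x => g (pair t x)) x‖ₑ := by
  simp_rw [fderiv_pair_right hg]
  exact measurable_lintegral_pair (f := fun p => ‖(fderiv ℝ g p).comp (inr V)‖ₑ)
    ((hg.continuous_fderiv one_ne_zero).clm_comp continuous_const).enorm.measurable

lemma enorm_integral_add_lintegral_le_lintegral_fderiv (hg : ContDiff ℝ 1 g) {a s : ℝ}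
    (hs : 0 ≤ s) (has : a ^ 2 + s ^ 2 ≤ 1) (t : ℝ) :
    ‖a * ∫ x in D, fstDeriv g (pair t x)‖ₑ +
        ENNReal.ofReal s * ∫⁻ x in D, ‖fderiv ℝ (fun x => g (pair t x)) x‖ₑ ≤
      ∫⁻ x in D, ‖fderiv ℝ g (pair t x)‖ₑ := by
  have hmeas : Measurable fun x : V => ‖fstDeriv g (pair t x)‖ₑ :=
    ((continuous_fstDeriv hg).comp (continuous_pair_right t)).enorm.measurable
  have hpoint (x : V) : ‖a‖ₑ * ‖fstDeriv g (pair t x)‖ₑ +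
      ENNReal.ofReal s * ‖fderiv ℝ (fun x => g (pair t x)) x‖ₑ ≤ ‖fderiv ℝ g (pair t x)‖ₑ := by
    rw [fderiv_pair_right hg, ← ofReal_norm a, ← ofReal_norm (fstDeriv _ _), ← ofReal_norm,
      ← ofReal_norm, ← ENNReal.ofReal_mul (norm_nonneg _), ← ENNReal.ofReal_mul hs,
      ← ENNReal.ofReal_add (by positivity) (by positivity)]
    exact ENNReal.ofReal_le_ofReal
      (mul_add_mul_le_norm_dual _ (by rwa [Real.norm_eq_abs, sq_abs]))
  calc _ ≤ ‖a‖ₑ * (∫⁻ x in D, ‖fstDeriv g (pair t x)‖ₑ) +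
        ENNReal.ofReal s * ∫⁻ x in D, ‖fderiv ℝ (fun x => g (pair t x)) x‖ₑ := by
        rw [enorm_mul]
        gcongr
        exact enorm_integral_le_lintegral_enorm _
    _ = ∫⁻ x in D, (‖a‖ₑ * ‖fstDeriv g (pair t x)‖ₑ +
          ENNReal.ofReal s * ‖fderiv ℝ (fun x => g (pair t x)) x‖ₑ) := by
        rw [lintegral_add_left (hmeas.const_mul _), lintegral_const_mul _ hmeas,
          lintegral_const_mul' _ _ ofReal_ne_top]
    _ ≤ _ := lintegral_mono hpoint

lemma IsAdmissible.slice_inequality (hI : MeasurableSet I) (hD : MeasurableSet D)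
    (h0 : (0 : ℝ) ∈ I) (hosc : OscillationBound I Λt)
    (hg : IsAdmissible (prodDom I D) (prodPeriods Λt Λ) g) {α σ : ℝ → ℝ} (hασ : IsCalibration α σ)
    {t₁ t₂ : ℝ} (ht₁ : t₁ ∈ I) (ht₂ : t₂ ∈ I) :
    2 * ‖∫ a in (∫ x in D, g (pair t₁ x))..(∫ x in D, g (pair t₂ x)), α a‖ₑ +
        ∫⁻ t in I, ENNReal.ofReal (σ (∫ x in D, g (pair t x))) *
          ∫⁻ x in D, ‖fderiv ℝ (fun x => g (pair t x)) x‖ₑ ≤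
      ∫⁻ p in prodDom I D, ‖fderiv ℝ g p‖ₑ := by
  set A : ℝ → ℝ := fun t => ∫ x in D, g (pair t x)
  have hA : ContDiff ℝ 1 A := hg.contDiff_integral hD h0
  have hderiv : deriv A = fun t => ∫ x in D, fstDeriv g (pair t x) :=
    funext fun t => (hg.hasDerivAt_integral hD h0 t).deriv
  have hmeas : Measurable fun t => ‖α (A t) * deriv A t‖ₑ :=
    ((hασ.continuous_left.comp hA.continuous).mul (hA.continuous_deriv le_rfl)).enorm.measurable
  rw [lintegral_prodDom hI hD (hg.contDiff.continuous_fderiv one_ne_zero).enorm.measurable]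
  calc _ ≤ (∫⁻ t in I, ‖α (A t) * deriv A t‖ₑ) + ∫⁻ t in I, ENNReal.ofReal (σ (A t)) *
        ∫⁻ x in D, ‖fderiv ℝ (fun x => g (pair t x)) x‖ₑ := by
        gcongr
        exact hosc.enorm_integral_le hασ.continuous_left hA (fun l hl => hg.integral_periodic hl)
          hg.exists_integral_eq_zero ht₁ ht₂
    _ = ∫⁻ t in I, (‖α (A t) * deriv A t‖ₑ + ENNReal.ofReal (σ (A t)) *
        ∫⁻ x in D, ‖fderiv ℝ (fun x => g (pair t x)) x‖ₑ) := (lintegral_add_left hmeas _).symm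
    _ ≤ _ := lintegral_mono fun t => by
        rw [hderiv]
        exact enorm_integral_add_lintegral_le_lintegral_fderiv hg.contDiff (hασ.nonneg_right _)
          (hασ.sq_add_sq_le_one _) t

end SliceInequality

section Relaxed

variable {V : Type*} [NormedAddCommGroup V] [InnerProductSpace ℝ V] [FiniteDimensional ℝ V]
  [MeasurableSpace V] [BorelSpace V]

/-- Admissible functions approximating a measurable set of finite volume in `L¹(D)`. -/
structure IsApproximation (D Λ E : Set V) (g : ℕ → V → ℝ) : Prop where
  measurableSet : MeasurableSet E
  volume_ne_top : volume (E ∩ D) ≠ ∞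
  isAdmissible : ∀ k, IsAdmissible D Λ (g k)
  tendsto : Tendsto (fun k => ∫⁻ x in D, ‖g k x - E.indicator 1 x‖ₑ) atTop (𝓝 0)

/-- The isoperimetric inequality with profile `Ψ` for the relaxed perimeter, the least lower limit
of `∫ ‖∇g‖` along admissible approximations. -/
def RelaxedIsoperimetric (D Λ : Set V) (Ψ : ℝ → ℝ) : Prop :=
  ∀ E g, IsApproximation D Λ E g → ∀ P : ℝ≥0∞, (∀ k, ∫⁻ x in D, ‖fderiv ℝ (g k) x‖ₑ ≤ P) →
    ENNReal.ofReal (Ψ (volume.real (E ∩ D))) ≤ P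

variable {D Λ E : Set V} {g : ℕ → V → ℝ} {Ψ : ℝ → ℝ}

lemma IsApproximation.comp (hg : IsApproximation D Λ E g) {φ : ℕ → ℕ} (hφ : StrictMono φ) :
    IsApproximation D Λ E (g ∘ φ) where
  measurableSet := hg.measurableSet
  volume_ne_top := hg.volume_ne_top
  isAdmissible k := hg.isAdmissible (φ k)
  tendsto := hg.tendsto.comp hφ.tendsto_atTop

lemma RelaxedIsoperimetric.le_liminf (h : RelaxedIsoperimetric D Λ Ψ)
    (hg : IsApproximation D Λ E g) : ENNReal.ofReal (Ψ (volume.real (E ∩ D))) ≤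
      liminf (fun k => ∫⁻ x in D, ‖fderiv ℝ (g k) x‖ₑ) atTop := by
  refine le_of_forall_gt_imp_ge_of_dense fun P hP => ?_
  obtain ⟨φ, hφ, hle⟩ := extraction_of_frequently_atTop
    (frequently_lt_of_liminf_lt (by isBoundedDefault) hP)
  exact h E _ (hg.comp hφ) P fun k => (hle k).le

lemma IsApproximation.tendsto_integral (hg : IsApproximation D Λ E g) (hD : MeasurableSet D) :
    Tendsto (fun k => ∫ x in D, g k x) atTop (𝓝 (volume.real (E ∩ D))) := by
  have hind : ∫ x in D, E.indicator 1 x = volume.real (E ∩ D) := by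
    rw [integral_indicator_one hg.measurableSet, measureReal_restrict_apply hg.measurableSet]
  have hint : IntegrableOn (E.indicator (1 : V → ℝ)) D := by
    refine (integrable_indicator_iff hg.measurableSet).2 (integrableOn_const ?_)
    rw [Measure.restrict_apply hg.measurableSet]
    exact hg.volume_ne_top
  rw [tendsto_iff_edist_tendsto_0]
  refine tendsto_of_tendsto_of_tendsto_of_le_of_le tendsto_const_nhds hg.tendsto
    (fun _ => zero_le) fun k => ?_
  dsimp only
  rw [edist_eq_enorm_sub, ← hind, ← integral_sub ((hg.isAdmissible k).integrableOn hD) hint]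
  exact enorm_integral_le_lintegral_enorm _

end Relaxed

lemma exists_strictMono_tendsto_ae_zero {X : Type*} [MeasurableSpace X] {μ : Measure X}
    {d : ℕ → X → ℝ≥0∞} (hd : ∀ k, AEMeasurable (d k) μ)
    (h : Tendsto (fun k => ∫⁻ x, d k x ∂μ) atTop (𝓝 0)) :
    ∃ φ : ℕ → ℕ, StrictMono φ ∧ ∀ᵐ x ∂μ, Tendsto (fun k => d (φ k) x) atTop (𝓝 0) := by
  obtain ⟨φ, hφ, hle⟩ := extraction_forall_of_eventually
    (P := fun n k => ∫⁻ x, d k x ∂μ < (2⁻¹ : ℝ≥0∞) ^ n) (fun n =>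
      h.eventually_lt_const (ENNReal.pow_pos (by simp) n))
  have hsum : ∫⁻ x, ∑' k, d (φ k) x ∂μ ≠ ∞ := by
    rw [lintegral_tsum fun k => hd _]
    refine ne_top_of_le_ne_top ?_ (ENNReal.tsum_le_tsum fun k => (hle k).le)
    rw [ENNReal.tsum_geometric]
    simp
  refine ⟨φ, hφ, ?_⟩
  filter_upwards [ae_lt_top' (AEMeasurable.tsum fun k => hd _) hsum] with x hx
  exact ENNReal.tendsto_atTop_zero_of_tsum_ne_top hx.ne

lemma continuous_integral_interval {α : ℝ → ℝ} (hα : Continuous α) :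
    Continuous fun p : ℝ × ℝ => ∫ a in p.1..p.2, α a := by
  have hF : Continuous fun y => ∫ a in (0 : ℝ)..y, α a :=
    intervalIntegral.continuous_primitive (fun _ _ => hα.intervalIntegrable _ _) 0
  exact ((hF.comp continuous_snd).sub (hF.comp continuous_fst)).congr fun p =>
    intervalIntegral.integral_interval_sub_left (hα.intervalIntegrable 0 p.2)
      (hα.intervalIntegrable 0 p.1)

lemma integral_sInf_sSup_le {α : ℝ → ℝ} (hα : Continuous α) {S : Set ℝ} (hS : S.Nonempty)
    (hbelow : BddBelow S) (habove : BddAbove S) {c : ℝ}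
    (h : ∀ x ∈ S, ∀ y ∈ S, ∫ a in x..y, α a ≤ c) : ∫ a in (sInf S)..(sSup S), α a ≤ c := by
  have hclosed : IsClosed {p : ℝ × ℝ | ∫ a in p.1..p.2, α a ≤ c} :=
    isClosed_le (continuous_integral_interval hα) continuous_const
  have hsub : S ×ˢ S ⊆ {p : ℝ × ℝ | ∫ a in p.1..p.2, α a ≤ c} := fun p hp => h _ hp.1 _ hp.2
  have hmem : (sInf S, sSup S) ∈ closure (S ×ˢ S) := by
    rw [closure_prod_eq]
    exact ⟨csInf_mem_closure hS hbelow, csSup_mem_closure hS habove⟩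
  exact hclosed.closure_subset_iff.2 hsub hmem

section Slicing

variable {V : Type*} [NormedAddCommGroup V] [InnerProductSpace ℝ V] [FiniteDimensional ℝ V]
  [MeasurableSpace V] [BorelSpace V] {I Λt : Set ℝ} {D Λ : Set V} {Ψ : ℝ → ℝ}
  {E : Set (LineProd V)} {g : ℕ → LineProd V → ℝ}

lemma IsApproximation.exists_ae_slice
    (hg : IsApproximation (prodDom I D) (prodPeriods Λt Λ) E g) (hI : MeasurableSet I)
    (hD : MeasurableSet D) (h0 : (0 : ℝ) ∈ I) :
    ∃ φ : ℕ → ℕ, StrictMono φ ∧ ∀ᵐ t ∂volume.restrict I,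
      IsApproximation D Λ (pair t ⁻¹' E) fun k x => g (φ k) (pair t x) := by
  have hmeas (k : ℕ) : Measurable fun p => ‖g k p - E.indicator 1 p‖ₑ :=
    ((hg.isAdmissible k).contDiff.continuous.measurable.sub
      (measurable_one.indicator hg.measurableSet)).enorm
  obtain ⟨φ, hφ, hconv⟩ := exists_strictMono_tendsto_ae_zero (μ := volume.restrict I)
    (fun k => (measurable_lintegral_pair (D := D) (hmeas k)).aemeasurable)
    (hg.tendsto.congr fun k => lintegral_prodDom hI hD (hmeas k))
  refine ⟨φ, hφ, ?_⟩
  filter_upwards [hconv, ae_volume_slice_lt_top hI hD hg.measurableSet hg.volume_ne_top]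
    with t ht hfin
  exact ⟨measurableSet_slice hg.measurableSet t, hfin.ne,
    fun k => (hg.isAdmissible (φ k)).slice h0 t, ht⟩

lemma lintegral_le_liminf_slice (hΨ : RelaxedIsoperimetric D Λ Ψ) (hD : MeasurableSet D)
    {σ : ℝ → ℝ} (hσ : Continuous σ) (hσ0 : ∀ a, 0 ≤ σ a) (h0 : (0 : ℝ) ∈ I)
    (hg : ∀ k, IsAdmissible (prodDom I D) (prodPeriods Λt Λ) (g k))
    (hslice : ∀ᵐ t ∂volume.restrict I,
      IsApproximation D Λ (pair t ⁻¹' E) fun k x => g k (pair t x)) :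
    ∫⁻ t in I, ENNReal.ofReal (σ (sliceVol D E t) * Ψ (sliceVol D E t)) ≤
      liminf (fun k => ∫⁻ t in I, ENNReal.ofReal (σ (∫ x in D, g k (pair t x))) *
        ∫⁻ x in D, ‖fderiv ℝ (fun x => g k (pair t x)) x‖ₑ) atTop := by
  refine le_trans (lintegral_mono_ae ?_) (lintegral_liminf_le fun k =>
    (hσ.measurable.comp ((hg k).contDiff_integral hD h0).continuous.measurable).ennreal_ofReal.mul
      (measurable_lintegral_fderiv_pair (hg k).contDiff))
  filter_upwards [hslice] with t ht
  have hσlim : liminf (fun k => ENNReal.ofReal (σ (∫ x in D, g k (pair t x)))) atTop =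
      ENNReal.ofReal (σ (sliceVol D E t)) :=
    (ENNReal.tendsto_ofReal ((hσ.tendsto _).comp (ht.tendsto_integral hD))).liminf_eq
  calc ENNReal.ofReal (σ (sliceVol D E t) * Ψ (sliceVol D E t))
      = ENNReal.ofReal (σ (sliceVol D E t)) * ENNReal.ofReal (Ψ (sliceVol D E t)) :=
        ENNReal.ofReal_mul (hσ0 _)
    _ ≤ liminf (fun k => ENNReal.ofReal (σ (∫ x in D, g k (pair t x)))) atTop *
        liminf (fun k => ∫⁻ x in D, ‖fderiv ℝ (fun x => g k (pair t x)) x‖ₑ) atTop := by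
        rw [hσlim]
        gcongr
        exact hΨ.le_liminf ht
    _ ≤ _ := ENNReal.le_liminf_mul

lemma add_le_of_tendsto_of_le_liminf {u v : ℕ → ℝ≥0∞} {a b P : ℝ≥0∞}
    (hu : Tendsto u atTop (𝓝 a)) (hv : b ≤ liminf v atTop) (h : ∀ k, u k + v k ≤ P) :
    a + b ≤ P := by
  refine (add_le_add_right hv a).trans ?_
  rw [liminf_eq_iSup_iInf_of_nat, ENNReal.add_iSup]
  refine iSup_le fun n => le_of_tendsto (hu.add_const _) ?_
  filter_upwards [eventually_ge_atTop n] with k hk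
  exact (add_le_add_right (iInf₂_le k hk) _).trans (h k)

theorem RelaxedIsoperimetric.slicing (hΨ : RelaxedIsoperimetric D Λ Ψ) (hI : MeasurableSet I)
    (hD : MeasurableSet D) (h0 : (0 : ℝ) ∈ I) (hosc : OscillationBound I Λt)
    (hg : IsApproximation (prodDom I D) (prodPeriods Λt Λ) E g)
    {P : ℝ≥0∞} (hP : ∀ k, ∫⁻ x in prodDom I D, ‖fderiv ℝ (g k) x‖ₑ ≤ P) :
    ∃ T ⊆ I, (∀ᵐ t ∂volume.restrict I, t ∈ T) ∧ ∀ α σ : ℝ → ℝ, IsCalibration α σ →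
      ∀ t₁ ∈ T, ∀ t₂ ∈ T, 2 * ‖∫ a in (sliceVol D E t₁)..(sliceVol D E t₂), α a‖ₑ +
        ∫⁻ t in I, ENNReal.ofReal (σ (sliceVol D E t) * Ψ (sliceVol D E t)) ≤ P := by
  obtain ⟨φ, -, hslice⟩ := hg.exists_ae_slice hI hD h0
  refine ⟨{t | t ∈ I ∧ IsApproximation D Λ (pair t ⁻¹' E) fun k x => g (φ k) (pair t x)},
    fun t ht => ht.1, (ae_restrict_mem hI).and hslice, ?_⟩
  intro α σ hασ t₁ ht₁ t₂ ht₂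
  have hα : Tendsto (fun k => 2 * ‖∫ a in (∫ x in D, g (φ k) (pair t₁ x))..(∫ x in D,
      g (φ k) (pair t₂ x)), α a‖ₑ) atTop
      (𝓝 (2 * ‖∫ a in (sliceVol D E t₁)..(sliceVol D E t₂), α a‖ₑ)) := by
    refine ENNReal.Tendsto.const_mul ?_ (Or.inr (by simp))
    exact (((continuous_integral_interval hασ.continuous_left).tendsto _).comp
      ((ht₁.2.tendsto_integral hD).prodMk_nhds (ht₂.2.tendsto_integral hD))).enorm
  exact add_le_of_tendsto_of_le_liminf hα
    (lintegral_le_liminf_slice hΨ hD hασ.continuous_right hασ.nonneg_right h0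
      (fun k => hg.isAdmissible (φ k)) hslice)
    fun k => ((hg.isAdmissible (φ k)).slice_inequality hI hD h0 hosc hασ ht₁.1 ht₂.1).trans
      (hP (φ k))

/-- What slicing a set of volume `v` and perimeter at most `P` leaves in dimension one: the volume
`A` of the slices, its essential range `[m₀, M]`, and the perimeter tested against calibrations. -/
structure SliceData (I : Set ℝ) (Ψ : ℝ → ℝ) (A : ℝ → ℝ) (v P m₀ M : ℝ) : Prop where
  nonneg : 0 ≤ m₀
  le : m₀ ≤ M
  mem : ∀ᵐ t ∂volume.restrict I, A t ∈ Icc m₀ M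
  integrable : IntegrableOn A I
  integral_eq : ∫ t in I, A t = v
  measurable : Measurable A
  integrable_mul : ∀ α σ : ℝ → ℝ, IsCalibration α σ → IntegrableOn (fun t => σ (A t) * Ψ (A t)) I
  integral_add_integral_le : ∀ α σ : ℝ → ℝ, IsCalibration α σ →
    2 * (∫ a in m₀..M, α a) + ∫ t in I, σ (A t) * Ψ (A t) ≤ P

lemma integrableOn_and_le_toReal {f : ℝ → ℝ} (hf : Measurable f) (hf0 : ∀ t, 0 ≤ f t) {c : ℝ}
    {P : ℝ≥0∞} (hP : P ≠ ∞) (h : 2 * ‖c‖ₑ + ∫⁻ t in I, ENNReal.ofReal (f t) ≤ P) :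
    IntegrableOn f I ∧ 2 * |c| + ∫ t in I, f t ≤ P.toReal := by
  have hfin : ∫⁻ t in I, ENNReal.ofReal (f t) ≠ ∞ := ne_top_of_le_ne_top hP (le_add_self.trans h)
  refine ⟨(lintegral_ofReal_ne_top_iff_integrable hf.aestronglyMeasurable
    (Eventually.of_forall hf0)).1 hfin, ?_⟩
  have hreal := ENNReal.toReal_mono hP h
  rwa [ENNReal.toReal_add (ENNReal.mul_ne_top (by simp) enorm_ne_top) hfin, ENNReal.toReal_mul,
    toReal_enorm, Real.norm_eq_abs, ENNReal.toReal_ofNat, ← integral_eq_lintegral_of_nonneg_ae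
      (Eventually.of_forall hf0) hf.aestronglyMeasurable] at hreal

theorem RelaxedIsoperimetric.exists_sliceData (hΨ : RelaxedIsoperimetric D Λ Ψ)
    (hΨ0 : ∀ a, 0 ≤ Ψ a) (hΨm : Measurable Ψ) (hI : MeasurableSet I) (hI0 : volume I ≠ 0)
    (hD : MeasurableSet D) (h0 : (0 : ℝ) ∈ I) (hosc : OscillationBound I Λt)
    (hg : IsApproximation (prodDom I D) (prodPeriods Λt Λ) E g) {P : ℝ≥0∞} (hPtop : P ≠ ∞)
    (hP : ∀ k, ∫⁻ x in prodDom I D, ‖fderiv ℝ (g k) x‖ₑ ≤ P) :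
    ∃ m₀ M, SliceData I Ψ (sliceVol D E) (volume.real (E ∩ prodDom I D)) P.toReal m₀ M := by
  obtain ⟨T, -, hTae, hT⟩ := hΨ.slicing hI hD h0 hosc hg hP
  set A := sliceVol D E
  have hA : Measurable A := measurable_sliceVol hg.measurableSet
  have htest (α σ : ℝ → ℝ) (hασ : IsCalibration α σ) {t₁ t₂ : ℝ} (ht₁ : t₁ ∈ T) (ht₂ : t₂ ∈ T) :
      IntegrableOn (fun t => σ (A t) * Ψ (A t)) I ∧
        2 * |∫ a in A t₁..A t₂, α a| + ∫ t in I, σ (A t) * Ψ (A t) ≤ P.toReal :=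
    integrableOn_and_le_toReal ((hασ.continuous_right.measurable.comp hA).mul (hΨm.comp hA))
      (fun t => mul_nonneg (hασ.nonneg_right _) (hΨ0 _)) hPtop (hT α σ hασ t₁ ht₁ t₂ ht₂)
  obtain ⟨τ, hτ⟩ : T.Nonempty := by
    have : NeBot (ae (volume.restrict I)) := ae_restrict_neBot.2 hI0
    exact hTae.exists
  have hbelow : BddBelow (A '' T) := ⟨0, forall_mem_image.2 fun t _ => sliceVol_nonneg t⟩
  have habove : BddAbove (A '' T) := by
    refine ⟨A τ + P.toReal, forall_mem_image.2 fun t ht => ?_⟩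
    have hosc := (htest (fun _ => 1) (fun _ => 0)
      ⟨continuous_const, continuous_const, by simp, by simp⟩ hτ ht).2
    simp only [intervalIntegral.integral_const, smul_eq_mul, mul_one, zero_mul,
      integral_zero, add_zero] at hosc
    linarith [le_abs_self (A t - A τ), abs_nonneg (A t - A τ)]
  have hne : (A '' T).Nonempty := ⟨_, mem_image_of_mem A hτ⟩
  have hmem (t : ℝ) (ht : t ∈ T) : A t ∈ Icc (sInf (A '' T)) (sSup (A '' T)) :=
    ⟨csInf_le hbelow (mem_image_of_mem A ht), le_csSup habove (mem_image_of_mem A ht)⟩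
  refine ⟨sInf (A '' T), sSup (A '' T), {
    nonneg := le_csInf hne (forall_mem_image.2 fun t _ => sliceVol_nonneg t)
    le := (hmem τ hτ).1.trans (hmem τ hτ).2
    mem := hTae.mono hmem
    integrable := integrableOn_sliceVol hI hD hg.measurableSet hg.volume_ne_top
    integral_eq := integral_sliceVol hI hD hg.measurableSet hg.volume_ne_top
    measurable := hA
    integrable_mul := fun α σ hασ => (htest α σ hασ hτ hτ).1
    integral_add_integral_le := fun α σ hασ => ?_ }⟩
  have hsup : ∫ a in (sInf (A '' T))..(sSup (A '' T)), α a ≤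
      (P.toReal - ∫ t in I, σ (A t) * Ψ (A t)) / 2 := by
    refine integral_sInf_sSup_le hασ.continuous_left hne hbelow habove ?_
    refine forall_mem_image.2 fun t₁ ht₁ => forall_mem_image.2 fun t₂ ht₂ => ?_
    linarith [(htest α σ hασ ht₁ ht₂).2, le_abs_self (∫ a in A t₁..A t₂, α a)]
  linarith

end Slicing

section EuclideanProfile

/-- The volume of the unit ball of dimension `N`. -/
def unitBallVolume (N : ℕ) : ℝ := √π ^ N / Real.Gamma (N / 2 + 1)

lemma unitBallVolume_pos (N : ℕ) : 0 < unitBallVolume N :=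
  div_pos (pow_pos (Real.sqrt_pos.2 Real.pi_pos) _) (Real.Gamma_pos_of_pos (by positivity))

lemma volume_real_ball_one (E : Type*) [NormedAddCommGroup E] [InnerProductSpace ℝ E]
    [FiniteDimensional ℝ E] [MeasurableSpace E] [BorelSpace E] [Nontrivial E] :
    volume.real (Metric.ball (0 : E) 1) = unitBallVolume (Module.finrank ℝ E) := by
  rw [Measure.real, InnerProductSpace.volume_ball]
  simp only [ENNReal.ofReal_one, one_pow, one_mul]
  exact ENNReal.toReal_ofReal (unitBallVolume_pos _).le

lemma unitBallVolume_one : unitBallVolume 1 = 2 := by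
  have hΓ : Real.Gamma ((1 : ℕ) / 2 + 1) = √π / 2 := by
    rw [Real.Gamma_add_one (by norm_num), Nat.cast_one, Real.Gamma_one_half_eq]
    ring
  rw [unitBallVolume, hΓ, pow_one, div_div_cancel₀ (Real.sqrt_pos.2 Real.pi_pos).ne']

/-- The radius of the `m`-ball of volume `a`, extended by `0` to negative volumes. -/
def ballRadius (m : ℕ) (a : ℝ) : ℝ := (max a 0 / unitBallVolume m) ^ (1 / (m : ℝ))

lemma continuous_ballRadius (m : ℕ) : Continuous (ballRadius m) :=
  Continuous.rpow_const (by fun_prop) fun _ => Or.inr (by positivity)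

lemma ballRadius_nonneg (m : ℕ) (a : ℝ) : 0 ≤ ballRadius m a :=
  rpow_nonneg (div_nonneg (le_max_right _ _) (unitBallVolume_pos m).le) _

lemma ballRadius_pos (m : ℕ) {a : ℝ} (h : 0 < a) : 0 < ballRadius m a :=
  rpow_pos_of_pos (div_pos (lt_max_of_lt_left h) (unitBallVolume_pos m)) _

lemma ballRadius_mono (m : ℕ) : Monotone (ballRadius m) := fun a b h => by
  have hω := unitBallVolume_pos m
  unfold ballRadius
  gcongr

lemma unitBallVolume_mul_ballRadius_pow {m : ℕ} (hm : 1 ≤ m) {a : ℝ} (ha : 0 ≤ a) :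
    unitBallVolume m * ballRadius m a ^ m = a := by
  have hω := unitBallVolume_pos m
  rw [ballRadius, max_eq_left ha, ← Real.rpow_natCast, ← rpow_mul (by positivity), one_div,
    inv_mul_cancel₀ (by positivity), Real.rpow_one, mul_div_cancel₀ _ hω.ne']

/-- The isoperimetric profile of `ℝ^N`. The exponent `0` for `N = 1` makes it necessary to treat
`v ≤ 0` apart. -/
def eucIso (N : ℕ) (v : ℝ) : ℝ :=
  if 0 < v then N * unitBallVolume N ^ (1 / (N : ℝ)) * v ^ (((N : ℝ) - 1) / N) else 0

lemma eucIso_of_pos {N : ℕ} {v : ℝ} (h : 0 < v) :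
    eucIso N v = N * unitBallVolume N ^ (1 / (N : ℝ)) * v ^ (((N : ℝ) - 1) / N) := if_pos h

lemma eucIso_of_nonpos {N : ℕ} {v : ℝ} (h : v ≤ 0) : eucIso N v = 0 := if_neg h.not_gt

lemma eucIso_nonneg (N : ℕ) (v : ℝ) : 0 ≤ eucIso N v := by
  have hω := unitBallVolume_pos N
  unfold eucIso
  split_ifs <;> positivity

lemma measurable_eucIso (N : ℕ) : Measurable (eucIso N) :=
  Measurable.ite measurableSet_Ioi (by fun_prop) measurable_const

lemma eucIso_eq_ballRadius_pow {m : ℕ} (hm : 1 ≤ m) {a : ℝ} (ha : 0 < a) :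
    eucIso m a = m * unitBallVolume m * ballRadius m a ^ (m - 1) := by
  have hω := unitBallVolume_pos m
  have hm0 : (m : ℝ) ≠ 0 := by positivity
  have hexp : 1 / (m : ℝ) * ((m - 1 : ℕ) : ℝ) = ((m : ℝ) - 1) / m := by
    rw [Nat.cast_sub hm, Nat.cast_one]
    ring
  have hsplit : unitBallVolume m ^ (1 / (m : ℝ)) * unitBallVolume m ^ (((m : ℝ) - 1) / m) =
      unitBallVolume m := by
    rw [← rpow_add hω, ← add_div, add_sub_cancel, div_self hm0, Real.rpow_one]
  have hne : unitBallVolume m ^ (((m : ℝ) - 1) / m) ≠ 0 := (rpow_pos_of_pos hω _).ne'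
  rw [eucIso_of_pos ha, ballRadius, max_eq_left ha.le, ← Real.rpow_natCast,
    ← rpow_mul (by positivity), hexp, div_rpow ha.le hω.le, mul_div_assoc', eq_div_iff hne]
  linear_combination (m : ℝ) * a ^ (((m : ℝ) - 1) / m) * hsplit

lemma eucIso_mul_ballRadius {m : ℕ} (hm : 1 ≤ m) {a : ℝ} (ha : 0 ≤ a) :
    eucIso m a * ballRadius m a = m * a := by
  rcases ha.eq_or_lt with rfl | ha'
  · rw [eucIso_of_nonpos le_rfl, zero_mul, mul_zero]
  · rw [eucIso_eq_ballRadius_pow hm ha', mul_assoc, ← pow_succ, Nat.sub_add_cancel hm, mul_assoc,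
      unitBallVolume_mul_ballRadius_pow hm ha]

lemma eucIso_mono {m : ℕ} (hm : 1 ≤ m) : Monotone (eucIso m) := fun a b hab => by
  have hω := unitBallVolume_pos m
  have hexp : 0 ≤ ((m : ℝ) - 1) / m := div_nonneg (by simpa using hm) (by positivity)
  rcases le_or_gt a 0 with ha | ha
  · rw [eucIso_of_nonpos ha]
    exact eucIso_nonneg m b
  · rw [eucIso_of_pos ha, eucIso_of_pos (ha.trans_le hab)]
    gcongr

lemma ballRadius_unitBallVolume_mul_pow {m : ℕ} (hm : 1 ≤ m) {r : ℝ} (hr : 0 ≤ r) :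
    ballRadius m (unitBallVolume m * r ^ m) = r := by
  have hω := unitBallVolume_pos m
  rw [ballRadius, max_eq_left (by positivity), mul_div_cancel_left₀ _ hω.ne', one_div,
    Real.pow_rpow_inv_natCast hr (by omega)]

lemma eucIso_pos {m : ℕ} (hm : 1 ≤ m) {a : ℝ} (ha : 0 < a) : 0 < eucIso m a := by
  have hω := unitBallVolume_pos m
  rw [eucIso_of_pos ha]
  positivity

lemma hasDerivAt_ballRadius {m : ℕ} (hm : 1 ≤ m) {a : ℝ} (ha : 0 < a) :
    HasDerivAt (ballRadius m) (eucIso m a)⁻¹ a := by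
  have hω := unitBallVolume_pos m
  have hm0 : (m : ℝ) ≠ 0 := by positivity
  have hderiv := ((hasDerivAt_id a).div_const (unitBallVolume m)).rpow_const (p := 1 / (m : ℝ))
    (Or.inl (by simpa using ⟨ha.ne', hω.ne'⟩))
  have heq : ballRadius m =ᶠ[𝓝 a] fun b => (id b / unitBallVolume m) ^ (1 / (m : ℝ)) := by
    filter_upwards [lt_mem_nhds ha] with b hb
    rw [ballRadius, max_eq_left hb.le, id]
  refine (hderiv.congr_of_eventuallyEq heq).congr_deriv ?_
  have hr : ballRadius m a = (a / unitBallVolume m) ^ (1 / (m : ℝ)) := heq.eq_of_nhds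
  rw [id_eq, rpow_sub_one (by positivity), ← hr]
  have hmul := eucIso_mul_ballRadius hm ha.le
  have hiso := (eucIso_pos hm ha).ne'
  field_simp
  linear_combination hmul

-- Equality holds when `v` is the volume of the `(m + 1)`-ball of radius `ρ`.
lemma eucIso_succ_le {m : ℕ} {v ρ : ℝ} (hv : 0 < v) (hρ : 0 < ρ) :
    eucIso (m + 1) v ≤ m * v / ρ + unitBallVolume (m + 1) * ρ ^ m := by
  have hω := unitBallVolume_pos (m + 1)
  have hamgm := Real.geom_mean_le_arith_mean2_weighted (w₁ := m / (m + 1)) (w₂ := 1 / (m + 1))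
    (p₁ := (m + 1) * v / ρ) (p₂ := (m + 1) * unitBallVolume (m + 1) * ρ ^ m) (by positivity)
    (by positivity) (by positivity) (by positivity) (by field_simp)
  have hpow : ((m : ℝ) + 1) ^ ((m : ℝ) / (m + 1)) * ((m : ℝ) + 1) ^ (1 / ((m : ℝ) + 1)) =
      m + 1 := by
    rw [← rpow_add (by positivity), ← add_div, div_self (by positivity), Real.rpow_one]
  have hne : ρ ^ ((m : ℝ) / (m + 1)) ≠ 0 := (rpow_pos_of_pos hρ _).ne'
  calc eucIso (m + 1) v
      = ((m + 1) * v / ρ) ^ ((m : ℝ) / (m + 1)) *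
        ((m + 1) * unitBallVolume (m + 1) * ρ ^ m) ^ (1 / ((m : ℝ) + 1)) := by
        rw [eucIso_of_pos hv, div_rpow (by positivity) hρ.le, mul_rpow (by positivity) hv.le,
          mul_rpow (by positivity) (by positivity), mul_rpow (by positivity) hω.le,
          ← Real.rpow_natCast ρ m, ← rpow_mul hρ.le, mul_one_div]
        push_cast
        rw [add_sub_cancel_right]
        field_simp
        linear_combination -hpow
    _ ≤ _ := hamgm
    _ = _ := by field_simp

end EuclideanProfile

section Cap

lemma finrank_lineProd (E : Type*) [NormedAddCommGroup E] [InnerProductSpace ℝ E]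
    [FiniteDimensional ℝ E] : Module.finrank ℝ (LineProd E) = Module.finrank ℝ E + 1 := by
  rw [(WithLp.linearEquiv 2 ℝ (ℝ × E)).finrank_eq, Module.finrank_prod, Module.finrank_self,
    add_comm]

lemma volume_real_ball_lineProd (E : Type*) [NormedAddCommGroup E] [InnerProductSpace ℝ E]
    [FiniteDimensional ℝ E] [MeasurableSpace E] [BorelSpace E] :
    volume.real (Metric.ball (0 : LineProd E) 1) = ∫ x : E, 2 * √(1 - ‖x‖ ^ 2) := by
  have hchord (x : E) : (fun t : ℝ => (t, x)) ⁻¹' (WithLp.toLp 2 ⁻¹'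
      Metric.ball (0 : LineProd E) 1) = Ioo (-√(1 - ‖x‖ ^ 2)) (√(1 - ‖x‖ ^ 2)) := by
    ext t
    have hnorm := LineProd.norm_sq_eq (pair t x)
    rw [WithLp.toLp_fst, WithLp.toLp_snd] at hnorm
    rw [mem_preimage, mem_preimage, Metric.mem_ball, dist_zero_right, mem_Ioo, ← Real.sq_lt,
      lt_sub_iff_add_lt, ← hnorm, sq_lt_one_iff₀ (norm_nonneg _)]
  have hlin : volume (Metric.ball (0 : LineProd E) 1) =
      ∫⁻ x : E, ENNReal.ofReal (2 * √(1 - ‖x‖ ^ 2)) := by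
    rw [← (WithLp.volume_preserving_toLp (U := ℝ) (V := E)).measure_preimage
      measurableSet_ball.nullMeasurableSet, Measure.volume_eq_prod,
      Measure.prod_apply_symm (continuous_pair.measurable measurableSet_ball)]
    refine lintegral_congr fun x => ?_
    rw [hchord, Real.volume_Ioo, sub_neg_eq_add, two_mul]
  rw [integral_eq_lintegral_of_nonneg_ae (Eventually.of_forall fun x => by positivity)
    (by fun_prop), ← hlin]
  rfl

/-- Half the chord, parallel to the axis, of the unit `(m + 1)`-ball over the sphere that encloses
the fraction `u` of the equatorial `m`-ball. -/
def capHeight (m : ℕ) (u : ℝ) : ℝ := √(1 - (u ^ (1 / (m : ℝ))) ^ 2)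

lemma capHeight_of_one_le {m : ℕ} {u : ℝ} (hu : 1 ≤ u) : capHeight m u = 0 :=
  Real.sqrt_eq_zero_of_nonpos <| sub_nonpos.2 <| one_le_pow₀ <|
    Real.one_le_rpow hu (by positivity)

lemma unitBallVolume_succ {m : ℕ} (hm : 1 ≤ m) :
    unitBallVolume (m + 1) = 2 * unitBallVolume m * ∫ u in (0 : ℝ)..1, capHeight m u := by
  have : Nonempty (Fin m) := ⟨⟨0, hm⟩⟩
  have hm0 : (0 : ℝ) < m := by exact_mod_cast hm
  have hsucc := volume_real_ball_one (LineProd (EucSp m))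
  have hball := volume_real_ball_one (EucSp m)
  rw [finrank_euclideanSpace_fin] at hball
  rw [finrank_lineProd, finrank_euclideanSpace_fin, volume_real_ball_lineProd] at hsucc
  have hsubst : ∫ x in Ioi (0 : ℝ), ((m : ℝ) * x ^ ((m : ℝ) - 1)) • capHeight m (x ^ (m : ℝ)) =
      ∫ x in Ioi (0 : ℝ), (m : ℝ) * (x ^ (m - 1) • √(1 - x ^ 2)) := by
    refine setIntegral_congr_fun measurableSet_Ioi fun x (hx : 0 < x) => ?_
    simp only [smul_eq_mul, capHeight]
    rw [← rpow_mul hx.le, mul_one_div_cancel hm0.ne', Real.rpow_one, mul_assoc,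
      ← Real.rpow_natCast x (m - 1), Nat.cast_sub hm, Nat.cast_one]
  have htrunc : ∫ u in Ioi (0 : ℝ), capHeight m u = ∫ u in (0 : ℝ)..1, capHeight m u := by
    rw [intervalIntegral.integral_of_le zero_le_one]
    refine setIntegral_eq_of_subset_of_forall_sdiff_eq_zero measurableSet_Ioi Ioc_subset_Ioi_self
      fun u hu => capHeight_of_one_le ?_
    by_contra! hlt
    exact hu.2 ⟨hu.1, hlt.le⟩
  rw [← hsucc, ← htrunc, integral_const_mul, integral_fun_norm_addHaar volume fun y => √(1 - y ^ 2),
    hball, finrank_euclideanSpace_fin, ← integral_comp_rpow_Ioi_of_pos hm0 (g := capHeight m),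
    hsubst, integral_const_mul, nsmul_eq_mul, smul_eq_mul]
  ring

lemma integral_cap {m : ℕ} (hm : 1 ≤ m) {M : ℝ} (hM : 0 < M) :
    2 * ∫ a in (0 : ℝ)..M, √(1 - (ballRadius m a / ballRadius m M) ^ 2) =
      unitBallVolume (m + 1) * ballRadius m M ^ m := by
  have hω := unitBallVolume_pos m
  have hscale := intervalIntegral.mul_integral_comp_mul_left
    (f := fun a => √(1 - (ballRadius m a / ballRadius m M) ^ 2)) (a := 0) (b := 1) M
  have hcap : ∫ x in (0 : ℝ)..1, √(1 - (ballRadius m (M * x) / ballRadius m M) ^ 2) =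
      ∫ u in (0 : ℝ)..1, capHeight m u := by
    refine intervalIntegral.integral_congr fun u hu => ?_
    rw [uIcc_of_le zero_le_one] at hu
    have hMu : 0 ≤ M * u := mul_nonneg hM.le hu.1
    simp only [capHeight]
    rw [ballRadius, ballRadius, max_eq_left hMu, max_eq_left hM.le,
      ← div_rpow (by positivity) (by positivity), div_div_div_cancel_right₀ hω.ne',
      mul_div_cancel_left₀ _ hM.ne']
  rw [mul_zero, mul_one] at hscale
  rw [← hscale, unitBallVolume_succ hm, hcap]
  linear_combination -2 * (∫ u in (0 : ℝ)..1, capHeight m u) *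
    unitBallVolume_mul_ballRadius_pow hm hM.le

lemma sub_le_integral_cap {m : ℕ} (hm : 1 ≤ m) {m₀ M : ℝ} (hm₀ : 0 ≤ m₀) (hM : 0 < M) :
    unitBallVolume (m + 1) * ballRadius m M ^ m - 2 * m₀ ≤
      2 * ∫ a in m₀..M, √(1 - (ballRadius m a / ballRadius m M) ^ 2) := by
  have hcont : Continuous fun a => √(1 - (ballRadius m a / ballRadius m M) ^ 2) := by
    have := continuous_ballRadius m
    fun_prop
  have hlow : ∫ a in (0 : ℝ)..m₀, √(1 - (ballRadius m a / ballRadius m M) ^ 2) ≤ m₀ := by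
    calc ∫ a in (0 : ℝ)..m₀, √(1 - (ballRadius m a / ballRadius m M) ^ 2)
        ≤ ∫ _ in (0 : ℝ)..m₀, (1 : ℝ) :=
          intervalIntegral.integral_mono_on hm₀ (hcont.intervalIntegrable _ _) (by simp)
            fun a _ => Real.sqrt_le_one.2 (sub_le_self _ (sq_nonneg _))
      _ = m₀ := by simp
  rw [← integral_cap hm hM, ← intervalIntegral.integral_add_adjacent_intervals
    (hcont.intervalIntegrable 0 m₀) (hcont.intervalIntegrable m₀ M)]
  linarith

lemma isCalibration_sqrt_min {u : ℝ → ℝ} (hu : Continuous u) (hu0 : ∀ a, 0 ≤ u a) :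
    IsCalibration (fun a => √(1 - u a ^ 2)) fun a => min 1 (u a) where
  continuous_left := by fun_prop
  continuous_right := by fun_prop
  nonneg_right a := le_min zero_le_one (hu0 a)
  sq_add_sq_le_one a := by
    rcases le_total (u a) 1 with h1 | h1
    · rw [Real.sq_sqrt (by nlinarith [hu0 a]), min_eq_right h1]
      linarith
    · rw [Real.sqrt_eq_zero_of_nonpos (by nlinarith), min_eq_left h1]
      norm_num

end Cap

namespace SliceData

lemma min_eq_zero {Ψ A : ℝ → ℝ} {v P m₀ M : ℝ} (h : SliceData univ Ψ A v P m₀ M) : m₀ = 0 := by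
  have hint : IntegrableOn (fun _ : ℝ => m₀) univ := by
    refine h.integrable.mono' aestronglyMeasurable_const ?_
    filter_upwards [h.mem] with t ht
    exact (Real.norm_of_nonneg h.nonneg).trans_le ht.1
  rw [integrableOn_const_iff] at hint
  simpa using hint

variable {I : Set ℝ} {Ψ A : ℝ → ℝ} {v P m₀ M : ℝ}

lemma max_pos (h : SliceData I Ψ A v P m₀ M) (hv : 0 < v) : 0 < M := by
  by_contra! hM
  refine hv.not_ge (h.integral_eq ▸ integral_nonpos_of_ae ?_)
  filter_upwards [h.mem] with t ht using ht.2.trans hM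

lemma two_mul_sub_le (h : SliceData I Ψ A v P m₀ M) : 2 * (M - m₀) ≤ P := by
  simpa using h.integral_add_integral_le (fun _ => 1) (fun _ => 0)
    ⟨continuous_const, continuous_const, by simp, by simp⟩

lemma nonneg_perimeter (h : SliceData I Ψ A v P m₀ M) : 0 ≤ P := by
  linarith [h.two_mul_sub_le, h.le]

lemma one_le_max (h : SliceData I Ψ A v P m₀ M) (hv : 0 < v) (hA : ∀ t, A t = 0 ∨ A t = 1) :
    1 ≤ M := by
  by_contra! hM
  refine hv.ne' (h.integral_eq ▸ integral_eq_zero_of_ae ?_)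
  filter_upwards [h.mem] with t ht
  exact (hA t).resolve_right fun h1 => (h1 ▸ ht.2).not_gt hM

lemma ae_min_mul_eq {m : ℕ} (hm : 1 ≤ m) (h : SliceData I Ψ A v P m₀ M)
    (hΨ : ∀ a ≤ M, Ψ a = eucIso m a) (hM : 0 < M) :
    ∀ᵐ t ∂volume.restrict I,
      min 1 (ballRadius m (A t) / ballRadius m M) * Ψ (A t) = m / ballRadius m M * A t := by
  have hρ : 0 < ballRadius m M := ballRadius_pos m hM
  filter_upwards [h.mem] with t ht
  rw [min_eq_right ((div_le_one hρ).2 (ballRadius_mono m ht.2)), hΨ _ ht.2]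
  linear_combination eucIso_mul_ballRadius hm (h.nonneg.trans ht.1) / ballRadius m M

-- The calibration is the unit normal of the concentric spheres cut into caps by the slices: for
-- the half-ball of equatorial volume `M` all inequalities are equalities.
theorem optimum_sub_le {m : ℕ} (hm : 1 ≤ m) (h : SliceData I Ψ A v P m₀ M)
    (hΨ : ∀ a ≤ M, Ψ a = eucIso m a) (hM : 0 < M) :
    m * v / ballRadius m M + unitBallVolume (m + 1) * ballRadius m M ^ m - 2 * m₀ ≤ P := by
  have hρ : 0 < ballRadius m M := ballRadius_pos m hM
  have hle := h.integral_add_integral_le _ _ (isCalibration_sqrt_min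
    ((continuous_ballRadius m).div_const (ballRadius m M)) fun a =>
      div_nonneg (ballRadius_nonneg m a) hρ.le)
  rw [integral_congr_ae (h.ae_min_mul_eq hm hΨ hM), integral_const_mul, h.integral_eq] at hle
  calc m * v / ballRadius m M + unitBallVolume (m + 1) * ballRadius m M ^ m - 2 * m₀
      = (unitBallVolume (m + 1) * ballRadius m M ^ m - 2 * m₀) + m / ballRadius m M * v := by ring
    _ ≤ P := (add_le_add_left (sub_le_integral_cap hm h.nonneg hM) _).trans hle

theorem eucIso_le {m : ℕ} (hm : 1 ≤ m) (h : SliceData univ (eucIso m) A v P m₀ M) (hv : 0 < v) :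
    eucIso (m + 1) v ≤ P := by
  have hM := h.max_pos hv
  have hle := h.optimum_sub_le hm (fun _ _ => rfl) hM
  rw [h.min_eq_zero, mul_zero, sub_zero] at hle
  exact (eucIso_succ_le hv (ballRadius_pos m hM)).trans hle

end SliceData

section Isometry

lemma prodDom_univ (V : Type*) : prodDom (univ : Set ℝ) (univ : Set V) = univ := by
  ext; simp [prodDom]

lemma prodPeriods_empty (V : Type*) [Zero V] : prodPeriods (∅ : Set ℝ) (∅ : Set V) = ∅ := by
  ext; simp [prodPeriods]

variable {V W : Type*} [NormedAddCommGroup V] [InnerProductSpace ℝ V]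
  [NormedAddCommGroup W] [InnerProductSpace ℝ W]

lemma IsAdmissible.comp_isometry {g : V → ℝ} (hg : IsAdmissible univ ∅ g) (e : W ≃ₗᵢ[ℝ] V) :
    IsAdmissible univ ∅ (g ∘ e) where
  contDiff := hg.contDiff.comp e.contDiff
  periodic := by simp
  support r := by
    obtain ⟨R, hR⟩ := hg.support r
    refine ⟨R, fun x _ b hb hx => ?_⟩
    rw [Function.comp_apply, map_add]
    exact hR _ trivial _ (by rwa [e.norm_map]) (by rwa [e.norm_map])

lemma enorm_fderiv_comp_isometry (g : V → ℝ) (e : W ≃ₗᵢ[ℝ] V) (x : W) :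
    ‖fderiv ℝ (g ∘ e) x‖ₑ = ‖fderiv ℝ g (e x)‖ₑ := by
  have hfderiv : fderiv ℝ (g ∘ e) x =
      (fderiv ℝ g (e x)).comp (e.toContinuousLinearEquiv : W →L[ℝ] V) :=
    e.toContinuousLinearEquiv.comp_right_fderiv
  rw [hfderiv, ← ofReal_norm, ← ofReal_norm]
  exact congrArg _ (ContinuousLinearMap.opNorm_comp_linearIsometryEquiv _ e)

end Isometry

section Relaxed

variable {V W : Type*} [NormedAddCommGroup V] [InnerProductSpace ℝ V] [FiniteDimensional ℝ V]
  [MeasurableSpace V] [BorelSpace V] {I Λt : Set ℝ} {D Λ : Set V} {Ψ Φ : ℝ → ℝ}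
  [NormedAddCommGroup W] [InnerProductSpace ℝ W] [FiniteDimensional ℝ W]
  [MeasurableSpace W] [BorelSpace W]

theorem RelaxedIsoperimetric.prod (hΨ : RelaxedIsoperimetric D Λ Ψ) (hΨ0 : ∀ a, 0 ≤ Ψ a)
    (hΨm : Measurable Ψ) (hI : MeasurableSet I) (hI0 : volume I ≠ 0) (hD : MeasurableSet D)
    (h0 : (0 : ℝ) ∈ I) (hosc : OscillationBound I Λt)
    (hΦ : ∀ A v P m₀ M, SliceData I Ψ A v P m₀ M → Φ v ≤ P) :
    RelaxedIsoperimetric (prodDom I D) (prodPeriods Λt Λ) Φ := by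
  intro E g hg P hP
  rcases eq_or_ne P ∞ with rfl | hPtop
  · exact le_top
  obtain ⟨m₀, M, h⟩ := hΨ.exists_sliceData hΨ0 hΨm hI hI0 hD h0 hosc hg hPtop hP
  exact ENNReal.ofReal_le_of_le_toReal (hΦ _ _ _ _ _ h)

lemma RelaxedIsoperimetric.mono (hΨ : RelaxedIsoperimetric D Λ Ψ) (hle : ∀ v, Φ v ≤ Ψ v) :
    RelaxedIsoperimetric D Λ Φ := fun E g hg P hP =>
  (ENNReal.ofReal_le_ofReal (hle _)).trans (hΨ E g hg P hP)

lemma IsApproximation.comp_isometry {E : Set V} {g : ℕ → V → ℝ}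
    (hg : IsApproximation univ ∅ E g) (e : W ≃ₗᵢ[ℝ] V) :
    IsApproximation univ ∅ (e ⁻¹' E) fun k => g k ∘ e where
  measurableSet := e.continuous.measurable hg.measurableSet
  volume_ne_top := by
    rw [inter_univ, e.measurePreserving.measure_preimage hg.measurableSet.nullMeasurableSet]
    simpa using hg.volume_ne_top
  isAdmissible k := (hg.isAdmissible k).comp_isometry e
  tendsto := by
    have htendsto := hg.tendsto
    simp only [setLIntegral_univ] at htendsto ⊢
    exact htendsto.congr fun k => (e.measurePreserving.lintegral_comp_emb
      e.toHomeomorph.measurableEmbedding fun x => ‖g k x - E.indicator 1 x‖ₑ).symm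

lemma RelaxedIsoperimetric.of_isometry (hΨ : RelaxedIsoperimetric (univ : Set V) ∅ Ψ)
    (e : W ≃ₗᵢ[ℝ] V) : RelaxedIsoperimetric (univ : Set W) ∅ Ψ := by
  intro E g hg P hP
  have hbound := hΨ _ _ (hg.comp_isometry e.symm) P fun k => ?_
  · rwa [inter_univ, Measure.real, e.symm.measurePreserving.measure_preimage
      hg.measurableSet.nullMeasurableSet, ← inter_univ E, ← Measure.real] at hbound
  · have hPk := hP k
    simp only [setLIntegral_univ, enorm_fderiv_comp_isometry] at hPk ⊢
    rwa [e.symm.measurePreserving.lintegral_comp_emb e.symm.toHomeomorph.measurableEmbedding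
      fun x => ‖fderiv ℝ (g k) x‖ₑ]

end Relaxed

section EuclideanSpace

/-- The isometry `ℝ^{m+1} ≃ ℝ × ℝ^m`. -/
def eucSuccIsometry (m : ℕ) : EucSp (m + 1) ≃ₗᵢ[ℝ] LineProd (EucSp m) :=
  ((stdOrthonormalBasis ℝ (LineProd (EucSp m))).reindex
    (finCongr (by rw [finrank_lineProd, finrank_euclideanSpace_fin]))).repr.symm

lemma sliceVol_eucSp_zero (E : Set (LineProd (EucSp 0))) (t : ℝ) :
    sliceVol univ E t = 0 ∨ sliceVol univ E t = 1 := by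
  rw [sliceVol, inter_univ]
  rcases eq_empty_or_singleton_of_subsingleton (pair t ⁻¹' E) with hempty | ⟨x, hx⟩
  · simp [hempty]
  · simp [hx, volume_euclideanSpace_eq_dirac, Subsingleton.elim x 0, Measure.real]

theorem relaxedIsoperimetric_eucSp_one :
    RelaxedIsoperimetric (univ : Set (EucSp 1)) ∅ (eucIso 1) := by
  refine RelaxedIsoperimetric.of_isometry ?_ (eucSuccIsometry 0)
  rw [← prodDom_univ, ← prodPeriods_empty]
  intro E g hg P hP
  rcases eq_or_ne P ∞ with rfl | hPtop
  · exact le_top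
  have htrivial : RelaxedIsoperimetric (univ : Set (EucSp 0)) ∅ fun _ => 0 := by
    intro E g _ P _
    simp
  obtain ⟨m₀, M, h⟩ := htrivial.exists_sliceData (fun _ => le_rfl) measurable_const
    MeasurableSet.univ (by simp) MeasurableSet.univ trivial oscillationBound_univ hg hPtop hP
  refine ENNReal.ofReal_le_of_le_toReal ?_
  rcases le_or_gt (volume.real (E ∩ prodDom univ univ)) 0 with hv | hv
  · rw [eucIso_of_nonpos hv]
    exact ENNReal.toReal_nonneg
  · obtain rfl := h.min_eq_zero
    have hM : 1 ≤ M := h.one_le_max hv (sliceVol_eucSp_zero E)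
    have hiso : eucIso 1 (volume.real (E ∩ prodDom univ univ)) = 2 := by
      rw [eucIso_of_pos hv, unitBallVolume_one]
      norm_num
    linarith [h.two_mul_sub_le]

theorem relaxedIsoperimetric_eucSp {N : ℕ} (hN : 1 ≤ N) :
    RelaxedIsoperimetric (univ : Set (EucSp N)) ∅ (eucIso N) := by
  induction N, hN using Nat.le_induction with
  | base => exact relaxedIsoperimetric_eucSp_one
  | succ m hm ih =>
    refine RelaxedIsoperimetric.of_isometry ?_ (eucSuccIsometry m)
    rw [← prodDom_univ, ← prodPeriods_empty]
    refine ih.prod (eucIso_nonneg m) (measurable_eucIso m) MeasurableSet.univ (by simp)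
      MeasurableSet.univ trivial oscillationBound_univ ?_
    intro A v P m₀ M h
    rcases le_or_gt v 0 with hv | hv
    · rw [eucIso_of_nonpos hv]
      exact h.nonneg_perimeter
    · exact h.eucIso_le hm hv

end EuclideanSpace

section GainField

/-- The field added to the cap calibration of radius `ρ` when the smallest slice has volume
`m₀ > 0`; it lives on slices of small radius, on which `gainField m m₀ ρ a * eucIso m a` is the
constant `eucIso m m₀ / 4`. -/
def gainField (m : ℕ) (m₀ ρ a : ℝ) : ℝ :=
  eucIso m m₀ / eucIso m (max a m₀) / 4 * max 0 (min 1 (2 - 4 * (ballRadius m a / ρ)))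

variable {m : ℕ} {m₀ : ℝ}

lemma continuous_gainField (hm : 1 ≤ m) (hm₀ : 0 < m₀) (ρ : ℝ) :
    Continuous (gainField m m₀ ρ) := by
  have hpos : ∀ a, 0 < max a m₀ := fun a => lt_max_of_lt_right hm₀
  have hiso : Continuous fun a => eucIso m (max a m₀) := by
    simp only [eucIso_of_pos (hpos _)]
    exact continuous_const.mul ((continuous_id.max continuous_const).rpow_const fun a =>
      Or.inl (hpos a).ne')
  have hr := continuous_ballRadius m
  exact ((continuous_const.div hiso fun a => (eucIso_pos hm (hpos a)).ne').div_const 4).mul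
    (by fun_prop)

lemma gainField_nonneg (m : ℕ) (m₀ ρ a : ℝ) : 0 ≤ gainField m m₀ ρ a :=
  mul_nonneg (div_nonneg (div_nonneg (eucIso_nonneg _ _) (eucIso_nonneg _ _)) zero_le_four)
    (le_max_left _ _)

lemma gainField_le (m : ℕ) (m₀ ρ a : ℝ) :
    gainField m m₀ ρ a ≤ eucIso m m₀ / eucIso m (max a m₀) / 4 :=
  mul_le_of_le_one_right
    (div_nonneg (div_nonneg (eucIso_nonneg _ _) (eucIso_nonneg _ _)) zero_le_four)
    (max_le zero_le_one (min_le_left _ _))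

lemma gainField_le_quarter (hm : 1 ≤ m) (m₀ ρ a : ℝ) : gainField m m₀ ρ a ≤ 1 / 4 :=
  (gainField_le m m₀ ρ a).trans <| div_le_div_of_nonneg_right
    (div_le_one_of_le₀ (eucIso_mono hm (le_max_right _ _)) (eucIso_nonneg _ _)) zero_le_four

lemma gainField_eq_zero {ρ a : ℝ} (ha : 1 / 2 ≤ ballRadius m a / ρ) : gainField m m₀ ρ a = 0 := by
  rw [gainField, max_eq_left ((min_le_right _ _).trans (by linarith)), mul_zero]

lemma gainField_mul_eucIso (hm : 1 ≤ m) {ρ a : ℝ} (ha₀ : 0 < a) (ha : m₀ ≤ a)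
    (har : ballRadius m a / ρ ≤ 1 / 4) : gainField m m₀ ρ a * eucIso m a = eucIso m m₀ / 4 := by
  have hiso := (eucIso_pos hm ha₀).ne'
  rw [gainField, min_eq_left (by linarith), max_eq_right zero_le_one, max_eq_left ha]
  field_simp

-- The bound for the field is proportional to the derivative of `ballRadius m`.
lemma integral_gainField_le (hm : 1 ≤ m) (hm₀ : 0 < m₀) (ρ : ℝ) {M : ℝ} (hM : m₀ ≤ M) :
    ∫ a in m₀..M, gainField m m₀ ρ a ≤ eucIso m m₀ / 4 * ballRadius m M := by
  have hpos : ∀ a ∈ uIcc m₀ M, 0 < a := fun a ha => by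
    rw [uIcc_of_le hM] at ha
    exact hm₀.trans_le ha.1
  have hint : IntervalIntegrable (fun a => (eucIso m a)⁻¹) volume m₀ M :=
    AntitoneOn.intervalIntegrable fun a ha b _ hab =>
      inv_anti₀ (eucIso_pos hm (hpos a ha)) (eucIso_mono hm hab)
  calc ∫ a in m₀..M, gainField m m₀ ρ a
      ≤ ∫ a in m₀..M, eucIso m m₀ / 4 * (eucIso m a)⁻¹ := by
        refine intervalIntegral.integral_mono_on hM
          ((continuous_gainField hm hm₀ ρ).intervalIntegrable _ _) (hint.const_mul _) fun a ha => ?_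
        refine (gainField_le m m₀ ρ a).trans_eq ?_
        rw [max_eq_left ha.1]
        ring
    _ = eucIso m m₀ / 4 * (ballRadius m M - ballRadius m m₀) := by
        rw [intervalIntegral.integral_const_mul, intervalIntegral.integral_eq_sub_of_hasDerivAt
          (fun a ha => hasDerivAt_ballRadius hm (hpos a ha)) hint]
    _ ≤ eucIso m m₀ / 4 * ballRadius m M :=
        mul_le_mul_of_nonneg_left (sub_le_self _ (ballRadius_nonneg m m₀))
          (div_nonneg (eucIso_nonneg m m₀) zero_le_four)

lemma isCalibration_gainField (hm : 1 ≤ m) (hm₀ : 0 < m₀) {ρ : ℝ} (hρ : 0 < ρ) :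
    IsCalibration (fun a => √(1 - (ballRadius m a / ρ) ^ 2) - gainField m m₀ ρ a)
      fun a => min 1 (ballRadius m a / ρ) + gainField m m₀ ρ a := by
  have hr := continuous_ballRadius m
  have hr0 : ∀ a, 0 ≤ ballRadius m a / ρ := fun a => div_nonneg (ballRadius_nonneg m a) hρ.le
  have hg := continuous_gainField hm hm₀ ρ
  refine ⟨by fun_prop, by fun_prop, fun a => add_nonneg (le_min zero_le_one (hr0 a))
    (gainField_nonneg m m₀ ρ a), fun a => ?_⟩
  rcases le_or_gt (1 / 2) (ballRadius m a / ρ) with hlarge | hsmall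
  · simpa only [gainField_eq_zero hlarge, sub_zero, add_zero] using
      (isCalibration_sqrt_min (hr.div_const ρ) hr0).sq_add_sq_le_one a
  · have hsqrt : 0.86 ≤ √(1 - (ballRadius m a / ρ) ^ 2) :=
      Real.le_sqrt_of_sq_le (by nlinarith [hr0 a])
    have hsq : √(1 - (ballRadius m a / ρ) ^ 2) ^ 2 = 1 - (ballRadius m a / ρ) ^ 2 :=
      Real.sq_sqrt (by nlinarith [hr0 a])
    rw [min_eq_right (by linarith)]
    nlinarith [gainField_nonneg m m₀ ρ a, gainField_le_quarter hm m₀ ρ a]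

end GainField

namespace SliceData

variable {I : Set ℝ} {Ψ A : ℝ → ℝ} {v P m₀ M : ℝ} {m : ℕ}

lemma ae_nonneg (h : SliceData I Ψ A v P m₀ M) : ∀ᵐ t ∂volume.restrict I, 0 ≤ A t := by
  filter_upwards [h.mem] with t ht using h.nonneg.trans ht.1

lemma min_mul_le (h : SliceData I Ψ A v P m₀ M) (hI : volume I ≠ ∞) :
    m₀ * volume.real I ≤ v := by
  rw [mul_comm, ← smul_eq_mul, ← setIntegral_const, ← h.integral_eq]
  refine integral_mono_ae (integrableOn_const hI) h.integrable ?_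
  filter_upwards [h.mem] with t ht using ht.1

lemma le_max_mul (h : SliceData I Ψ A v P m₀ M) (hI : volume I ≠ ∞) :
    v ≤ M * volume.real I := by
  rw [mul_comm, ← smul_eq_mul, ← setIntegral_const, ← h.integral_eq]
  refine integral_mono_ae h.integrable (integrableOn_const hI) ?_
  filter_upwards [h.mem] with t ht using ht.2

lemma measurableSet_ballRadius_le (h : SliceData I Ψ A v P m₀ M) (m : ℕ) (ρ : ℝ) :
    MeasurableSet {t | ballRadius m (A t) / ρ ≤ 1 / 4} :=
  measurableSet_le (((continuous_ballRadius m).measurable.comp h.measurable).div_const _)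
    measurable_const

lemma unitBallVolume_mul_measureReal_le (hm : 1 ≤ m) (h : SliceData I Ψ A v P m₀ M)
    (hI : volume I ≠ ∞) {ρ : ℝ} (hρ : 0 < ρ) :
    unitBallVolume m * (ρ / 4) ^ m * (volume.real I -
      (volume.restrict I).real {t | ballRadius m (A t) / ρ ≤ 1 / 4}) ≤ v := by
  have hω := unitBallVolume_pos m
  have : IsFiniteMeasure (volume.restrict I) := isFiniteMeasure_restrict.2 hI
  have hcover : (univ : Set ℝ) ⊆ {t | ballRadius m (A t) / ρ ≤ 1 / 4} ∪
      {t | unitBallVolume m * (ρ / 4) ^ m ≤ A t} := fun t _ => by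
    refine or_iff_not_imp_right.2 fun hA => (div_le_iff₀ hρ).2 ?_
    calc ballRadius m (A t) ≤ ballRadius m (unitBallVolume m * (ρ / 4) ^ m) :=
          ballRadius_mono m (not_le.1 hA).le
      _ = 1 / 4 * ρ := by rw [ballRadius_unitBallVolume_mul_pow hm (by positivity)]; ring
  have hmeas := (measureReal_mono (μ := volume.restrict I) hcover).trans (measureReal_union_le _ _)
  rw [measureReal_restrict_apply MeasurableSet.univ, univ_inter] at hmeas
  have hmarkov := mul_meas_ge_le_integral_of_nonneg h.ae_nonneg h.integrable
    (unitBallVolume m * (ρ / 4) ^ m)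
  rw [h.integral_eq] at hmarkov
  refine le_trans ?_ hmarkov
  gcongr
  linarith

lemma le_integral_gainField (hm : 1 ≤ m) (h : SliceData I Ψ A v P m₀ M)
    (hΨ : ∀ a ≤ M, Ψ a = eucIso m a) (hm₀ : 0 < m₀) (hI : volume I ≠ ∞) :
    m * v / ballRadius m M + eucIso m m₀ / 4 *
        (volume.restrict I).real {t | ballRadius m (A t) / ballRadius m M ≤ 1 / 4} ≤
      ∫ t in I, (min 1 (ballRadius m (A t) / ballRadius m M) +
        gainField m m₀ (ballRadius m M) (A t)) * Ψ (A t) := by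
  set ρ := ballRadius m M
  set G := {t | ballRadius m (A t) / ρ ≤ 1 / 4}
  have hM : 0 < M := hm₀.trans_le h.le
  have : IsFiniteMeasure (volume.restrict I) := isFiniteMeasure_restrict.2 hI
  have hG : MeasurableSet G := h.measurableSet_ballRadius_le m ρ
  have hind : Integrable (G.indicator fun _ => eucIso m m₀ / 4) (volume.restrict I) :=
    (integrable_const _).indicator hG
  have hlower : ∫ t in I, (m / ρ * A t + G.indicator (fun _ => eucIso m m₀ / 4) t) =
      m * v / ρ + eucIso m m₀ / 4 * (volume.restrict I).real G := by
    rw [integral_add (h.integrable.const_mul _) hind, integral_const_mul, h.integral_eq,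
      integral_indicator_const _ hG, smul_eq_mul]
    ring
  rw [← hlower]
  refine integral_mono_ae ((h.integrable.const_mul _).add hind)
    (h.integrable_mul _ _ (isCalibration_gainField hm hm₀ (ballRadius_pos m hM))) ?_
  filter_upwards [h.mem, h.ae_min_mul_eq hm hΨ hM] with t ht hmin
  rw [add_mul, hmin]
  refine add_le_add le_rfl ?_
  rw [hΨ _ ht.2]
  by_cases htG : t ∈ G
  · rw [indicator_of_mem htG, gainField_mul_eucIso hm (hm₀.trans_le ht.1) ht.1 htG]
  · rw [indicator_of_notMem htG]
    exact mul_nonneg (gainField_nonneg _ _ _ _) (eucIso_nonneg _ _)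

-- The perturbed calibration makes up for the missing caps of the slices below `m₀`.
theorem optimum_add_gain_le (hm : 1 ≤ m) (h : SliceData I Ψ A v P m₀ M)
    (hΨ : ∀ a ≤ M, Ψ a = eucIso m a) (hm₀ : 0 < m₀) (hI : volume I ≠ ∞) :
    m * v / ballRadius m M + unitBallVolume (m + 1) * ballRadius m M ^ m + eucIso m m₀ / 4 *
        ((volume.restrict I).real {t | ballRadius m (A t) / ballRadius m M ≤ 1 / 4} -
          10 * ballRadius m M) ≤ P := by
  have hM : 0 < M := hm₀.trans_le h.le
  have hρ : 0 < ballRadius m M := ballRadius_pos m hM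
  have hr := continuous_ballRadius m
  have hle := h.integral_add_integral_le _ _ (isCalibration_gainField hm hm₀ hρ)
  rw [intervalIntegral.integral_sub (Continuous.intervalIntegrable (by fun_prop) _ _)
    ((continuous_gainField hm hm₀ _).intervalIntegrable _ _)] at hle
  have hcap := sub_le_integral_cap hm h.nonneg hM
  have hgain := integral_gainField_le hm hm₀ (ballRadius m M) h.le
  have hslice := h.le_integral_gainField hm hΨ hm₀ hI
  have hm₀ρ : m₀ ≤ eucIso m m₀ * ballRadius m M := by
    calc m₀ ≤ m * m₀ := le_mul_of_one_le_left hm₀.le (by exact_mod_cast hm)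
      _ = eucIso m m₀ * ballRadius m m₀ := (eucIso_mul_ballRadius hm hm₀.le).symm
      _ ≤ eucIso m m₀ * ballRadius m M :=
          mul_le_mul_of_nonneg_left (ballRadius_mono m h.le) (eucIso_nonneg m m₀)
  linarith

end SliceData

section SmallVolumes

/-- The profile of `ℝ^m`, truncated to volumes at most `c`. -/
def truncEucIso (m : ℕ) (c a : ℝ) : ℝ := if a ≤ c then eucIso m a else 0

lemma truncEucIso_of_le {m : ℕ} {c a : ℝ} (h : a ≤ c) : truncEucIso m c a = eucIso m a := if_pos h

lemma truncEucIso_nonneg (m : ℕ) (c a : ℝ) : 0 ≤ truncEucIso m c a := by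
  unfold truncEucIso
  split_ifs
  exacts [eucIso_nonneg m a, le_rfl]

lemma truncEucIso_le (m : ℕ) (c a : ℝ) : truncEucIso m c a ≤ eucIso m a := by
  unfold truncEucIso
  split_ifs
  exacts [le_rfl, eucIso_nonneg m a]

lemma measurable_truncEucIso (m : ℕ) (c : ℝ) : Measurable (truncEucIso m c) :=
  Measurable.ite measurableSet_Iic (measurable_eucIso m) measurable_const

/-- The constant with `eucIso (m + 1) (x ^ (m + 1)) + x ^ m = slackConst m * x ^ m`. -/
def slackConst (m : ℕ) : ℝ := (m + 1) * unitBallVolume (m + 1) ^ (1 / ((m : ℝ) + 1)) + 1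

lemma one_le_slackConst (m : ℕ) : 1 ≤ slackConst m := by
  have hω := unitBallVolume_pos (m + 1)
  exact le_add_of_nonneg_left (by positivity)

lemma eucIso_succ_pow_add (m : ℕ) {x : ℝ} (hx : 0 < x) :
    eucIso (m + 1) (x ^ (m + 1)) + x ^ m = slackConst m * x ^ m := by
  rw [eucIso_of_pos (by positivity), slackConst, ← Real.rpow_natCast x (m + 1), ← rpow_mul hx.le]
  push_cast
  rw [add_sub_cancel_right, mul_div_cancel₀ _ (by positivity), Real.rpow_natCast]
  ring

/-- The length scales `x` at which the circle of length `L` cannot be used to save area: a region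
of volume `x ^ (m + 1)` violating the Euclidean inequality would have slices of volume at most `c`
and of radius small compared to `L`. -/
structure IsSmallScale (m : ℕ) (c L x : ℝ) : Prop where
  pos : 0 < x
  two_mul_le : 2 * x ≤ L
  mul_pow_le : slackConst m * x ^ m ≤ c
  div_mul_pow_le : slackConst m / unitBallVolume (m + 1) * x ^ m ≤ (L / 20) ^ m
  mul_le : 4 ^ m / unitBallVolume m * (slackConst m / m) ^ m * x ≤ L / 2

lemma eventually_isSmallScale {m : ℕ} (hm : 1 ≤ m) {c L : ℝ} (hc : 0 < c) (hL : 0 < L) :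
    ∀ᶠ v in 𝓝[>] (0 : ℝ), IsSmallScale m c L (v ^ (1 / ((m : ℝ) + 1))) := by
  have hm0 : m ≠ 0 := by omega
  have heventually : ∀ {f : ℝ → ℝ} {b : ℝ}, Continuous f → f 0 = 0 → 0 < b →
      ∀ᶠ x in 𝓝[>] 0, f x ≤ b := fun {f b} hf h0 hb =>
    ((hf.tendsto' 0 0 h0).mono_left nhdsWithin_le_nhds).eventually_le_const hb
  have hscale : ∀ᶠ x in 𝓝[>] (0 : ℝ), IsSmallScale m c L x := by
    filter_upwards [self_mem_nhdsWithin, heventually (by fun_prop) (mul_zero 2) hL,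
      heventually (f := fun x => slackConst m * x ^ m) (by fun_prop) (by simp [hm0]) hc,
      heventually (f := fun x => slackConst m / unitBallVolume (m + 1) * x ^ m)
        (b := (L / 20) ^ m) (by fun_prop) (by simp [hm0]) (by positivity),
      heventually (by fun_prop) (mul_zero (4 ^ m / unitBallVolume m * (slackConst m / m) ^ m))
        (half_pos hL)] with x h0 h1 h2 h3 h4 using ⟨h0, h1, h2, h3, h4⟩
  refine Tendsto.eventually (tendsto_nhdsWithin_iff.2 ⟨?_, ?_⟩) hscale
  · have hcont :=
      (Real.continuousAt_rpow_const 0 (1 / ((m : ℝ) + 1)) (Or.inr (by positivity))).tendsto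
    rw [Real.zero_rpow (by positivity)] at hcont
    exact hcont.mono_left nhdsWithin_le_nhds
  · filter_upwards [self_mem_nhdsWithin] with v hv using rpow_pos_of_pos hv _

namespace IsSmallScale

variable {m : ℕ} {c L x ρ : ℝ}

lemma mul_radius_le (hs : IsSmallScale m c L x) (hm : 1 ≤ m) (hL : 0 < L) (hρ : 0 < ρ)
    (hsum : m * x ^ (m + 1) / ρ + unitBallVolume (m + 1) * ρ ^ m ≤ slackConst m * x ^ m) :
    20 * ρ ≤ L := by
  have hω := unitBallVolume_pos (m + 1)
  have hx := hs.pos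
  have hle : unitBallVolume (m + 1) * ρ ^ m ≤ slackConst m * x ^ m :=
    (le_add_of_nonneg_left (by positivity)).trans hsum
  have hpow : ρ ^ m ≤ (L / 20) ^ m := by
    refine le_trans ?_ hs.div_mul_pow_le
    rw [div_mul_eq_mul_div, le_div_iff₀ hω]
    linarith
  linarith [le_of_pow_le_pow_left₀ (by omega) (by positivity) hpow]

lemma mul_le_radius (hs : IsSmallScale m c L x) (hρ : 0 < ρ)
    (hsum : m * x ^ (m + 1) / ρ + unitBallVolume (m + 1) * ρ ^ m ≤ slackConst m * x ^ m) :
    m / slackConst m * x ≤ ρ := by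
  have hω := unitBallVolume_pos (m + 1)
  have hx := hs.pos
  have hle : m * x ^ (m + 1) / ρ ≤ slackConst m * x ^ m :=
    (le_add_of_nonneg_right (by positivity)).trans hsum
  rw [div_le_iff₀ hρ] at hle
  rw [div_mul_eq_mul_div, div_le_iff₀ (zero_lt_one.trans_le (one_le_slackConst m))]
  refine le_of_mul_le_mul_left ?_ (pow_pos hx m)
  linear_combination hle

lemma half_le (hs : IsSmallScale m c L x) (hm : 1 ≤ m) (hρ : m / slackConst m * x ≤ ρ) {g : ℝ}
    (hg : unitBallVolume m * (ρ / 4) ^ m * (L - g) ≤ x ^ (m + 1)) : L / 2 ≤ g := by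
  have hω := unitBallVolume_pos m
  have hx := hs.pos
  have hC := zero_lt_one.trans_le (one_le_slackConst m)
  by_contra! hlt
  have hpos : 0 < L - g := by linarith [hs.two_mul_le]
  have hbad : L - g ≤ L / 2 := by
    refine le_trans ?_ hs.mul_le
    refine le_of_mul_le_mul_left ?_
      (show 0 < unitBallVolume m * (m / slackConst m * x / 4) ^ m by positivity)
    calc unitBallVolume m * (m / slackConst m * x / 4) ^ m * (L - g)
        ≤ unitBallVolume m * (ρ / 4) ^ m * (L - g) := by gcongr
      _ ≤ x ^ (m + 1) := hg
      _ = _ := by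
        rw [div_pow, mul_pow, div_pow, div_pow, pow_succ]
        field_simp
  linarith

end IsSmallScale

theorem SliceData.eucIso_le_of_isSmallScale {m : ℕ} (hm : 1 ≤ m) {L c x : ℝ} {A : ℝ → ℝ}
    {P m₀ M : ℝ} (h : SliceData (Ico 0 L) (truncEucIso m c) A (x ^ (m + 1)) P m₀ M)
    (hs : IsSmallScale m c L x) : eucIso (m + 1) (x ^ (m + 1)) ≤ P := by
  by_contra! hlt
  have hx := hs.pos
  have hL : 0 < L := by linarith [hs.two_mul_le]
  have hvol : volume.real (Ico 0 L) = L := by simp [hL.le]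
  have hfin : volume (Ico 0 L) ≠ ∞ := by simp
  have hv : 0 < x ^ (m + 1) := by positivity
  have hM := h.max_pos hv
  have hρ := ballRadius_pos m hM
  have hslack := eucIso_succ_pow_add m hx
  have hmin : 2 * m₀ ≤ x ^ m := by
    have hle := h.min_mul_le hfin
    rw [hvol] at hle
    refine le_of_mul_le_mul_right ?_ hx
    nlinarith [mul_le_mul_of_nonneg_left hs.two_mul_le h.nonneg, pow_succ x m]
  have hΨ : ∀ a ≤ M, truncEucIso m c a = eucIso m a := fun a ha =>
    truncEucIso_of_le (ha.trans (by
      linarith [h.two_mul_sub_le, hs.mul_pow_le, pow_pos hx m, h.nonneg, hM]))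
  have hopt := h.optimum_sub_le hm hΨ hM
  have hball := eucIso_succ_le (m := m) hv hρ
  have hsum : m * x ^ (m + 1) / ballRadius m M + unitBallVolume (m + 1) * ballRadius m M ^ m ≤
      slackConst m * x ^ m := by linarith
  rcases h.nonneg.eq_or_lt with rfl | hm₀
  · linarith
  have hgood := hs.half_le hm (hs.mul_le_radius hρ hsum)
    (hvol ▸ h.unitBallVolume_mul_measureReal_le hm hfin hρ)
  have hgain := h.optimum_add_gain_le hm hΨ hm₀ hfin
  have hradius : 10 * ballRadius m M ≤ L / 2 := by linarith [hs.mul_radius_le hm hL hρ hsum]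
  have hsave := mul_nonneg (div_nonneg (eucIso_nonneg m m₀) zero_le_four)
    (sub_nonneg.2 (hradius.trans hgood))
  linarith

end SmallVolumes

section LargeVolumes

/-- The profile `κ a ^ β`, truncated to volumes at least `c`. -/
def truncPowerIso (β κ c a : ℝ) : ℝ := if c ≤ a then κ * max a 0 ^ β else 0

lemma truncPowerIso_nonneg {β κ : ℝ} (hκ : 0 ≤ κ) (c a : ℝ) : 0 ≤ truncPowerIso β κ c a := by
  unfold truncPowerIso
  split_ifs <;> positivity

lemma measurable_truncPowerIso (β κ c : ℝ) : Measurable (truncPowerIso β κ c) :=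
  Measurable.ite measurableSet_Ici (by fun_prop) measurable_const

lemma truncPowerIso_le_eucIso (n : ℕ) (v : ℝ) :
    truncPowerIso ((n - 1) / n) (n * unitBallVolume n ^ (1 / n : ℝ)) 1 v ≤ eucIso n v := by
  unfold truncPowerIso
  split_ifs with h
  · rw [eucIso_of_pos (by linarith), max_eq_left (by linarith)]
  · exact eucIso_nonneg n v

-- Bernoulli's inequality for the exponent `1 - β`.
lemma one_add_mul_sub_sq_le_rpow {β z : ℝ} (h0 : 0 ≤ β) (h1 : β ≤ 1) (hz : |z| ≤ 1 / 2) :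
    1 + β * z - z ^ 2 / 2 ≤ (1 + z) ^ β := by
  obtain ⟨hz1, hz2⟩ := abs_le.1 hz
  have hpos : 0 < 1 + z := by linarith
  have hbernoulli := rpow_one_add_le_one_add_mul_self (s := z) (p := 1 - β) (by linarith)
    (by linarith) (by linarith)
  have hden : 1 / 2 ≤ 1 + (1 - β) * z := by nlinarith
  have hle : 1 + z ≤ (1 + z) ^ β * (1 + (1 - β) * z) := by
    calc 1 + z = (1 + z) ^ β * (1 + z) ^ (1 - β) := by rw [← rpow_add hpos]; simp
      _ ≤ _ := by gcongr
  refine le_of_mul_le_mul_right (hle.trans' ?_) (by linarith : (0 : ℝ) < 1 + (1 - β) * z)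
  have hvar : β * (1 - β) ≤ 1 / 4 := by nlinarith [sq_nonneg (β - 1 / 2)]
  nlinarith [mul_nonneg (sq_nonneg z) (sub_nonneg.2 hvar),
    mul_nonneg (sq_nonneg z) (sub_nonneg.2 hden)]

lemma mul_rpow_add_mul_sub_le {β a b w : ℝ} (h0 : 0 ≤ β) (h1 : β ≤ 1) (ha : 0 < a)
    (hw : w ≤ 1 / 2) (hb : |b - a| ≤ w * a) :
    a ^ β * (1 - w ^ 2 / 2) + a ^ β * β / a * (b - a) ≤ b ^ β := by
  set z := (b - a) / a with hz
  have hzw : |z| ≤ w := by rwa [hz, abs_div, abs_of_pos ha, div_le_iff₀ ha]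
  have hbz : b = a * (1 + z) := by rw [hz]; field_simp; ring
  have hz1 := (abs_le.1 (hzw.trans hw)).1
  have hsq : z ^ 2 ≤ w ^ 2 := sq_le_sq' (abs_le.1 hzw).1 (abs_le.1 hzw).2
  calc a ^ β * (1 - w ^ 2 / 2) + a ^ β * β / a * (b - a)
      = a ^ β * (1 + β * z - w ^ 2 / 2) := by rw [hbz]; field_simp; ring
    _ ≤ a ^ β * (1 + β * z - z ^ 2 / 2) := by gcongr
    _ ≤ a ^ β * (1 + z) ^ β := by
        gcongr
        exact one_add_mul_sub_sq_le_rpow h0 h1 (hzw.trans hw)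
    _ = b ^ β := by rw [hbz, mul_rpow ha.le (by linarith)]

namespace SliceData

variable {I : Set ℝ} {Ψ A : ℝ → ℝ} {v P m₀ M β κ c : ℝ}

-- The calibration is constant: its component along the circle pays the slack `w ^ 2` lost by the
-- other one.
lemma mul_le_of_oscillation_le (h : SliceData I (truncPowerIso β κ c) A v P m₀ M) (h0 : 0 ≤ β)
    (h1 : β ≤ 1) (hκ : 0 ≤ κ) {a L w : ℝ} (ha : 0 < a) (hI : volume I ≠ ∞)
    (hL : volume.real I = L) (hv : v = a * L) (hc : 2 * c ≤ a) (hma : m₀ ≤ a) (haM : a ≤ M)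
    (hw : w ≤ 1 / 2) (hosc : M - m₀ = w * a) (hκa : L * (κ * a ^ β) ≤ a) :
    L * (κ * a ^ β) ≤ P := by
  have : IsFiniteMeasure (volume.restrict I) := isFiniteMeasure_restrict.2 hI
  have hL0 : 0 ≤ L := hL ▸ measureReal_nonneg
  have : 0 ≤ w := nonneg_of_mul_nonneg_left (hosc ▸ sub_nonneg.2 h.le) ha
  have hσ : 0 ≤ 1 - w ^ 2 := by nlinarith
  have hcal : IsCalibration (fun _ => w) fun _ => 1 - w ^ 2 :=
    ⟨continuous_const, continuous_const, fun _ => hσ, fun _ => by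
      nlinarith [mul_nonneg (sq_nonneg w) hσ]⟩
  have hle := h.integral_add_integral_le _ _ hcal
  rw [intervalIntegral.integral_const, smul_eq_mul, hosc] at hle
  have hpt : ∀ᵐ t ∂volume.restrict I, (1 - w ^ 2) * (κ * (a ^ β * (1 - w ^ 2 / 2)) +
      κ * (a ^ β * β / a) * (A t - a)) ≤ (1 - w ^ 2) * truncPowerIso β κ c (A t) := by
    filter_upwards [h.mem] with t ht
    have hdist : |A t - a| ≤ w * a := by
      rw [← hosc, abs_le]
      constructor <;> linarith [ht.1, ht.2]
    have hhalf : a / 2 ≤ A t := by nlinarith [abs_le.1 hdist]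
    rw [truncPowerIso, if_pos (by linarith), max_eq_left (by linarith), mul_assoc κ, ← mul_add]
    have hpow := mul_rpow_add_mul_sub_le h0 h1 ha hw hdist
    gcongr
  have hdev : Integrable (fun t => A t - a) (volume.restrict I) :=
    h.integrable.sub (integrable_const _)
  have hlow := integral_mono_ae (((integrable_const _).add (hdev.const_mul _)).const_mul _)
    (h.integrable_mul _ _ hcal) hpt
  rw [integral_const_mul, integral_add' (integrable_const _) (hdev.const_mul _), setIntegral_const,
    integral_const_mul, integral_sub h.integrable (integrable_const _), setIntegral_const, hL,
    h.integral_eq, smul_eq_mul, smul_eq_mul, hv, mul_comm a L, sub_self, mul_zero, add_zero] at hlow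
  have hslack : w ^ 2 * (L * (κ * a ^ β)) ≤ w ^ 2 * a := by gcongr
  have hquad : 0 ≤ w ^ 2 * (L * (κ * a ^ β)) := by positivity
  have hquart : 0 ≤ w ^ 2 * w ^ 2 * (L * (κ * a ^ β)) := by positivity
  linarith

theorem le_of_large {L : ℝ} (h0 : 0 ≤ β) (h1 : β ≤ 1) (hκ : 0 ≤ κ) (hc : 0 < c) (hL : 0 < L)
    (h : SliceData (Ico 0 L) (truncPowerIso β κ c) A v P m₀ M) (hcv : 2 * c ≤ v / L)
    (hκv : L * (κ * (v / L) ^ β) ≤ v / L) : L * (κ * (v / L) ^ β) ≤ P := by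
  have ha : 0 < v / L := by linarith
  have hfin : volume (Ico 0 L) ≠ ∞ := by simp
  have hvol : volume.real (Ico 0 L) = L := by simp [hL.le]
  have hma : m₀ ≤ v / L := (le_div_iff₀ hL).2 (hvol ▸ h.min_mul_le hfin)
  have haM : v / L ≤ M := (div_le_iff₀ hL).2 (hvol ▸ h.le_max_mul hfin)
  rcases le_or_gt (v / L / 2) (M - m₀) with hosc | hosc
  · linarith [h.two_mul_sub_le]
  · exact h.mul_le_of_oscillation_le h0 h1 hκ ha hfin hvol (div_mul_cancel₀ v hL.ne').symm hcv hma
      haM ((div_le_iff₀ ha).2 (by linarith)) (div_mul_cancel₀ _ ha.ne').symm hκv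

end SliceData

end LargeVolumes

section Products

variable {V : Type*} [NormedAddCommGroup V] [InnerProductSpace ℝ V] [FiniteDimensional ℝ V]
  [MeasurableSpace V] [BorelSpace V] {D Λ : Set V}

theorem RelaxedIsoperimetric.circle_small {m : ℕ} (hm : 1 ≤ m) {c L : ℝ} (hc : 0 < c) (hL : 0 < L)
    (hD : MeasurableSet D) (h : RelaxedIsoperimetric D Λ (truncEucIso m c)) :
    ∃ c' > 0, RelaxedIsoperimetric (prodDom (Ico 0 L) D) (prodPeriods {L} Λ)
      (truncEucIso (m + 1) c') := by
  obtain ⟨c', hc', hscale⟩ :=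
    mem_nhdsGT_iff_exists_Ioc_subset.1 (eventually_isSmallScale hm hc hL)
  refine ⟨c', hc', h.prod (truncEucIso_nonneg m c) (measurable_truncEucIso m c) measurableSet_Ico
    (by simpa using hL) hD (by simpa using hL) (oscillationBound_Ico L) fun A v P m₀ M hs => ?_⟩
  unfold truncEucIso
  split_ifs with hvc
  · rcases le_or_gt v 0 with hv | hv
    · rw [eucIso_of_nonpos hv]
      exact hs.nonneg_perimeter
    · have hvx : (v ^ (1 / ((m : ℝ) + 1))) ^ (m + 1) = v := by
        rw [one_div]
        exact_mod_cast Real.rpow_inv_natCast_pow hv.le m.succ_ne_zero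
      rw [← hvx] at hs ⊢
      exact hs.eucIso_le_of_isSmallScale hm (hscale ⟨hv, hvc⟩)
  · exact hs.nonneg_perimeter

theorem RelaxedIsoperimetric.circle_large {β κ c L : ℝ} (h0 : 0 ≤ β) (h1 : β < 1) (hκ : 0 ≤ κ)
    (hc : 0 < c) (hL : 0 < L) (hD : MeasurableSet D)
    (h : RelaxedIsoperimetric D Λ (truncPowerIso β κ c)) :
    ∃ c' > 0, RelaxedIsoperimetric (prodDom (Ico 0 L) D) (prodPeriods {L} Λ)
      (truncPowerIso β (κ * L ^ (1 - β)) c') := by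
  obtain ⟨x₀, hx₀⟩ := (((_root_.tendsto_rpow_atTop (y := 1 - β) (by linarith)).eventually_ge_atTop
    (L * κ)).and (eventually_ge_atTop (2 * c))).exists_forall_of_atTop
  refine ⟨max (x₀ * L) 1, by positivity, h.prod (truncPowerIso_nonneg hκ c)
    (measurable_truncPowerIso β κ c) measurableSet_Ico (by simpa using hL) hD (by simpa using hL)
    (oscillationBound_Ico L) fun A v P m₀ M hs => ?_⟩
  unfold truncPowerIso
  split_ifs with hv
  · have hv0 : 0 < v := zero_lt_one.trans_le ((le_max_right _ _).trans hv)
    obtain ⟨hκx, hcx⟩ := hx₀ _ ((le_div_iff₀ hL).2 ((le_max_left _ _).trans hv))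
    have hx : 0 < v / L := by positivity
    have hκv : L * (κ * (v / L) ^ β) ≤ v / L := by
      calc L * (κ * (v / L) ^ β) = L * κ * (v / L) ^ β := by ring
        _ ≤ (v / L) ^ (1 - β) * (v / L) ^ β := by gcongr
        _ = v / L := by rw [← rpow_add hx]; simp
    refine le_trans (le_of_eq ?_) (hs.le_of_large h0 h1.le hκ hc hL hcx hκv)
    rw [max_eq_left hv0.le, div_rpow hv0.le hL.le, rpow_sub hL, Real.rpow_one]
    ring
  · exact hs.nonneg_perimeter

lemma relaxedIsoperimetric_cylinder_small {m : ℕ} (hm : 1 ≤ m) {L : ℝ} (hL : 0 < L) :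
    ∃ c > 0, RelaxedIsoperimetric (prodDom (Ico 0 L) (univ : Set (EucSp m))) (prodPeriods {L} ∅)
      (truncEucIso (m + 1) c) :=
  RelaxedIsoperimetric.circle_small hm one_pos hL MeasurableSet.univ
    ((relaxedIsoperimetric_eucSp hm).mono (truncEucIso_le m 1))

lemma relaxedIsoperimetric_torus_small {n : ℕ} (hn : 1 ≤ n) {L₁ L₂ : ℝ} (h₁ : 0 < L₁)
    (h₂ : 0 < L₂) :
    ∃ c > 0, RelaxedIsoperimetric
      (prodDom (Ico 0 L₁) (prodDom (Ico 0 L₂) (univ : Set (EucSp n))))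
      (prodPeriods {L₁} (prodPeriods {L₂} ∅)) (truncEucIso (n + 2) c) := by
  obtain ⟨c, hc, h⟩ := relaxedIsoperimetric_cylinder_small hn h₂
  exact RelaxedIsoperimetric.circle_small (by omega) hc h₁
    (measurableSet_prodDom measurableSet_Ico MeasurableSet.univ) h

lemma relaxedIsoperimetric_torus_large {n : ℕ} (hn : 1 ≤ n) {L₁ L₂ : ℝ} (h₁ : 0 < L₁)
    (h₂ : 0 < L₂) :
    ∃ c > 0, RelaxedIsoperimetric
      (prodDom (Ico 0 L₁) (prodDom (Ico 0 L₂) (univ : Set (EucSp n))))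
      (prodPeriods {L₁} (prodPeriods {L₂} ∅)) (truncPowerIso ((n - 1) / n)
        (n * unitBallVolume n ^ (1 / n : ℝ) * L₂ ^ (1 - ((n - 1) / n : ℝ)) *
          L₁ ^ (1 - ((n - 1) / n : ℝ))) c) := by
  have hn0 : (1 : ℝ) ≤ n := by exact_mod_cast hn
  have hβ0 : (0 : ℝ) ≤ (n - 1) / n := div_nonneg (by linarith) (by linarith)
  have hβ1 : ((n : ℝ) - 1) / n < 1 := (div_lt_one (by linarith)).2 (by linarith)
  have hω := unitBallVolume_pos n
  obtain ⟨c, hc, h⟩ := RelaxedIsoperimetric.circle_large hβ0 hβ1 (by positivity) one_pos h₂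
    MeasurableSet.univ ((relaxedIsoperimetric_eucSp hn).mono (truncPowerIso_le_eucIso n))
  exact RelaxedIsoperimetric.circle_large hβ0 hβ1 (by positivity) hc h₁
    (measurableSet_prodDom measurableSet_Ico MeasurableSet.univ) h

end Products

section Partition

variable {V : Type*} [MeasurableSpace V]

lemma exists_small_partition [PseudoMetricSpace V] [TopologicalSpace.SeparableSpace V]
    [OpensMeasurableSpace V] {A : Set V} (hA : MeasurableSet A) {ε : ℝ} (hε : 0 < ε) :
    ∃ B : ℕ → Set V, (∀ i, MeasurableSet (B i)) ∧ Pairwise (fun i j => Disjoint (B i) (B j)) ∧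
      ⋃ i, B i = A ∧ ∀ i, ∀ x ∈ B i, ∀ y ∈ B i, dist x y < ε := by
  rcases A.eq_empty_or_nonempty with rfl | ⟨x₀, -⟩
  · exact ⟨fun _ => ∅, by simp, fun i j _ => by simp, by simp, by simp⟩
  have : Nonempty V := ⟨x₀⟩
  set u := TopologicalSpace.denseSeq V
  set B := disjointed fun i => Metric.ball (u i) (ε / 2)
  have hB : ⋃ i, B i = univ := by
    rw [iUnion_disjointed, eq_univ_iff_forall]
    intro x
    obtain ⟨i, hi⟩ := (TopologicalSpace.denseRange_denseSeq V).exists_dist_lt x (half_pos hε)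
    exact mem_iUnion.2 ⟨i, hi⟩
  refine ⟨fun i => A ∩ B i,
    fun i => hA.inter (MeasurableSet.disjointed (fun _ => Metric.isOpen_ball.measurableSet) i),
    fun i j hij => (disjoint_disjointed _ hij).mono inter_subset_right inter_subset_right,
    by rw [← inter_iUnion, hB, inter_univ], fun i x hx y hy => ?_⟩
  have hxu := disjointed_subset _ i hx.2
  have hyu := disjointed_subset _ i hy.2
  rw [Metric.mem_ball] at hxu hyu
  linarith [dist_triangle_right x y (u i)]

lemma hausdorffMeasure_image_of_locallyIsometric [MetricSpace V] [CompleteSpace V]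
    [TopologicalSpace.SeparableSpace V] [BorelSpace V] {Y : Type*} [EMetricSpace Y]
    [MeasurableSpace Y] [BorelSpace Y] {p : V → Y} (hp : Continuous p) {δ : ℝ} (hδ : 0 < δ)
    (hiso : ∀ x y, dist x y < δ → edist (p x) (p y) = edist x y) {d : ℝ} (hd : 0 ≤ d)
    {A : Set V} (hA : MeasurableSet A) (hinj : InjOn p A) : μH[d] (p '' A) = μH[d] A := by
  have : SecondCountableTopology V := UniformSpace.secondCountable_of_separable V
  obtain ⟨B, hBm, hBd, rfl, hB⟩ := exists_small_partition hA hδ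
  have hpiece (i : ℕ) : μH[d] (p '' B i) = μH[d] (B i) := by
    have hres : Isometry fun x : B i => p x := fun x y => hiso x y (hB i _ x.2 _ y.2)
    have hval : Isometry (Subtype.val : B i → V) := isometry_subtype_coe
    have h₁ := hres.hausdorffMeasure_image (Or.inl hd) univ
    have h₂ := hval.hausdorffMeasure_image (Or.inl hd) univ
    rw [image_univ, ← image_eq_range] at h₁
    rw [image_univ, Subtype.range_coe] at h₂
    rw [h₁, h₂]
  have hinj' (i : ℕ) : InjOn p (B i) := hinj.mono (subset_iUnion B i)
  rw [image_iUnion, measure_iUnion, measure_iUnion hBd hBm, tsum_congr hpiece]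
  · exact fun i j hij => (hBd hij).image hinj (subset_iUnion B i) (subset_iUnion B j)
  · exact fun i => (hBm i).image_of_continuousOn_injOn hp.continuousOn (hinj' i)

lemma euclideanHausdorffMeasure_image_of_locallyIsometric [MetricSpace V] [CompleteSpace V]
    [TopologicalSpace.SeparableSpace V] [BorelSpace V] {Y : Type*} [EMetricSpace Y]
    [MeasurableSpace Y] [BorelSpace Y] {p : V → Y} (hp : Continuous p) {δ : ℝ} (hδ : 0 < δ)
    (hiso : ∀ x y, dist x y < δ → edist (p x) (p y) = edist x y) (d : ℕ)
    {A : Set V} (hA : MeasurableSet A) (hinj : InjOn p A) : μHE[d] (p '' A) = μHE[d] A := by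
  rw [Measure.euclideanHausdorffMeasure_def, Measure.euclideanHausdorffMeasure_def,
    Measure.smul_apply, Measure.smul_apply,
    hausdorffMeasure_image_of_locallyIsometric hp hδ hiso (Nat.cast_nonneg d) hA hinj]

end Partition

lemma exists_mem_frontier_of_isPreconnected {X : Type*} [TopologicalSpace X] {s A : Set X}
    (hs : IsPreconnected s) {x y : X} (hx : x ∈ s) (hy : y ∈ s) (hxA : x ∈ A) (hyA : y ∉ A) :
    ∃ z ∈ s, z ∈ frontier A := by
  by_contra! h
  have hcov : s ⊆ interior A ∪ interior Aᶜ := fun z hz => by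
    by_contra! hz'
    rw [mem_union, interior_compl, mem_compl_iff, not_or, not_not] at hz'
    exact h z hz ⟨hz'.2, hz'.1⟩
  obtain ⟨z, -, hint, hext⟩ := hs _ _ isOpen_interior isOpen_interior hcov
    ⟨x, hx, (hcov hx).resolve_right fun h' => interior_subset h' hxA⟩
    ⟨y, hy, (hcov hy).resolve_left fun h' => hyA (interior_subset h')⟩
  exact interior_subset hext (interior_subset hint)

section Sweep

variable {V : Type*} [NormedAddCommGroup V]

/-- The points from which `A` is reached by a translation by `s • e` with `0 ≤ s ≤ h`. -/
def sweep [NormedSpace ℝ V] (A : Set V) (e : V) (h : ℝ) : Set V :=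
  {x | ∃ s ∈ Icc 0 h, x + s • e ∈ A}

section NormedSpace

variable [NormedSpace ℝ V] {A : Set V} {e : V} {h : ℝ}

lemma sweep_iUnion {ι : Type*} (A : ι → Set V) (e : V) (h : ℝ) :
    sweep (⋃ i, A i) e h = ⋃ i, sweep (A i) e h := by
  ext x
  simp only [sweep, mem_ofPred_eq, mem_iUnion]
  tauto

lemma dist_le_of_mem_sweep (he : ‖e‖ = 1) {ε : ℝ} (hA : ∀ x ∈ A, ∀ y ∈ A, dist x y < ε)
    {y a : V} (hy : y ∈ sweep A e h) (ha : a ∈ A) : dist y a ≤ h + ε := by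
  obtain ⟨s, hs, hys⟩ := hy
  have hstep : dist y (y + s • e) = s := by
    rw [dist_self_add_right, norm_smul, he, mul_one, Real.norm_of_nonneg hs.1]
  linarith [dist_triangle y (y + s • e) a, hA _ hys a ha, hs.2]

lemma abs_indicator_add_smul_sub_le {K : Set V} (hAK : frontier A ⊆ K) (e : V) (hh : 0 ≤ h)
    (y : V) : |A.indicator (1 : V → ℝ) (y + h • e) - A.indicator 1 y| ≤
      (sweep K e h).indicator 1 y := by
  set γ := (fun s : ℝ => y + s • e) '' Icc 0 h
  have hγ : IsPreconnected γ := isPreconnected_Icc.image _ (by fun_prop)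
  have hstart : y ∈ γ := ⟨0, ⟨le_rfl, hh⟩, by simp⟩
  have hend : y + h • e ∈ γ := ⟨h, ⟨hh, le_rfl⟩, rfl⟩
  have hsweep (hfr : ∃ z ∈ γ, z ∈ frontier A) : y ∈ sweep K e h := by
    obtain ⟨_, ⟨s, hs, rfl⟩, hf⟩ := hfr
    exact ⟨s, hs, hAK hf⟩
  have hnonneg : 0 ≤ (sweep K e h).indicator (1 : V → ℝ) y :=
    indicator_nonneg (fun _ _ => zero_le_one) _
  by_cases hyA : y ∈ A <;> by_cases hyhA : y + h • e ∈ A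
  · simpa [hyA, hyhA] using hnonneg
  · have := hsweep (exists_mem_frontier_of_isPreconnected hγ hstart hend hyA hyhA)
    simp [hyA, hyhA, this]
  · have := hsweep (exists_mem_frontier_of_isPreconnected hγ hend hstart hyhA hyA)
    simp [hyA, hyhA, this]
  · simpa [hyA, hyhA] using hnonneg

end NormedSpace

section Volume

lemma toSpanUnitSingleton_symm_orthogonalProjectionOnto [InnerProductSpace ℝ V] {e : V}
    (he : ‖e‖ = 1) (x : V) :
    (LinearIsometryEquiv.toSpanUnitSingleton (𝕜 := ℝ) e he).symm
      ((ℝ ∙ e).orthogonalProjectionOnto x) = inner ℝ e x := by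
  rw [LinearIsometryEquiv.symm_apply_eq]
  apply Subtype.ext
  rw [LinearIsometryEquiv.toSpanUnitSingleton_apply]
  exact Submodule.starProjection_unit_singleton ℝ he x

variable [InnerProductSpace ℝ V] [FiniteDimensional ℝ V] [MeasurableSpace V] [BorelSpace V]

lemma euclideanHausdorffMeasure_image_orthogonalProjectionOnto_le (m : ℕ) (K : Submodule ℝ V)
    (A : Set V) : μHE[m] (K.orthogonalProjectionOnto '' A) ≤ μHE[m] A := by
  rw [Measure.euclideanHausdorffMeasure_def, Measure.euclideanHausdorffMeasure_def,
    Measure.smul_apply, Measure.smul_apply]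
  gcongr
  exact hausdorffMeasure_orthogonalProjectionOnto_le _ _ _ (Nat.cast_nonneg m)

variable {m : ℕ} {e : V} {h : ℝ} {A : Set V}

lemma volume_slab_le (hV : Module.finrank ℝ V = m + 1) (he : ‖e‖ = 1) (a b : ℝ) (A : Set V) :
    volume {x | inner ℝ e x ∈ Icc a b ∧
      (ℝ ∙ e)ᗮ.orthogonalProjectionOnto x ∈ (ℝ ∙ e)ᗮ.orthogonalProjectionOnto '' A} ≤
      ENNReal.ofReal (b - a) * μHE[m] A := by
  set K := ℝ ∙ e
  have hfr : Module.finrank ℝ Kᗮ = m := by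
    have : Fact (Module.finrank ℝ V = m + 1) := ⟨hV⟩
    exact Submodule.finrank_orthogonal_span_singleton (norm_ne_zero_iff.1 (by simp [he]))
  have hprod := K.measurePreserving_measurableEquivProd (0 : V)
  rw [InnerProductSpace.euclideanHausdorffMeasure_eq_volume] at hprod
  set T := Kᗮ.orthogonalProjectionOnto '' A
  let φ := LinearIsometryEquiv.toSpanUnitSingleton (𝕜 := ℝ) e he
  have hsub : {x | inner ℝ e x ∈ Icc a b ∧ Kᗮ.orthogonalProjectionOnto x ∈ T} ⊆
      K.measurableEquivProd (0 : V) ⁻¹' ((φ.symm ⁻¹' Icc a b) ×ˢ toMeasurable volume T) := by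
    rintro x ⟨hx, hxT⟩
    simp only [mem_preimage, Submodule.measurableEquivProd_apply, vsub_eq_sub, sub_zero]
    refine ⟨?_, subset_toMeasurable _ _ hxT⟩
    rwa [← toSpanUnitSingleton_symm_orthogonalProjectionOnto he] at hx
  have hIcc : MeasurableSet (φ.symm ⁻¹' Icc a b) :=
    φ.symm.continuous.measurable measurableSet_Icc
  refine (measure_mono hsub).trans ?_
  rw [hprod.measure_preimage (hIcc.prod (measurableSet_toMeasurable _ _)).nullMeasurableSet,
    Measure.volume_eq_prod, Measure.prod_prod, measure_toMeasurable,
    φ.symm.measurePreserving.measure_preimage measurableSet_Icc.nullMeasurableSet,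
    Real.volume_Icc, ← InnerProductSpace.euclideanHausdorffMeasure_eq_volume, hfr]
  gcongr
  exact euclideanHausdorffMeasure_image_orthogonalProjectionOnto_le m _ A

lemma volume_sweep_le_of_dist_lt (hV : Module.finrank ℝ V = m + 1) (he : ‖e‖ = 1) {ε : ℝ}
    (hA : ∀ x ∈ A, ∀ y ∈ A, dist x y < ε) :
    volume (sweep A e h) ≤ ENNReal.ofReal (h + 2 * ε) * μHE[m] A := by
  rcases A.eq_empty_or_nonempty with rfl | ⟨y, hy⟩
  · simp [sweep]
  have hsub : sweep A e h ⊆ {x | inner ℝ e x ∈ Icc (inner ℝ e y - h - ε) (inner ℝ e y + ε) ∧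
      (ℝ ∙ e)ᗮ.orthogonalProjectionOnto x ∈ (ℝ ∙ e)ᗮ.orthogonalProjectionOnto '' A} := by
    rintro x ⟨s, hs, hx⟩
    refine ⟨?_, x + s • e, hx, ?_⟩
    · have hinner : |inner ℝ e (x + s • e - y)| ≤ ε := by
        refine (abs_real_inner_le_norm _ _).trans ?_
        rw [he, one_mul, ← dist_eq_norm]
        exact (hA _ hx _ hy).le
      rw [inner_sub_right, inner_add_right, inner_smul_right, real_inner_self_eq_norm_sq, he,
        abs_le] at hinner
      constructor <;> linarith [hs.1, hs.2, hinner.1, hinner.2]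
    · rw [map_add, map_smul, Submodule.orthogonalProjectionOnto_orthogonal_apply_eq_zero
        (Submodule.mem_span_singleton_self e), smul_zero, add_zero]
  refine (measure_mono hsub).trans ((volume_slab_le hV he _ _ A).trans_eq ?_)
  congr 2
  ring

lemma volume_sweep_le (hV : Module.finrank ℝ V = m + 1) (he : ‖e‖ = 1) (hh : 0 < h)
    (hA : MeasurableSet A) : volume (sweep A e h) ≤ ENNReal.ofReal h * μHE[m] A := by
  by_cases hfin : μHE[m] A = ∞
  · rw [hfin, ENNReal.mul_top (by simpa using hh)]
    exact le_top
  have hbound : ∀ ε > 0, volume (sweep A e h) ≤ ENNReal.ofReal (h + 2 * ε) * μHE[m] A := by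
    intro ε hε
    obtain ⟨B, hBm, hBd, rfl, hB⟩ := exists_small_partition hA hε
    rw [sweep_iUnion, measure_iUnion hBd hBm, ← ENNReal.tsum_mul_left]
    exact (measure_iUnion_le _).trans
      (ENNReal.tsum_le_tsum fun i => volume_sweep_le_of_dist_lt hV he (hB i))
  have hlim : Tendsto (fun ε : ℝ => ENNReal.ofReal (h + 2 * ε) * μHE[m] A) (𝓝[>] 0)
      (𝓝 (ENNReal.ofReal (h + 2 * 0) * μHE[m] A)) :=
    (ENNReal.Tendsto.mul_const ((ENNReal.continuous_ofReal.comp (by fun_prop)).tendsto 0)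
      (Or.inr hfin)).mono_left nhdsWithin_le_nhds
  rw [mul_zero, add_zero] at hlim
  exact ge_of_tendsto hlim (eventually_mem_nhdsWithin.mono hbound)

variable {ψ : V → ℝ} {C : ℝ≥0} {z : V} {r : ℝ}

lemma setLIntegral_sweep_le_of_dist_lt (hV : Module.finrank ℝ V = m + 1) (he : ‖e‖ = 1)
    (hh : 0 < h) (hh1 : h ≤ 1) (hA : MeasurableSet A) (hAd : ∀ x ∈ A, ∀ y ∈ A, dist x y < h)
    (hψ : LipschitzWith C ψ) (hsupp : ∀ y, r ≤ dist y z → ψ y = 0) :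
    ∫⁻ y in sweep A e h, ENNReal.ofReal (ψ y) ≤
      ENNReal.ofReal h * ∫⁻ a in A ∩ Metric.closedBall z (r + 2),
        ENNReal.ofReal (ψ a + 2 * C * h) ∂μHE[m] := by
  by_cases! hmeet : ∀ y ∈ sweep A e h, r ≤ dist y z
  · refine (setLIntegral_mono (g := fun _ => 0) measurable_const fun y hy => ?_).trans (by simp)
    rw [hsupp y (hmeet y hy), ENNReal.ofReal_zero]
  obtain ⟨y₀, hy₀, hy₀z⟩ := hmeet
  have hsub : A ⊆ Metric.closedBall z (r + 2) := fun a ha => by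
    rw [Metric.mem_closedBall]
    linarith [dist_le_of_mem_sweep he hAd hy₀ ha, dist_triangle_left a z y₀]
  rw [inter_eq_left.2 hsub]
  set c : ℝ≥0∞ := ⨅ a ∈ A, ENNReal.ofReal (ψ a + 2 * C * h)
  have hupper : ∫⁻ y in sweep A e h, ENNReal.ofReal (ψ y) ≤ c * volume (sweep A e h) := by
    rw [← setLIntegral_const]
    refine setLIntegral_mono measurable_const fun y hy => le_iInf₂ fun a ha =>
      ENNReal.ofReal_le_ofReal ?_
    have hlip := hψ.dist_le_mul y a
    have hdist : (C : ℝ) * dist y a ≤ C * (h + h) := by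
      gcongr
      exact dist_le_of_mem_sweep he hAd hy ha
    rw [Real.dist_eq] at hlip
    linarith [le_abs_self (ψ y - ψ a)]
  have hlower : c * μHE[m] A ≤ ∫⁻ a in A, ENNReal.ofReal (ψ a + 2 * C * h) ∂μHE[m] := by
    rw [← setLIntegral_const]
    exact setLIntegral_mono' hA fun a ha => iInf₂_le a ha
  calc _ ≤ c * volume (sweep A e h) := hupper
    _ ≤ c * (ENNReal.ofReal h * μHE[m] A) := by gcongr; exact volume_sweep_le hV he hh hA
    _ = ENNReal.ofReal h * (c * μHE[m] A) := by ring
    _ ≤ _ := by gcongr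

lemma setLIntegral_sweep_le (hV : Module.finrank ℝ V = m + 1) (he : ‖e‖ = 1) (hh : 0 < h)
    (hh1 : h ≤ 1) (hA : MeasurableSet A) (hψ : LipschitzWith C ψ) (hψ0 : ∀ y, 0 ≤ ψ y)
    (hsupp : ∀ y, r ≤ dist y z → ψ y = 0) :
    ∫⁻ y in sweep A e h, ENNReal.ofReal (ψ y) ≤
      ENNReal.ofReal h * (∫⁻ a in A, ENNReal.ofReal (ψ a) ∂μHE[m] +
        ENNReal.ofReal (2 * C * h) * μHE[m] (A ∩ Metric.closedBall z (r + 2))) := by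
  have hlocal : ∫⁻ y in sweep A e h, ENNReal.ofReal (ψ y) ≤
      ENNReal.ofReal h * ∫⁻ a in A ∩ Metric.closedBall z (r + 2),
        ENNReal.ofReal (ψ a + 2 * C * h) ∂μHE[m] := by
    obtain ⟨B, hBm, hBd, rfl, hB⟩ := exists_small_partition hA hh
    rw [sweep_iUnion, iUnion_inter, lintegral_iUnion
      (fun i => (hBm i).inter Metric.isClosed_closedBall.measurableSet)
      fun i j hij => (hBd hij).mono inter_subset_left inter_subset_left, ← ENNReal.tsum_mul_left]
    exact (lintegral_iUnion_le _ _).trans (ENNReal.tsum_le_tsum fun i =>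
      setLIntegral_sweep_le_of_dist_lt hV he hh hh1 (hBm i) (hB i) hψ hsupp)
  refine hlocal.trans ?_
  have hsplit (a : V) : ENNReal.ofReal (ψ a + 2 * C * h) =
      ENNReal.ofReal (ψ a) + ENNReal.ofReal (2 * C * h) :=
    ENNReal.ofReal_add (hψ0 a) (by positivity)
  simp only [hsplit]
  rw [lintegral_add_right _ measurable_const, setLIntegral_const]
  gcongr
  exact inter_subset_left

end Volume

end Sweep

section Mollification

variable {V : Type*} [NormedAddCommGroup V] [InnerProductSpace ℝ V] [FiniteDimensional ℝ V]
  [MeasurableSpace V] [BorelSpace V] (φ : ContDiffBump (0 : V)) {A : Set V}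

/-- The mollification of the indicator of a set; such functions serve as smooth approximations in
the relaxed isoperimetric inequality. -/
def mollify (φ : ContDiffBump (0 : V)) (A : Set V) : V → ℝ :=
  convolution (φ.normed volume) (A.indicator (1 : V → ℝ)) (ContinuousLinearMap.lsmul ℝ ℝ) volume

lemma mollify_apply (A : Set V) (x : V) :
    mollify φ A x = ∫ t, φ.normed volume t * A.indicator 1 (x - t) := rfl

lemma integrable_mollify (hA : MeasurableSet A) (x : V) :
    Integrable fun t => φ.normed volume t * A.indicator (1 : V → ℝ) (x - t) := by
  refine φ.integrable_normed.mul_bdd (c := 1) ?_ (ae_of_all _ fun t => ?_)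
  · have hm : Measurable (A.indicator (1 : V → ℝ)) := measurable_one.indicator hA
    exact (hm.comp (measurable_const.sub measurable_id)).aestronglyMeasurable
  · by_cases h : x - t ∈ A <;> simp [h]

lemma mollify_nonneg (A : Set V) (x : V) : 0 ≤ mollify φ A x :=
  integral_nonneg fun t => mul_nonneg (φ.nonneg_normed t) (indicator_nonneg (by simp) _)

lemma contDiff_mollify (hA : MeasurableSet A) : ContDiff ℝ 1 (mollify φ A) :=
  φ.hasCompactSupport_normed.contDiff_convolution_left _ φ.contDiff_normed
    ((locallyIntegrable_const (1 : ℝ)).indicator hA)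

lemma mollify_eq_of_notMem_frontier {x : V} (hx : x ∉ frontier A) :
    ∃ r > 0, ∀ φ : ContDiffBump (0 : V), φ.rOut ≤ r → mollify φ A x = A.indicator 1 x := by
  have hconst : ∀ᶠ y in 𝓝 x, A.indicator (1 : V → ℝ) y = A.indicator 1 x := by
    by_cases hxA : x ∈ A
    · have hint : A ∈ 𝓝 x := by
        rw [← mem_interior_iff_mem_nhds]
        exact by_contra fun h => hx ⟨subset_closure hxA, h⟩
      filter_upwards [hint] with y hy
      rw [indicator_of_mem hxA, indicator_of_mem hy, Pi.one_apply, Pi.one_apply]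
    · have hext : Aᶜ ∈ 𝓝 x := by
        rw [← mem_interior_iff_mem_nhds, interior_compl]
        exact fun h => hx ⟨h, fun h' => hxA (interior_subset h')⟩
      filter_upwards [hext] with y hy
      rw [indicator_of_notMem hxA, indicator_of_notMem hy]
  obtain ⟨r, hr, hb⟩ := Metric.eventually_nhds_iff_ball.1 hconst
  exact ⟨r, hr, fun φ hφ => φ.normed_convolution_eq_right fun y hy =>
    hb y (Metric.ball_subset_ball hφ hy)⟩

lemma enorm_mollify_sub_le (hA : MeasurableSet A) {K : Set V} (hAK : frontier A ⊆ K) (x e : V)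
    {h : ℝ} (hh : 0 ≤ h) : ‖mollify φ A (x + h • e) - mollify φ A x‖ₑ ≤
      ∫⁻ y in sweep K e h, ENNReal.ofReal (φ.normed volume (x - y)) := by
  rw [mollify_apply, mollify_apply, ← integral_sub (integrable_mollify φ hA _)
    (integrable_mollify φ hA _)]
  refine (enorm_integral_le_lintegral_enorm _).trans ?_
  set F : V → ℝ≥0∞ := fun y => ENNReal.ofReal (φ.normed volume (x - y))
  calc _ ≤ ∫⁻ t, (sweep K e h).indicator F (x - t) := by
        refine lintegral_mono fun t => ?_
        rw [← mul_sub, enorm_mul, Real.enorm_of_nonneg (φ.nonneg_normed t)]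
        have hind := abs_indicator_add_smul_sub_le hAK e hh (x - t)
        rw [sub_add_eq_add_sub] at hind
        by_cases hs : x - t ∈ sweep K e h
        · rw [indicator_of_mem hs] at hind ⊢
          rw [show F (x - t) = ENNReal.ofReal (φ.normed volume t) by simp [F]]
          refine mul_le_of_le_one_right' ?_
          rw [← ofReal_norm]
          exact ENNReal.ofReal_le_one.2 hind
        · rw [indicator_of_notMem hs] at hind ⊢
          rw [abs_nonpos_iff.1 hind, enorm_zero, mul_zero]
    _ = ∫⁻ y, (sweep K e h).indicator F y := lintegral_sub_left_eq_self _ x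
    _ ≤ _ := lintegral_indicator_le _ _

variable {m : ℕ} {K : Set V}

lemma enorm_fderiv_mollify_apply_le (hV : Module.finrank ℝ V = m + 1) (hA : MeasurableSet A)
    (hK : MeasurableSet K) (hAK : frontier A ⊆ K)
    (hfin : ∀ r z, μHE[m] (K ∩ Metric.closedBall z r) ≠ ∞) (x : V) {e : V} (he : ‖e‖ = 1) :
    ‖fderiv ℝ (mollify φ A) x e‖ₑ ≤
      ∫⁻ y in K, ENNReal.ofReal (φ.normed volume (x - y)) ∂μHE[m] := by
  obtain ⟨C, hC⟩ := (φ.contDiff_normed (n := 1) (μ := volume)).lipschitzWith_of_hasCompactSupport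
    φ.hasCompactSupport_normed one_ne_zero
  have hψ : LipschitzWith C fun y => φ.normed volume (x - y) := fun y z =>
    (hC _ _).trans_eq (by rw [edist_sub_left])
  have hsupp : ∀ y, φ.rOut ≤ dist y x → φ.normed volume (x - y) = 0 := fun y hy => by
    rwa [← Function.notMem_support, φ.support_normed_eq, Metric.mem_ball, dist_zero_right,
      ← dist_eq_norm, dist_comm, not_lt]
  set M := ∫⁻ y in K, ENNReal.ofReal (φ.normed volume (x - y)) ∂μHE[m]
  set F := μHE[m] (K ∩ Metric.closedBall x (φ.rOut + 2))
  have hslope := (((contDiff_mollify φ hA).differentiable one_ne_zero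
    x).hasFDerivAt.hasLineDerivAt e).tendsto_slope_zero_right.enorm
  have hbound : Tendsto (fun h : ℝ => M + ENNReal.ofReal (2 * C * h) * F) (𝓝[>] 0) (𝓝 M) := by
    have hcont : Tendsto (fun h : ℝ => ENNReal.ofReal (2 * C * h)) (𝓝 0)
        (𝓝 (ENNReal.ofReal (2 * C * 0))) :=
      (ENNReal.continuous_ofReal.comp (by fun_prop)).tendsto 0
    have hadd : Tendsto (fun h : ℝ => M + ENNReal.ofReal (2 * C * h) * F) (𝓝 0)
        (𝓝 (M + ENNReal.ofReal (2 * C * 0) * F)) :=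
      tendsto_const_nhds.add (ENNReal.Tendsto.mul_const hcont (Or.inr (hfin _ x)))
    simpa using hadd.mono_left (nhdsWithin_le_nhds (s := Ioi 0))
  refine le_of_tendsto_of_tendsto hslope hbound ?_
  filter_upwards [Ioc_mem_nhdsGT (zero_lt_one (α := ℝ))] with h hh
  rw [enorm_smul, enorm_inv hh.1.ne', Real.enorm_of_nonneg hh.1.le, mul_comm, ← div_eq_mul_inv]
  exact ENNReal.div_le_of_le_mul' ((enorm_mollify_sub_le φ hA hAK x e hh.1.le).trans
    (setLIntegral_sweep_le hV he hh.1 hh.2 hK hψ (fun y => φ.nonneg_normed _) hsupp))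

lemma enorm_fderiv_mollify_le (hV : Module.finrank ℝ V = m + 1) (hA : MeasurableSet A)
    (hK : MeasurableSet K) (hAK : frontier A ⊆ K)
    (hfin : ∀ r z, μHE[m] (K ∩ Metric.closedBall z r) ≠ ∞) (x : V) :
    ‖fderiv ℝ (mollify φ A) x‖ₑ ≤
      ∫⁻ y in K, ENNReal.ofReal (φ.normed volume (x - y)) ∂μHE[m] := by
  by_cases hM : ∫⁻ y in K, ENNReal.ofReal (φ.normed volume (x - y)) ∂μHE[m] = ∞
  · exact hM ▸ le_top
  rw [← ofReal_norm]
  refine ENNReal.ofReal_le_of_le_toReal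
    (ContinuousLinearMap.opNorm_le_of_unit_norm ENNReal.toReal_nonneg fun e he => ?_)
  rw [← toReal_enorm]
  exact ENNReal.toReal_mono hM (enorm_fderiv_mollify_apply_le φ hV hA hK hAK hfin x he)

lemma lintegral_lintegral_sub_eq {μ : Measure V} [SFinite μ] {D : Set V} (hD : MeasurableSet D)
    {η : V → ℝ≥0∞} (hη : Measurable η) :
    ∫⁻ x in D, ∫⁻ y, η (x - y) ∂μ = ∫⁻ z, η z * μ {y | z + y ∈ D} := by
  set χ : V → ℝ≥0∞ := D.indicator 1
  have hχ : Measurable χ := measurable_one.indicator hD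
  calc ∫⁻ x in D, ∫⁻ y, η (x - y) ∂μ = ∫⁻ x, ∫⁻ y, χ x * η (x - y) ∂μ := by
        rw [← lintegral_indicator hD]
        refine lintegral_congr fun x => ?_
        by_cases h : x ∈ D <;> simp [χ, h]
    _ = ∫⁻ y, ∫⁻ x, χ x * η (x - y) ∂volume ∂μ := lintegral_lintegral_swap
        ((hχ.comp measurable_fst).mul (hη.comp (measurable_fst.sub measurable_snd))).aemeasurable
    _ = ∫⁻ y, ∫⁻ z, χ (z + y) * η z ∂volume ∂μ := lintegral_congr fun y => by
        rw [← lintegral_add_right_eq_self (fun x => χ x * η (x - y)) y]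
        simp only [add_sub_cancel_right]
    _ = ∫⁻ z, ∫⁻ y, χ (z + y) * η z ∂μ := lintegral_lintegral_swap
        ((hχ.comp (measurable_snd.add measurable_fst)).mul (hη.comp measurable_snd)).aemeasurable
    _ = ∫⁻ z, η z * μ {y | z + y ∈ D} := by
        refine lintegral_congr fun z => ?_
        have htrans : (fun y => χ (z + y)) = {y | z + y ∈ D}.indicator 1 := by
          ext y
          by_cases h : z + y ∈ D <;> simp [χ, h]
        have hmeas : Measurable fun y => χ (z + y) := hχ.comp (measurable_const_add z)
        have hset : MeasurableSet {y | z + y ∈ D} := measurable_const_add z hD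
        rw [lintegral_mul_const _ hmeas, mul_comm, htrans, lintegral_indicator_one hset]

end Mollification

/-- Smooth periodic cutoffs `0 ≤ ζ k ≤ 1` converging to `1`, with uniformly small gradients. -/
structure IsCutoffSequence {V : Type*} [NormedAddCommGroup V] [NormedSpace ℝ V] (D Λ : Set V)
    (ζ : ℕ → V → ℝ) : Prop where
  isAdmissible : ∀ k, IsAdmissible D Λ (ζ k)
  mem_Icc : ∀ k x, ζ k x ∈ Icc (0 : ℝ) 1
  eventually_norm_fderiv_le : ∀ ε > 0, ∀ᶠ k in atTop, ∀ x, ‖fderiv ℝ (ζ k) x‖ ≤ ε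
  tendsto : ∀ x, Tendsto (fun k => ζ k x) atTop (𝓝 1)

/-- A flat covering map `p` with fundamental domain `D` and periods `Λ`, through which problems on
`Y` are lifted to `V`. Only the translates of `D`, not those by `Λ`, are required to be fundamental
domains. -/
structure IsFlatCover {V Y : Type*} [NormedAddCommGroup V] [NormedSpace ℝ V] [MeasurableSpace V]
    [EMetricSpace Y] (p : V → Y) (D Λ : Set V) : Prop where
  lipschitz : LipschitzWith 1 p
  isOpenMap : IsOpenMap p
  exists_isometric : ∃ δ > 0, ∀ x y, dist x y < δ → edist (p x) (p y) = edist x y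
  measurableSet : MeasurableSet D
  bijOn : ∀ z, BijOn p {y | z + y ∈ D} univ
  periodic : ∀ l ∈ Λ, ∀ x, p (x + l) = p x
  exists_cutoff : ∃ ζ, IsCutoffSequence D Λ ζ

lemma IsFlatCover.measurableSet_translate {V Y : Type*} [NormedAddCommGroup V] [NormedSpace ℝ V]
    [MeasurableSpace V] [BorelSpace V] [EMetricSpace Y] {p : V → Y} {D Λ : Set V}
    (hp : IsFlatCover p D Λ) (z : V) : MeasurableSet {y | z + y ∈ D} :=
  measurable_const_add z hp.measurableSet

lemma enorm_sub_add_le {a b : ℝ} (ha : 0 ≤ a) (hb : 0 ≤ b) :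
    ‖a - b‖ₑ + ENNReal.ofReal b ≤ ENNReal.ofReal a + 2 * ENNReal.ofReal (b - a) := by
  rw [← ofReal_norm, Real.norm_eq_abs, ← ENNReal.ofReal_add (abs_nonneg _) hb,
    ← ENNReal.ofReal_ofNat 2, ← ENNReal.ofReal_mul (by norm_num)]
  rcases le_total a b with h | h
  · rw [← ENNReal.ofReal_add ha (by linarith), abs_of_nonpos (by linarith)]
    exact ENNReal.ofReal_le_ofReal (by linarith)
  · rw [abs_of_nonneg (by linarith)]
    exact le_add_right (ENNReal.ofReal_le_ofReal (by linarith))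

-- Scheffé: the positive part of `f - g k` is dominated by `f`, and the masses control the rest.
lemma tendsto_lintegral_enorm_sub_of_lintegral_le {X : Type*} [MeasurableSpace X] {μ : Measure X}
    {f : X → ℝ} {g : ℕ → X → ℝ} (hf : Measurable f) (hg : ∀ k, Measurable (g k))
    (hf0 : ∀ x, 0 ≤ f x) (hg0 : ∀ k x, 0 ≤ g k x)
    (hfin : ∫⁻ x, ENNReal.ofReal (f x) ∂μ ≠ ∞)
    (hle : ∀ k, ∫⁻ x, ENNReal.ofReal (g k x) ∂μ ≤ ∫⁻ x, ENNReal.ofReal (f x) ∂μ)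
    (hlim : ∀ᵐ x ∂μ, Tendsto (fun k => g k x) atTop (𝓝 (f x))) :
    Tendsto (fun k => ∫⁻ x, ‖g k x - f x‖ₑ ∂μ) atTop (𝓝 0) := by
  have hpos : Tendsto (fun k => ∫⁻ x, ENNReal.ofReal (f x - g k x) ∂μ) atTop
      (𝓝 (∫⁻ _, 0 ∂μ)) := by
    refine tendsto_lintegral_of_dominated_convergence (fun x => ENNReal.ofReal (f x))
      (fun k => (hf.sub (hg k)).ennreal_ofReal)
      (fun k => ae_of_all _ fun x => ENNReal.ofReal_le_ofReal (by linarith [hg0 k x])) hfin ?_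
    filter_upwards [hlim] with x hx
    simpa using ENNReal.tendsto_ofReal (hx.const_sub (f x))
  have htwo : Tendsto (fun k => 2 * ∫⁻ x, ENNReal.ofReal (f x - g k x) ∂μ) atTop (𝓝 0) := by
    simpa using ENNReal.Tendsto.const_mul hpos (Or.inr ENNReal.ofNat_ne_top)
  refine tendsto_of_tendsto_of_tendsto_of_le_of_le tendsto_const_nhds htwo (fun _ => zero_le)
    fun k => (ENNReal.add_le_add_iff_right hfin).1 ?_
  calc (∫⁻ x, ‖g k x - f x‖ₑ ∂μ) + ∫⁻ x, ENNReal.ofReal (f x) ∂μ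
      = ∫⁻ x, (‖g k x - f x‖ₑ + ENNReal.ofReal (f x)) ∂μ :=
        (lintegral_add_right _ hf.ennreal_ofReal).symm
    _ ≤ ∫⁻ x, (ENNReal.ofReal (g k x) + 2 * ENNReal.ofReal (f x - g k x)) ∂μ :=
        lintegral_mono fun x => enorm_sub_add_le (hg0 k x) (hf0 x)
    _ = (∫⁻ x, ENNReal.ofReal (g k x) ∂μ) + 2 * ∫⁻ x, ENNReal.ofReal (f x - g k x) ∂μ := by
        rw [lintegral_add_left (hg k).ennreal_ofReal,
          lintegral_const_mul' _ _ ENNReal.ofNat_ne_top]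
    _ ≤ (∫⁻ x, ENNReal.ofReal (f x) ∂μ) + 2 * ∫⁻ x, ENNReal.ofReal (f x - g k x) ∂μ := by
        exact add_le_add (hle k) le_rfl
    _ = _ := add_comm _ _

/-- The mollifiers of radius `1 / (k + 1)`. -/
def shrinkingBump (V : Type*) [NormedAddCommGroup V] (k : ℕ) : ContDiffBump (0 : V) where
  rIn := 1 / (2 * (k + 1))
  rOut := 1 / (k + 1)
  rIn_pos := by positivity
  rIn_lt_rOut := by
    apply one_div_lt_one_div_of_lt <;> nlinarith [(Nat.cast_nonneg k : (0 : ℝ) ≤ k)]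

section Mollification

variable {V : Type*} [NormedAddCommGroup V] [InnerProductSpace ℝ V] [FiniteDimensional ℝ V]
  [MeasurableSpace V] [BorelSpace V]

lemma measurable_ofReal_normed (φ : ContDiffBump (0 : V)) :
    Measurable fun z => ENNReal.ofReal (φ.normed volume z) :=
  (φ.contDiff_normed (n := 0)).continuous.measurable.ennreal_ofReal

lemma lintegral_ofReal_normed (φ : ContDiffBump (0 : V)) :
    ∫⁻ z, ENNReal.ofReal (φ.normed volume z) = 1 := by
  rw [← ofReal_integral_eq_lintegral_ofReal φ.integrable_normed
    (ae_of_all _ fun z => φ.nonneg_normed z), φ.integral_normed, ENNReal.ofReal_one]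

lemma ofReal_mollify (φ : ContDiffBump (0 : V)) {A : Set V} (hA : MeasurableSet A) (x : V) :
    ENNReal.ofReal (mollify φ A x) =
      ∫⁻ y in A, ENNReal.ofReal (φ.normed volume (x - y)) := by
  rw [mollify_apply, ofReal_integral_eq_lintegral_ofReal (integrable_mollify φ hA x)
    (ae_of_all _ fun t => mul_nonneg (φ.nonneg_normed t) (indicator_nonneg (by simp) _)),
    ← lintegral_indicator hA, ← lintegral_sub_left_eq_self _ x]
  refine lintegral_congr fun t => ?_
  by_cases h : t ∈ A <;> simp [h]

lemma tendsto_mollify_shrinkingBump {A : Set V} {x : V} (hx : x ∉ frontier A) :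
    Tendsto (fun k => mollify (shrinkingBump V k) A x) atTop (𝓝 (A.indicator 1 x)) := by
  obtain ⟨r, hr, heq⟩ := mollify_eq_of_notMem_frontier hx
  refine tendsto_const_nhds.congr' ?_
  filter_upwards [(tendsto_one_div_add_atTop_nhds_zero_nat (𝕜 := ℝ)).eventually_le_const hr]
    with k hk
  exact (heq (shrinkingBump V k) hk).symm

lemma enorm_fderiv_mollify_mul_le (φ : ContDiffBump (0 : V)) {A : Set V} (hA : MeasurableSet A)
    {ζ : V → ℝ} (hζ : ContDiff ℝ 1 ζ) {x : V} (hx : ζ x ∈ Icc (0 : ℝ) 1) {ε : ℝ}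
    (hε : ‖fderiv ℝ ζ x‖ ≤ ε) :
    ‖fderiv ℝ (fun x => mollify φ A x * ζ x) x‖ₑ ≤ ‖fderiv ℝ (mollify φ A) x‖ₑ +
      ENNReal.ofReal (mollify φ A x) * ENNReal.ofReal ε := by
  have hmul : fderiv ℝ (fun x => mollify φ A x * ζ x) x =
      mollify φ A x • fderiv ℝ ζ x + ζ x • fderiv ℝ (mollify φ A) x :=
    fderiv_fun_mul ((contDiff_mollify φ hA).differentiable one_ne_zero x)
      (hζ.differentiable one_ne_zero x)
  rw [hmul, add_comm]
  refine (enorm_add_le (ζ x • fderiv ℝ (mollify φ A) x)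
    (mollify φ A x • fderiv ℝ ζ x)).trans (add_le_add ?_ ?_)
  · rw [enorm_smul, Real.enorm_of_nonneg hx.1]
    exact mul_le_of_le_one_left' (ENNReal.ofReal_le_one.2 hx.2)
  · rw [enorm_smul, Real.enorm_of_nonneg (mollify_nonneg φ _ x), ← ofReal_norm]
    gcongr

end Mollification

namespace IsFlatCover

variable {V Y : Type*} [NormedAddCommGroup V] [InnerProductSpace ℝ V] [FiniteDimensional ℝ V]
  [MeasurableSpace V] [BorelSpace V] [EMetricSpace Y] {p : V → Y} {D Λ : Set V}

lemma mollify_periodic (hp : IsFlatCover p D Λ) (φ : ContDiffBump (0 : V)) (U : Set Y)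
    {l : V} (hl : l ∈ Λ) (x : V) : mollify φ (p ⁻¹' U) (x + l) = mollify φ (p ⁻¹' U) x := by
  rw [mollify_apply, mollify_apply]
  congr 1 with t
  congr 1
  have hmem : x + l - t ∈ p ⁻¹' U ↔ x - t ∈ p ⁻¹' U := by
    rw [mem_preimage, add_sub_right_comm, hp.periodic l hl, mem_preimage]
  by_cases h : x - t ∈ p ⁻¹' U
  · simp only [indicator_of_mem h, indicator_of_mem (hmem.2 h), Pi.one_apply]
  · simp only [indicator_of_notMem h, indicator_of_notMem (mt hmem.1 h)]

variable [MeasurableSpace Y] [BorelSpace Y]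

lemma euclideanHausdorffMeasure_preimage_inter_translate (hp : IsFlatCover p D Λ) (d : ℕ)
    {S : Set Y} (hS : MeasurableSet S) (z : V) :
    μHE[d] (p ⁻¹' S ∩ {y | z + y ∈ D}) = μHE[d] S := by
  obtain ⟨δ, hδ, hiso⟩ := hp.exists_isometric
  have hc := hp.lipschitz.continuous
  rw [← euclideanHausdorffMeasure_image_of_locallyIsometric hc hδ hiso d
      ((hc.measurable hS).inter (hp.measurableSet_translate z))
      ((hp.bijOn z).injOn.mono inter_subset_right),
    image_preimage_inter, (hp.bijOn z).image_eq, inter_univ]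

lemma euclideanHausdorffMeasure_preimage_inter (hp : IsFlatCover p D Λ) (d : ℕ) {S : Set Y}
    (hS : MeasurableSet S) : μHE[d] (p ⁻¹' S ∩ D) = μHE[d] S := by
  simpa using hp.euclideanHausdorffMeasure_preimage_inter_translate d hS 0

lemma isLocallyFiniteMeasure_restrict_preimage (hp : IsFlatCover p D Λ) (d : ℕ) {S : Set Y}
    (hS : MeasurableSet S) (hfin : μHE[d] S ≠ ∞) :
    IsLocallyFiniteMeasure ((μHE[d] : Measure V).restrict (p ⁻¹' S)) := by
  obtain ⟨δ, hδ, hiso⟩ := hp.exists_isometric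
  have hc := hp.lipschitz.continuous
  refine ⟨fun x => ⟨Metric.ball x (δ / 2), Metric.ball_mem_nhds x (half_pos hδ), ?_⟩⟩
  have hinj : InjOn p (Metric.ball x (δ / 2)) := fun a ha b hb hab => by
    have hdist : dist a b < δ := by
      rw [Metric.mem_ball] at ha hb
      linarith [dist_triangle_right a b x]
    rw [← edist_eq_zero, ← hiso a b hdist, hab, edist_self]
  rw [Measure.restrict_apply Metric.isOpen_ball.measurableSet, inter_comm,
    ← euclideanHausdorffMeasure_image_of_locallyIsometric hc hδ hiso d
      ((hc.measurable hS).inter Metric.isOpen_ball.measurableSet) (hinj.mono inter_subset_right)]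
  exact (measure_mono (image_subset_iff.2 inter_subset_left)).trans_lt hfin.lt_top

lemma euclideanHausdorffMeasure_preimage_inter_closedBall_ne_top (hp : IsFlatCover p D Λ) (d : ℕ)
    {S : Set Y} (hS : MeasurableSet S) (hfin : μHE[d] S ≠ ∞) (r : ℝ) (z : V) :
    μHE[d] (p ⁻¹' S ∩ Metric.closedBall z r) ≠ ∞ := by
  have := hp.isLocallyFiniteMeasure_restrict_preimage d hS hfin
  rw [inter_comm, ← Measure.restrict_apply Metric.isClosed_closedBall.measurableSet]
  exact Metric.isBounded_closedBall.measure_lt_top.ne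

variable {m : ℕ}

lemma volume_preimage_eq_zero (hV : Module.finrank ℝ V = m + 1) (hp : IsFlatCover p D Λ)
    {S : Set Y} (hS : MeasurableSet S) (hfin : μHE[m] S ≠ ∞) : volume (p ⁻¹' S) = 0 := by
  rw [← inter_univ (p ⁻¹' S), ← Metric.iUnion_closedBall_nat (0 : V), inter_iUnion,
    measure_iUnion_null_iff]
  intro n
  rw [← InnerProductSpace.euclideanHausdorffMeasure_eq_volume, hV]
  exact (Measure.euclideanHausdorffMeasure_zero_or_top m.lt_succ_self _).resolve_right
    (hp.euclideanHausdorffMeasure_preimage_inter_closedBall_ne_top m hS hfin n 0)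

lemma volume_preimage_inter (hV : Module.finrank ℝ V = m + 1) (hp : IsFlatCover p D Λ)
    {U : Set Y} (hU : MeasurableSet U) : volume (p ⁻¹' U ∩ D) = μHE[m + 1] U := by
  rw [← InnerProductSpace.euclideanHausdorffMeasure_eq_volume, hV,
    hp.euclideanHausdorffMeasure_preimage_inter _ hU]

lemma lintegral_fderiv_mollify_le (hV : Module.finrank ℝ V = m + 1) (hp : IsFlatCover p D Λ)
    (φ : ContDiffBump (0 : V)) {U : Set Y} (hU : MeasurableSet U) (hfin : μHE[m] (frontier U) ≠ ∞) :
    ∫⁻ x in D, ‖fderiv ℝ (mollify φ (p ⁻¹' U)) x‖ₑ ≤ μHE[m] (frontier U) := by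
  have hc := hp.lipschitz.continuous
  have hfr : MeasurableSet (frontier U) := isClosed_frontier.measurableSet
  have := hp.isLocallyFiniteMeasure_restrict_preimage m hfr hfin
  set μ := (μHE[m] : Measure V).restrict (p ⁻¹' frontier U) with hμ
  calc _ ≤ ∫⁻ x in D, ∫⁻ y, ENNReal.ofReal (φ.normed volume (x - y)) ∂μ :=
        lintegral_mono fun x => enorm_fderiv_mollify_le φ hV (hc.measurable hU)
          (hc.measurable hfr) (hc.frontier_preimage_subset U)
          (hp.euclideanHausdorffMeasure_preimage_inter_closedBall_ne_top m hfr hfin) x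
    _ = ∫⁻ z, ENNReal.ofReal (φ.normed volume z) * μ {y | z + y ∈ D} :=
        lintegral_lintegral_sub_eq hp.measurableSet (measurable_ofReal_normed φ)
    _ = ∫⁻ z, ENNReal.ofReal (φ.normed volume z) * μHE[m] (frontier U) := by
        refine lintegral_congr fun z => ?_
        rw [hμ, Measure.restrict_apply (hp.measurableSet_translate z), inter_comm,
          hp.euclideanHausdorffMeasure_preimage_inter_translate m hfr]
    _ = μHE[m] (frontier U) := by
        rw [lintegral_mul_const' _ _ hfin, lintegral_ofReal_normed, one_mul]

lemma lintegral_mollify_eq (hV : Module.finrank ℝ V = m + 1) (hp : IsFlatCover p D Λ)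
    (φ : ContDiffBump (0 : V)) {U : Set Y} (hU : MeasurableSet U) :
    ∫⁻ x in D, ENNReal.ofReal (mollify φ (p ⁻¹' U) x) = μHE[m + 1] U := by
  have hA := hp.lipschitz.continuous.measurable hU
  have htrans (z : V) : volume.restrict (p ⁻¹' U) {y | z + y ∈ D} = μHE[m + 1] U := by
    rw [Measure.restrict_apply (hp.measurableSet_translate z), inter_comm,
      ← InnerProductSpace.euclideanHausdorffMeasure_eq_volume, hV,
      hp.euclideanHausdorffMeasure_preimage_inter_translate _ hU]
  simp only [ofReal_mollify φ hA]
  rw [lintegral_lintegral_sub_eq hp.measurableSet (measurable_ofReal_normed φ)]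
  simp only [htrans]
  rw [lintegral_mul_const _ (measurable_ofReal_normed φ), lintegral_ofReal_normed, one_mul]

lemma lintegral_fderiv_mollify_mul_le (hV : Module.finrank ℝ V = m + 1)
    (hp : IsFlatCover p D Λ) (φ : ContDiffBump (0 : V)) {U : Set Y} (hU : MeasurableSet U)
    (hfin : μHE[m] (frontier U) ≠ ∞) {ζ : V → ℝ}
    (hζ : ContDiff ℝ 1 ζ) (hζ01 : ∀ x, ζ x ∈ Icc (0 : ℝ) 1) {ε : ℝ}
    (hε : ∀ x, ‖fderiv ℝ ζ x‖ ≤ ε) :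
    ∫⁻ x in D, ‖fderiv ℝ (fun x => mollify φ (p ⁻¹' U) x * ζ x) x‖ₑ ≤
      μHE[m] (frontier U) + μHE[m + 1] U * ENNReal.ofReal ε := by
  have hA : MeasurableSet (p ⁻¹' U) := hp.lipschitz.continuous.measurable hU
  calc _ ≤ ∫⁻ x in D, (‖fderiv ℝ (mollify φ (p ⁻¹' U)) x‖ₑ +
        ENNReal.ofReal (mollify φ (p ⁻¹' U) x) * ENNReal.ofReal ε) :=
        lintegral_mono fun x => enorm_fderiv_mollify_mul_le φ hA hζ (hζ01 x) (hε x)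
    _ = (∫⁻ x in D, ‖fderiv ℝ (mollify φ (p ⁻¹' U)) x‖ₑ) + μHE[m + 1] U * ENNReal.ofReal ε := by
        rw [lintegral_add_left
          ((contDiff_mollify φ hA).continuous_fderiv one_ne_zero).enorm.measurable,
          lintegral_mul_const' _ _ ENNReal.ofReal_ne_top, hp.lintegral_mollify_eq hV φ hU]
    _ ≤ _ := by
        gcongr
        exact hp.lintegral_fderiv_mollify_le hV φ hU hfin

lemma isApproximation_mollify_mul (hV : Module.finrank ℝ V = m + 1) (hp : IsFlatCover p D Λ)
    {U : Set Y} (hU : MeasurableSet U) (hfin : μHE[m] (frontier U) ≠ ∞)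
    (hfinU : μHE[m + 1] U ≠ ∞) {ζ : ℕ → V → ℝ}
    (hζ : IsCutoffSequence D Λ ζ) :
    IsApproximation D Λ (p ⁻¹' U)
      fun k x => mollify (shrinkingBump V k) (p ⁻¹' U) x * ζ k x := by
  have hc := hp.lipschitz.continuous
  have hA : MeasurableSet (p ⁻¹' U) := hc.measurable hU
  have hχ : ∫⁻ x in D, ENNReal.ofReal ((p ⁻¹' U).indicator 1 x) = μHE[m + 1] U := by
    have hind (x : V) : ENNReal.ofReal ((p ⁻¹' U).indicator 1 x) = (p ⁻¹' U).indicator 1 x := by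
      by_cases h : x ∈ p ⁻¹' U <;> simp [h]
    simp only [hind]
    rw [lintegral_indicator_one hA, Measure.restrict_apply hA, hp.volume_preimage_inter hV hU]
  refine ⟨hA, by rwa [hp.volume_preimage_inter hV hU], fun k => ?_, ?_⟩
  · have hadm := hζ.isAdmissible k
    refine ⟨(contDiff_mollify _ hA).mul hadm.contDiff, fun l hl x => ?_, fun r => ?_⟩
    · rw [hp.mollify_periodic _ U hl, hadm.periodic l hl]
    · obtain ⟨R, hR⟩ := hadm.support r
      exact ⟨R, fun x hx b hb hxR => by rw [hR x hx b hb hxR, mul_zero]⟩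
  · refine tendsto_lintegral_enorm_sub_of_lintegral_le (measurable_one.indicator hA)
      (fun k => ((contDiff_mollify _ hA).continuous.mul
        (hζ.isAdmissible k).contDiff.continuous).measurable)
      (fun x => indicator_nonneg (by simp) x)
      (fun k x => mul_nonneg (mollify_nonneg _ _ _) (hζ.mem_Icc k x).1) (by rwa [hχ])
      (fun k => ?_) ?_
    · rw [hχ, ← hp.lintegral_mollify_eq hV (shrinkingBump V k) hU]
      exact lintegral_mono fun x => ENNReal.ofReal_le_ofReal
        (mul_le_of_le_one_right (mollify_nonneg _ _ _) (hζ.mem_Icc k x).2)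
    · have hnull : volume (frontier (p ⁻¹' U)) = 0 := measure_mono_null
        (hc.frontier_preimage_subset U)
        (hp.volume_preimage_eq_zero hV isClosed_frontier.measurableSet hfin)
      filter_upwards [ae_restrict_of_ae (compl_mem_ae_iff.2 hnull)] with x hx
      simpa using (tendsto_mollify_shrinkingBump hx).mul (hζ.tendsto x)

theorem le_of_relaxedIsoperimetric (hV : Module.finrank ℝ V = m + 1) (hp : IsFlatCover p D Λ)
    {Ψ : ℝ → ℝ} (hΨ : RelaxedIsoperimetric D Λ Ψ) {U : Set Y} (hU : MeasurableSet U)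
    (hfinU : μHE[m + 1] U ≠ ∞) :
    ENNReal.ofReal (Ψ (μHE[m + 1] U).toReal) ≤ μHE[m] (frontier U) := by
  by_cases hfin : μHE[m] (frontier U) = ∞
  · exact hfin ▸ le_top
  obtain ⟨ζ, hζ⟩ := hp.exists_cutoff
  have happrox := hp.isApproximation_mollify_mul hV hU hfin hfinU hζ
  refine ENNReal.le_of_forall_pos_le_add fun δ hδ _ => ?_
  obtain ⟨ε, hε, hεδ⟩ := ENNReal.exists_nnreal_pos_mul_lt hfinU (ENNReal.coe_pos.2 hδ).ne'
  obtain ⟨K, hK⟩ := (hζ.eventually_norm_fderiv_le ε hε).exists_forall_of_atTop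
  rw [← hp.volume_preimage_inter hV hU]
  refine hΨ _ _ (happrox.comp (strictMono_id.add_const K)) _ fun k => ?_
  refine (hp.lintegral_fderiv_mollify_mul_le hV (shrinkingBump V (k + K)) hU hfin
    (hζ.isAdmissible _).contDiff (hζ.mem_Icc _) (hK _ (Nat.le_add_left K k))).trans ?_
  gcongr
  rw [ENNReal.ofReal_coe_nnreal, mul_comm]
  exact hεδ.le

end IsFlatCover

lemma exists_isCutoffSequence_univ (V : Type*) [NormedAddCommGroup V] [InnerProductSpace ℝ V]
    [FiniteDimensional ℝ V] : ∃ ζ, IsCutoffSequence (univ : Set V) ∅ ζ := by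
  let φ : ContDiffBump (0 : V) := ⟨1, 2, one_pos, one_lt_two⟩
  have hφ : ContDiff ℝ 1 φ := φ.contDiff
  obtain ⟨C, hC⟩ := hφ.lipschitzWith_of_hasCompactSupport φ.hasCompactSupport one_ne_zero
  have hpos (k : ℕ) : (0 : ℝ) < k + 1 := by positivity
  have hnorm (k : ℕ) (x : V) : ‖((k : ℝ) + 1)⁻¹ • x‖ = ‖x‖ / (k + 1) := by
    rw [norm_smul, norm_inv, Real.norm_of_nonneg (hpos k).le, inv_mul_eq_div]
  refine ⟨fun k x => φ (((k : ℝ) + 1)⁻¹ • x), fun k => ⟨hφ.comp (contDiff_const_smul _), by simp,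
    fun r => ⟨r + 2 * (k + 1), fun x _ b hb hx => φ.zero_of_le_dist ?_⟩⟩,
    fun k x => ⟨φ.nonneg, φ.le_one⟩, fun ε hε => ?_, fun x => ?_⟩
  · have htri : ‖x‖ ≤ ‖x + b‖ + ‖b‖ := by simpa using norm_sub_le (x + b) b
    rw [dist_zero_right, hnorm, le_div_iff₀ (hpos k)]
    change 2 * ((k : ℝ) + 1) ≤ _
    linarith
  · have hlim : Tendsto (fun k : ℕ => C * (1 / ((k : ℝ) + 1))) atTop (𝓝 0) := by
      simpa using (tendsto_one_div_add_atTop_nhds_zero_nat (𝕜 := ℝ)).const_mul (C : ℝ)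
    filter_upwards [hlim.eventually_le_const hε] with k hk x
    have hlip : LipschitzWith (C * ‖((k : ℝ) + 1)⁻¹‖₊) fun x : V => φ (((k : ℝ) + 1)⁻¹ • x) :=
      hC.comp (lipschitzWith_smul _)
    refine (norm_fderiv_le_of_lipschitz ℝ hlip).trans (le_trans (le_of_eq ?_) hk)
    rw [NNReal.coe_mul, coe_nnnorm, norm_inv, Real.norm_of_nonneg (hpos k).le, one_div]
  · refine tendsto_const_nhds.congr' ?_
    obtain ⟨K, hK⟩ := exists_nat_ge ‖x‖
    filter_upwards [eventually_ge_atTop K] with k hk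
    refine (φ.one_of_mem_closedBall ?_).symm
    rw [mem_closedBall_zero_iff, hnorm, div_le_iff₀ (hpos k)]
    change _ ≤ 1 * ((k : ℝ) + 1)
    have hKk : (K : ℝ) ≤ k := by exact_mod_cast hk
    linarith

lemma isFlatCover_id (V : Type*) [NormedAddCommGroup V] [InnerProductSpace ℝ V]
    [FiniteDimensional ℝ V] [MeasurableSpace V] : IsFlatCover (id : V → V) univ ∅ where
  lipschitz := LipschitzWith.id
  isOpenMap := IsOpenMap.id
  exists_isometric := ⟨1, one_pos, fun _ _ _ => rfl⟩
  measurableSet := MeasurableSet.univ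
  bijOn z := by simpa using bijOn_id (univ : Set V)
  periodic := by simp
  exists_cutoff := exists_isCutoffSequence_univ V

lemma edist_coe_addCircle_eq {L : ℝ} (hL : 0 < L) {x y : ℝ} (h : dist x y ≤ L / 2) :
    edist (x : AddCircle L) (y : AddCircle L) = edist x y := by
  rw [edist_dist, edist_dist, dist_eq_norm, dist_eq_norm, ← AddCircle.coe_sub,
    (AddCircle.norm_coe_eq_abs_iff L hL.ne').mpr, Real.norm_eq_abs]
  rwa [abs_of_pos hL, ← Real.dist_eq]

lemma edist_coe_addCircle_le {L : ℝ} (x y : ℝ) :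
    edist (x : AddCircle L) (y : AddCircle L) ≤ edist x y := by
  rw [edist_dist, edist_dist, dist_eq_norm, dist_eq_norm, ← AddCircle.coe_sub]
  exact ENNReal.ofReal_le_ofReal QuotientAddGroup.norm_mk_le_norm

/-- The product of a covering map with the universal cover of a circle of length `L`. -/
def circleCover {V Y : Type*} (L : ℝ) (p : V → Y) (q : LineProd V) : WithLp 2 (AddCircle L × Y) :=
  WithLp.toLp 2 ((q.fst : AddCircle L), p q.snd)

section CircleCover

variable {V Y : Type*} {p : V → Y} {D : Set V} {L : ℝ}

lemma isOpenMap_circleCover [TopologicalSpace V] [TopologicalSpace Y] (hp : IsOpenMap p) :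
    IsOpenMap (circleCover L p) := by
  have hprod : IsOpenMap (Prod.map ((↑) : ℝ → AddCircle L) p) :=
    QuotientAddGroup.isOpenMap_coe.prodMap hp
  exact (WithLp.homeomorphProd 2 (AddCircle L) Y).symm.isOpenMap.comp
    (hprod.comp (WithLp.homeomorphProd 2 ℝ V).isOpenMap)

lemma lipschitzWith_circleCover [PseudoEMetricSpace V] [PseudoEMetricSpace Y]
    (hp : LipschitzWith 1 p) : LipschitzWith 1 (circleCover L p) := fun q q' => by
  rw [ENNReal.coe_one, one_mul, WithLp.prod_edist_eq_add (by norm_num),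
    WithLp.prod_edist_eq_add (by norm_num)]
  gcongr
  · exact edist_coe_addCircle_le q.fst q'.fst
  · exact (hp q.snd q'.snd).trans_eq (one_mul _)

lemma edist_circleCover_eq [PseudoEMetricSpace V] [PseudoEMetricSpace Y] (hL : 0 < L)
    {q q' : LineProd V} (hfst : dist q.fst q'.fst ≤ L / 2)
    (hsnd : edist (p q.snd) (p q'.snd) = edist q.snd q'.snd) :
    edist (circleCover L p q) (circleCover L p q') = edist q q' := by
  rw [WithLp.prod_edist_eq_add (by norm_num), WithLp.prod_edist_eq_add (by norm_num),
    ← edist_coe_addCircle_eq hL hfst, ← hsnd]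
  rfl

lemma bijOn_circleCover [NormedAddCommGroup V] (hL : 0 < L) (z : LineProd V)
    (hp : BijOn p {y | z.snd + y ∈ D} univ) :
    BijOn (circleCover L p) {q | z + q ∈ prodDom (Ico 0 L) D} univ := by
  have : Fact (0 < L) := ⟨hL⟩
  have hmem (q : LineProd V) (hq : z + q ∈ prodDom (Ico 0 L) D) :
      q.fst ∈ Ico (-z.fst) (-z.fst + L) := by
    have hq0 : 0 ≤ z.fst + q.fst := hq.1.1
    have hqL : z.fst + q.fst < L := hq.1.2
    exact ⟨by linarith, by linarith⟩
  refine ⟨fun _ _ => mem_univ _, fun q hq q' hq' h => ?_, fun y _ => ?_⟩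
  · have hfst : q.fst = q'.fst := (AddCircle.coe_eq_coe_iff_of_mem_Ico (hmem q hq) (hmem q' hq')).1
      (congrArg WithLp.fst h)
    have hsnd : q.snd = q'.snd := hp.injOn hq.2 hq'.2 (congrArg WithLp.snd h)
    exact congrArg (WithLp.toLp 2) (Prod.ext hfst hsnd)
  · obtain ⟨a, ha, hay⟩ : y.fst ∈ ((↑) : ℝ → AddCircle L) '' Ico (-z.fst) (-z.fst + L) :=
      AddCircle.coe_image_Ico_eq L (-z.fst) ▸ mem_univ _
    obtain ⟨b, hb, hby⟩ := hp.surjOn (mem_univ y.snd)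
    exact ⟨pair a b, ⟨⟨neg_le_iff_add_nonneg'.1 ha.1, lt_neg_add_iff_add_lt.1 ha.2⟩, hb⟩,
      congrArg (WithLp.toLp 2) (Prod.ext hay hby)⟩

end CircleCover

section Cutoff

variable {V : Type*} [NormedAddCommGroup V] [NormedSpace ℝ V] {D Λ : Set V} {L : ℝ}

lemma IsAdmissible.comp_snd {g : V → ℝ} (hg : IsAdmissible D Λ g) :
    IsAdmissible (prodDom (Ico 0 L) D) (prodPeriods {L} Λ) fun q => g q.snd where
  contDiff := hg.contDiff.comp (WithLp.sndL 2 ℝ ℝ V).contDiff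
  periodic := by
    rintro l (⟨-, hl⟩ | ⟨-, hl⟩) x
    · rw [WithLp.add_snd, hl, add_zero]
    · rw [WithLp.add_snd, hg.periodic _ hl]
  support r := by
    obtain ⟨R, hR⟩ := hg.support r
    refine ⟨R + L, fun q hq b hb hqR => hR q.snd hq.2 b.snd
      ((norm_le_norm_pair b.fst b.snd).trans hb) ?_⟩
    have hfst : |q.fst| ≤ L := by
      rw [abs_of_nonneg hq.1.1]
      exact hq.1.2.le
    have hnorm : ‖q‖ ≤ |q.fst| + ‖q.snd‖ := norm_pair_le q.fst q.snd
    linarith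

lemma norm_fderiv_comp_snd_le {g : V → ℝ} (hg : Differentiable ℝ g) (q : LineProd V) :
    ‖fderiv ℝ (fun q : LineProd V => g q.snd) q‖ ≤ ‖fderiv ℝ g q.snd‖ := by
  have hsnd : ‖WithLp.sndL 2 ℝ ℝ V‖ ≤ 1 :=
    (WithLp.sndL 2 ℝ ℝ V).opNorm_le_bound zero_le_one fun q => by
      rw [one_mul]
      exact norm_le_norm_pair q.fst q.snd
  have hcomp : fderiv ℝ (fun q : LineProd V => g q.snd) q =
      (fderiv ℝ g q.snd).comp (WithLp.sndL 2 ℝ ℝ V) :=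
    ((hg q.snd).hasFDerivAt.comp q (WithLp.sndL 2 ℝ ℝ V).hasFDerivAt).fderiv
  rw [hcomp]
  exact (ContinuousLinearMap.opNorm_comp_le _ _).trans
    (mul_le_of_le_one_right (norm_nonneg _) hsnd)

lemma IsCutoffSequence.comp_snd {ζ : ℕ → V → ℝ} (hζ : IsCutoffSequence D Λ ζ) :
    IsCutoffSequence (prodDom (Ico 0 L) D) (prodPeriods {L} Λ) fun k q => ζ k q.snd where
  isAdmissible k := (hζ.isAdmissible k).comp_snd
  mem_Icc k q := hζ.mem_Icc k q.snd
  eventually_norm_fderiv_le ε hε := (hζ.eventually_norm_fderiv_le ε hε).mono fun k hk q =>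
    (norm_fderiv_comp_snd_le ((hζ.isAdmissible k).contDiff.differentiable one_ne_zero) q).trans
      (hk q.snd)
  tendsto q := hζ.tendsto q.snd

end Cutoff

lemma IsFlatCover.circleCover {V Y : Type*} [NormedAddCommGroup V] [InnerProductSpace ℝ V]
    [FiniteDimensional ℝ V] [MeasurableSpace V] [BorelSpace V] [EMetricSpace Y]
    {p : V → Y} {D Λ : Set V} (hp : IsFlatCover p D Λ) {L : ℝ} (hL : 0 < L) :
    IsFlatCover (V := LineProd V) (circleCover L p) (prodDom (Ico 0 L) D) (prodPeriods {L} Λ) where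
  lipschitz := lipschitzWith_circleCover hp.lipschitz
  isOpenMap := isOpenMap_circleCover hp.isOpenMap
  exists_isometric := by
    obtain ⟨δ, hδ, hiso⟩ := hp.exists_isometric
    refine ⟨min δ (L / 2), lt_min hδ (half_pos hL), fun q q' h => ?_⟩
    have hfst : dist q.fst q'.fst ≤ dist q q' := by
      rw [dist_eq_norm, dist_eq_norm]
      exact abs_le_norm_pair (q - q').fst (q - q').snd
    have hsnd : dist q.snd q'.snd ≤ dist q q' := by
      rw [dist_eq_norm, dist_eq_norm]
      exact norm_le_norm_pair (q - q').fst (q - q').snd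
    exact edist_circleCover_eq hL (hfst.trans (h.le.trans (min_le_right _ _)))
      (hiso _ _ (hsnd.trans_lt (h.trans_le (min_le_left _ _))))
  measurableSet := measurableSet_prodDom measurableSet_Ico hp.measurableSet
  bijOn z := bijOn_circleCover hL z (hp.bijOn z.snd)
  periodic := by
    rintro l (⟨hfst, hsnd⟩ | ⟨hfst, hsnd⟩) x <;>
      refine congrArg (WithLp.toLp 2) (Prod.ext ?_ ?_) <;>
      simp only [WithLp.add_fst, WithLp.add_snd, hfst, hsnd, add_zero]
    · rw [mem_singleton_iff.1 hfst]
      exact AddCircle.coe_add_period L x.fst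
    · exact hp.periodic _ hsnd _
  exists_cutoff := let ⟨_, hζ⟩ := hp.exists_cutoff
    ⟨_, hζ.comp_snd⟩

section Retract

variable {V : Type*} [NormedAddCommGroup V] [InnerProductSpace ℝ V]

lemma norm_sq_smul_sub_smul_add_sq_le {R : ℝ} (hR : 0 < R) {a b : V} (ha : R ≤ ‖a‖)
    (hb : R ≤ ‖b‖) :
    ‖(R / ‖a‖) • a - (R / ‖b‖) • b‖ ^ 2 + (‖a‖ - ‖b‖) ^ 2 ≤ ‖a - b‖ ^ 2 := by
  have ha₀ := hR.trans_le ha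
  have hb₀ := hR.trans_le hb
  have hcoef : R / ‖a‖ * (R / ‖b‖) ≤ 1 :=
    mul_le_one₀ ((div_le_one ha₀).mpr ha) (by positivity) ((div_le_one hb₀).mpr hb)
  have hsq : R ^ 2 = R / ‖a‖ * (R / ‖b‖) * (‖a‖ * ‖b‖) := by field_simp
  rw [norm_sub_sq_real, norm_sub_sq_real, real_inner_smul_left, real_inner_smul_right, norm_smul,
    norm_smul, Real.norm_of_nonneg (by positivity), Real.norm_of_nonneg (by positivity),
    div_mul_cancel₀ _ ha₀.ne', div_mul_cancel₀ _ hb₀.ne']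
  nlinarith [mul_nonneg (sub_nonneg.mpr hcoef) (sub_nonneg.mpr (real_inner_le_norm a b))]

lemma norm_sq_eq_inner_sq_add_norm_sq_orthogonalProjectionOnto {e : V} (he : ‖e‖ = 1) (x : V) :
    ‖x‖ ^ 2 = inner ℝ e x ^ 2 + ‖(ℝ ∙ e)ᗮ.orthogonalProjectionOnto x‖ ^ 2 := by
  have h := (ℝ ∙ e).norm_sq_eq_add_norm_sq_starProjection x
  rw [Submodule.starProjection_unit_singleton ℝ he, norm_smul, he, mul_one, Real.norm_eq_abs,
    sq_abs] at h
  exact h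

/-- Move the `P`-component of a point radially onto the sphere of radius `R`. -/
def radialRetract (P : V →ₗ[ℝ] V) (R : ℝ) (x : V) : V := x - P x + (R / ‖P x‖) • P x

/-- The outer shell of thickness `h` over the part in `A` of the hypersurface `‖P x‖ = R`. -/
def radialShell (P : V →ₗ[ℝ] V) (R h : ℝ) (A : Set V) : Set V :=
  {x | ‖P x‖ ∈ Icc R (R + h) ∧ radialRetract P R x ∈ A}

variable {P : V →ₗ[ℝ] V} {R h : ℝ} {A : Set V}

lemma map_map_of_isSymmetricProjection (hP : P.IsSymmetricProjection) (x : V) : P (P x) = P x :=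
  LinearMap.congr_fun hP.isIdempotentElem.eq x

lemma inner_map_map_of_isSymmetricProjection (hP : P.IsSymmetricProjection) (x y : V) :
    inner ℝ (P x) (P y) = inner ℝ (P x) y := by
  rw [← hP.isSymmetric, map_map_of_isSymmetricProjection hP]

lemma norm_map_le_of_isSymmetricProjection (hP : P.IsSymmetricProjection) (x : V) :
    ‖P x‖ ≤ ‖x‖ := by
  have h := real_inner_le_norm (P x) x
  rw [← inner_map_map_of_isSymmetricProjection hP, real_inner_self_eq_norm_sq] at h
  by_contra! hlt
  nlinarith [norm_nonneg x]

lemma norm_sq_sub_map_add (hP : P.IsSymmetricProjection) (d : V) {z : V} (hz : P z = z) :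
    ‖d - P d + z‖ ^ 2 = ‖d‖ ^ 2 - ‖P d‖ ^ 2 + ‖z‖ ^ 2 := by
  have horth : inner ℝ (d - P d) z = (0 : ℝ) := by
    rw [← hz, ← hP.isSymmetric, map_sub, map_map_of_isSymmetricProjection hP, sub_self,
      inner_zero_left]
  rw [norm_add_sq_real, norm_sub_sq_real, horth, real_inner_comm,
    ← inner_map_map_of_isSymmetricProjection hP, real_inner_self_eq_norm_sq]
  ring

lemma norm_sq_radialRetract_sub_add_sq_le (hP : P.IsSymmetricProjection) (hR : 0 < R) {x y : V}
    (hx : R ≤ ‖P x‖) (hy : R ≤ ‖P y‖) :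
    ‖radialRetract P R x - radialRetract P R y‖ ^ 2 + (‖P x‖ - ‖P y‖) ^ 2 ≤ ‖x - y‖ ^ 2 := by
  have hsplit : radialRetract P R x - radialRetract P R y = (x - y) - P (x - y) +
      ((R / ‖P x‖) • P x - (R / ‖P y‖) • P y) := by
    rw [radialRetract, radialRetract, map_sub]; abel
  have h := norm_sq_smul_sub_smul_add_sq_le hR hx hy
  rw [hsplit, norm_sq_sub_map_add hP, map_sub]
  · linarith
  · simp only [map_sub, map_smul, map_map_of_isSymmetricProjection hP]

lemma abs_inner_map_sub_le (hP : P.IsSymmetricProjection) {δ : ℝ} {x y z : V}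
    (hxy : ‖P x‖ = ‖P y‖) (hxz : ‖x - z‖ ≤ δ) (hyz : ‖y - z‖ ≤ δ) :
    |inner ℝ (P z) (x - y)| ≤ δ * ‖x - y‖ := by
  have horth : inner ℝ (P x + P y) (x - y) = (0 : ℝ) := by
    rw [← map_add, ← inner_map_map_of_isSymmetricProjection hP, map_add, map_sub]
    exact (real_inner_add_sub_eq_zero_iff _ _).mpr hxy
  have hmid : (2 : ℝ) * inner ℝ (P z) (x - y) = -inner ℝ (P (x - z) + P (y - z)) (x - y) := by
    have hsum : P (x - z) + P (y - z) = (P x + P y) - (2 : ℝ) • P z := by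
      rw [map_sub, map_sub, two_smul]; abel
    rw [hsum, inner_sub_left, horth, real_inner_smul_left]
    ring
  have hle : |inner ℝ (P (x - z) + P (y - z)) (x - y)| ≤ (δ + δ) * ‖x - y‖ := by
    refine (abs_real_inner_le_norm _ _).trans ?_
    gcongr
    exact (norm_add_le _ _).trans (add_le_add
      ((norm_map_le_of_isSymmetricProjection hP _).trans hxz)
      ((norm_map_le_of_isSymmetricProjection hP _).trans hyz))
  have habs := congrArg abs hmid
  rw [abs_neg, abs_mul, abs_two] at habs
  linarith

lemma map_add_smul_map (hP : P.IsSymmetricProjection) (x : V) (c : ℝ) :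
    P (x + c • P x) = (1 + c) • P x := by
  rw [map_add, map_smul, map_map_of_isSymmetricProjection hP, add_smul, one_smul]

lemma norm_map_add_smul_map (hP : P.IsSymmetricProjection) (hR : 0 < R) {x : V}
    (hx : ‖P x‖ = R) {t : ℝ} (ht : 0 ≤ t) : ‖P (x + (t / R) • P x)‖ = R + t := by
  rw [map_add_smul_map hP, norm_smul, hx, Real.norm_of_nonneg (by positivity)]
  field_simp

lemma radialRetract_add_smul_map (hP : P.IsSymmetricProjection) (hR : 0 < R) {x : V}
    (hx : ‖P x‖ = R) {t : ℝ} (ht : 0 ≤ t) : radialRetract P R (x + (t / R) • P x) = x := by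
  have hcoef : R / (R + t) * (1 + t / R) = 1 := by
    have : R + t ≠ 0 := by positivity
    field_simp
  rw [radialRetract, norm_map_add_smul_map hP hR hx ht, map_add_smul_map hP, smul_smul, hcoef,
    add_smul, one_smul]
  abel

/-- Coordinates on the shells over a small piece of `‖P x‖ = R` whose normal is close to `e`: the
height above the hypersurface, and the projection of the foot point along `e`. -/
def shellChart (P : V →ₗ[ℝ] V) (R : ℝ) (e x : V) : LineProd (ℝ ∙ e)ᗮ :=
  pair (‖P x‖ - R) ((ℝ ∙ e)ᗮ.orthogonalProjectionOnto (radialRetract P R x))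

lemma lipschitzOnWith_shellChart (hP : P.IsSymmetricProjection) (hR : 0 < R) (e : V) :
    LipschitzOnWith 1 (shellChart P R e) (radialShell P R h A) := by
  refine LipschitzOnWith.of_dist_le_mul fun x hx y hy => ?_
  rw [NNReal.coe_one, one_mul, dist_eq_norm, dist_eq_norm,
    ← sq_le_sq₀ (norm_nonneg _) (norm_nonneg _), LineProd.norm_sq_eq]
  have hproj := (ℝ ∙ e)ᗮ.norm_orthogonalProjectionOnto_apply_le
    (radialRetract P R x - radialRetract P R y)
  calc (‖P x‖ - R - (‖P y‖ - R)) ^ 2 + ‖(ℝ ∙ e)ᗮ.orthogonalProjectionOnto (radialRetract P R x) -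
        (ℝ ∙ e)ᗮ.orthogonalProjectionOnto (radialRetract P R y)‖ ^ 2
      ≤ (‖P x‖ - ‖P y‖) ^ 2 + ‖radialRetract P R x - radialRetract P R y‖ ^ 2 := by
        rw [sub_sub_sub_cancel_right, ← map_sub]
        gcongr
    _ ≤ ‖x - y‖ ^ 2 := by
        rw [add_comm]
        exact norm_sq_radialRetract_sub_add_sq_le hP hR hx.1.1 hy.1.1

lemma prodDom_subset_image_shellChart (hP : P.IsSymmetricProjection) (hR : 0 < R)
    (hA : ∀ x ∈ A, ‖P x‖ = R) (e : V) :
    prodDom (Icc 0 h) ((ℝ ∙ e)ᗮ.orthogonalProjectionOnto '' A) ⊆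
      shellChart P R e '' radialShell P R h A := by
  rintro q ⟨⟨h₀, hh⟩, x, hx, hxq⟩
  have hnorm := norm_map_add_smul_map hP hR (hA x hx) h₀
  have hfoot := radialRetract_add_smul_map hP hR (hA x hx) h₀
  refine ⟨x + (q.fst / R) • P x, ⟨⟨?_, ?_⟩, hfoot.symm ▸ hx⟩, ?_⟩
  · linarith
  · linarith
  · rw [shellChart, hnorm, hfoot, hxq, add_sub_cancel_left]
    rfl

lemma norm_sub_le_norm_orthogonalProjectionOnto_sub (hP : P.IsSymmetricProjection) (hR : 0 < R)
    {x y z : V} (hx : ‖P x‖ = R) (hy : ‖P y‖ = R) (hz : ‖P z‖ = R) {ε : ℝ} (hε₁ : ε ^ 2 < 1)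
    (hxz : ‖x - z‖ ≤ ε * R) (hyz : ‖y - z‖ ≤ ε * R) :
    ‖x - y‖ ≤ (√(1 - ε ^ 2))⁻¹ *
      ‖(ℝ ∙ (R⁻¹ • P z))ᗮ.orthogonalProjectionOnto (x - y)‖ := by
  have hunit : ‖R⁻¹ • P z‖ = 1 := by
    rw [norm_smul, hz, norm_inv, Real.norm_of_nonneg hR.le, inv_mul_cancel₀ hR.ne']
  have hnormal : |inner ℝ (R⁻¹ • P z) (x - y)| ≤ ε * ‖x - y‖ := by
    have := abs_inner_map_sub_le hP (hx.trans hy.symm) hxz hyz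
    rw [real_inner_smul_left, abs_mul, abs_of_pos (inv_pos.mpr hR), inv_mul_le_iff₀ hR]
    linarith
  have hsq : inner ℝ (R⁻¹ • P z) (x - y) ^ 2 ≤ (ε * ‖x - y‖) ^ 2 := by
    rw [← sq_abs]; gcongr
  have hpyth := norm_sq_eq_inner_sq_add_norm_sq_orthogonalProjectionOnto hunit (x - y)
  rw [le_inv_mul_iff₀ (Real.sqrt_pos.mpr (sub_pos.mpr hε₁)),
    ← sq_le_sq₀ (by positivity) (norm_nonneg _), mul_pow, Real.sq_sqrt (sub_pos.mpr hε₁).le]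
  linarith

end Retract

section HausdorffMeasure

variable {X Y : Type*} [EMetricSpace X] [EMetricSpace Y] [MeasurableSpace X] [BorelSpace X]
  [MeasurableSpace Y] [BorelSpace Y] {K : ℝ≥0} {f : X → Y} {s : Set X}

lemma euclideanHausdorffMeasure_image_le_of_lipschitzOnWith (hf : LipschitzOnWith K f s) (d : ℕ) :
    μHE[d] (f '' s) ≤ (K : ℝ≥0∞) ^ d * μHE[d] s := by
  have h := hf.hausdorffMeasure_image_le (Nat.cast_nonneg d)
  rw [ENNReal.rpow_natCast] at h
  simp only [Measure.euclideanHausdorffMeasure_def, Measure.smul_apply, ENNReal.smul_def,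
    smul_eq_mul]
  rw [mul_left_comm]
  gcongr

lemma euclideanHausdorffMeasure_le_of_antilipschitzWith (hf : AntilipschitzWith K (s.domRestrict f))
    (d : ℕ) : μHE[d] s ≤ (K : ℝ≥0∞) ^ d * μHE[d] (f '' s) := by
  have h := hf.le_hausdorffMeasure_image (Nat.cast_nonneg d) univ
  have hval := (isometry_subtype_coe (s := s)).hausdorffMeasure_image (d := d)
    (Or.inl (Nat.cast_nonneg d)) univ
  rw [image_univ, Subtype.range_coe] at hval
  rw [ENNReal.rpow_natCast, image_univ, range_domRestrict, ← hval] at h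
  simp only [Measure.euclideanHausdorffMeasure_def, Measure.smul_apply, ENNReal.smul_def,
    smul_eq_mul]
  rw [mul_left_comm]
  gcongr

lemma euclideanHausdorffMeasure_eq_volume_of_finrank {V : Type*} [NormedAddCommGroup V]
    [InnerProductSpace ℝ V] [FiniteDimensional ℝ V] [MeasurableSpace V] [BorelSpace V] {d : ℕ}
    (hV : Module.finrank ℝ V = d) : (μHE[d] : Measure V) = volume := by
  rw [← hV, InnerProductSpace.euclideanHausdorffMeasure_eq_volume]

end HausdorffMeasure

section Shell

variable {V : Type*} [NormedAddCommGroup V] [InnerProductSpace ℝ V] [FiniteDimensional ℝ V]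
  [MeasurableSpace V] [BorelSpace V]

lemma volume_prodDom (I : Set ℝ) (D : Set V) : volume (prodDom I D) = volume I * volume D := by
  have h : MeasurePreserving (MeasurableEquiv.toLp 2 (ℝ × V)) volume volume :=
    WithLp.volume_preserving_toLp ℝ V
  rw [← h.measure_preimage_equiv (prodDom I D)]
  have hpre : MeasurableEquiv.toLp 2 (ℝ × V) ⁻¹' prodDom I D = I ×ˢ D := rfl
  rw [hpre, Measure.volume_eq_prod, Measure.prod_prod]

variable {P : V →ₗ[ℝ] V} {R h : ℝ} {m : ℕ}

lemma ofReal_mul_euclideanHausdorffMeasure_image_le (hV : Module.finrank ℝ V = m + 1)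
    (hP : P.IsSymmetricProjection) (hR : 0 < R) {A : Set V} (hA : ∀ x ∈ A, ‖P x‖ = R) {e : V}
    (he : e ≠ 0) :
    ENNReal.ofReal h * μHE[m] ((ℝ ∙ e)ᗮ.orthogonalProjectionOnto '' A) ≤
      volume (radialShell P R h A) := by
  have : Fact (Module.finrank ℝ V = m + 1) := ⟨hV⟩
  have hfr : Module.finrank ℝ (ℝ ∙ e)ᗮ = m := Submodule.finrank_orthogonal_span_singleton he
  have himage := euclideanHausdorffMeasure_image_le_of_lipschitzOnWith
    (lipschitzOnWith_shellChart (h := h) (A := A) hP hR e) (m + 1)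
  rw [euclideanHausdorffMeasure_eq_volume_of_finrank hV,
    euclideanHausdorffMeasure_eq_volume_of_finrank (by rw [finrank_lineProd, hfr]),
    ENNReal.coe_one, one_pow, one_mul] at himage
  calc _ = volume (prodDom (Icc 0 h) ((ℝ ∙ e)ᗮ.orthogonalProjectionOnto '' A)) := by
        rw [volume_prodDom, Real.volume_Icc, sub_zero,
          euclideanHausdorffMeasure_eq_volume_of_finrank hfr]
    _ ≤ _ := (measure_mono (prodDom_subset_image_shellChart hP hR hA e)).trans himage

lemma euclideanHausdorffMeasure_mul_le_of_norm_sub_le (hV : Module.finrank ℝ V = m + 1)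
    (hP : P.IsSymmetricProjection) (hR : 0 < R) {A : Set V} (hA : ∀ x ∈ A, ‖P x‖ = R) {ε : ℝ}
    (hε₁ : ε ^ 2 < 1) (hdiam : ∀ x ∈ A, ∀ y ∈ A, ‖x - y‖ ≤ ε * R) :
    μHE[m] A * ENNReal.ofReal h ≤
      ENNReal.ofReal (√(1 - ε ^ 2))⁻¹ ^ m * volume (radialShell P R h A) := by
  rcases A.eq_empty_or_nonempty with rfl | ⟨z, hz⟩
  · simp
  set e := R⁻¹ • P z
  have he : e ≠ 0 :=
    smul_ne_zero (inv_ne_zero hR.ne') (norm_ne_zero_iff.mp (by rw [hA z hz]; exact hR.ne'))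
  have hanti : AntilipschitzWith (√(1 - ε ^ 2))⁻¹.toNNReal
      (A.domRestrict (ℝ ∙ e)ᗮ.orthogonalProjectionOnto) := by
    refine AntilipschitzWith.of_le_mul_dist fun x y => ?_
    rw [Real.coe_toNNReal _ (by positivity), Subtype.dist_eq, dist_eq_norm, dist_eq_norm,
      domRestrict_apply, domRestrict_apply, ← map_sub]
    exact norm_sub_le_norm_orthogonalProjectionOnto_sub hP hR (hA x x.2) (hA y y.2) (hA z hz) hε₁
      (hdiam x x.2 z hz) (hdiam y y.2 z hz)
  calc μHE[m] A * ENNReal.ofReal h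
      ≤ ENNReal.ofReal (√(1 - ε ^ 2))⁻¹ ^ m *
          μHE[m] ((ℝ ∙ e)ᗮ.orthogonalProjectionOnto '' A) * ENNReal.ofReal h := by
        gcongr
        exact euclideanHausdorffMeasure_le_of_antilipschitzWith hanti m
    _ = ENNReal.ofReal (√(1 - ε ^ 2))⁻¹ ^ m *
          (ENNReal.ofReal h * μHE[m] ((ℝ ∙ e)ᗮ.orthogonalProjectionOnto '' A)) := by ring
    _ ≤ _ := by
        gcongr
        exact ofReal_mul_euclideanHausdorffMeasure_image_le hV hP hR hA he

lemma measurable_norm_map (P : V →ₗ[ℝ] V) : Measurable fun x => ‖P x‖ :=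
  P.continuous_of_finiteDimensional.measurable.norm

lemma measurable_radialRetract (P : V →ₗ[ℝ] V) (R : ℝ) : Measurable (radialRetract P R) := by
  have hP := P.continuous_of_finiteDimensional.measurable
  exact (measurable_id.sub hP).add ((measurable_const.div hP.norm).smul hP)

lemma measurableSet_radialShell (P : V →ₗ[ℝ] V) (R h : ℝ) {A : Set V} (hA : MeasurableSet A) :
    MeasurableSet (radialShell P R h A) :=
  (measurable_norm_map P measurableSet_Icc).inter (measurable_radialRetract P R hA)

lemma euclideanHausdorffMeasure_mul_le_of_sq_lt_one (hV : Module.finrank ℝ V = m + 1)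
    (hP : P.IsSymmetricProjection) (hR : 0 < R) {A : Set V} (hA : MeasurableSet A) {ε : ℝ}
    (hε : 0 < ε) (hε₁ : ε ^ 2 < 1) :
    μHE[m] (A ∩ {x | ‖P x‖ = R}) * ENNReal.ofReal h ≤
      ENNReal.ofReal (√(1 - ε ^ 2))⁻¹ ^ m * volume (radialShell P R h A) := by
  obtain ⟨B, hBm, hBd, hBu, hB⟩ := exists_small_partition
    (hA.inter (measurableSet_eq_fun (measurable_norm_map P) (measurable_const (a := R))))
    (mul_pos hε hR)
  have hpiece (i : ℕ) := euclideanHausdorffMeasure_mul_le_of_norm_sub_le (h := h) hV hP hR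
    (A := B i) (fun x hx => (hBu.subset (mem_iUnion_of_mem i hx)).2) hε₁
    fun x hx y hy => dist_eq_norm x y ▸ (hB i x hx y hy).le
  have hdisj : Pairwise (Function.onFun Disjoint fun i => radialShell P R h (B i)) :=
    fun i j hij => Set.disjoint_left.mpr fun x hx hx' =>
      Set.disjoint_left.mp (hBd hij) hx.2 hx'.2
  calc μHE[m] (A ∩ {x | ‖P x‖ = R}) * ENNReal.ofReal h
      ≤ (∑' i, μHE[m] (B i)) * ENNReal.ofReal h := by
        rw [← hBu]
        gcongr
        exact measure_iUnion_le _
    _ = ∑' i, μHE[m] (B i) * ENNReal.ofReal h := ENNReal.tsum_mul_right.symm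
    _ ≤ ∑' i, ENNReal.ofReal (√(1 - ε ^ 2))⁻¹ ^ m * volume (radialShell P R h (B i)) :=
        ENNReal.tsum_le_tsum hpiece
    _ = ENNReal.ofReal (√(1 - ε ^ 2))⁻¹ ^ m * volume (⋃ i, radialShell P R h (B i)) := by
        rw [ENNReal.tsum_mul_left,
          measure_iUnion hdisj fun i => measurableSet_radialShell P R h (hBm i)]
    _ ≤ _ := by
        gcongr
        exact iUnion_subset fun i x hx =>
          ⟨hx.1, (hBu.subset (mem_iUnion_of_mem i hx.2)).1⟩

lemma tendsto_ofReal_inv_sqrt_one_sub_sq_pow (m : ℕ) :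
    Tendsto (fun ε : ℝ => ENNReal.ofReal (√(1 - ε ^ 2))⁻¹ ^ m) (𝓝[>] 0) (𝓝 1) := by
  have hcont : ContinuousAt (fun ε : ℝ => (√(1 - ε ^ 2))⁻¹) 0 :=
    ContinuousAt.inv₀ (by fun_prop) (by norm_num)
  have hlim : Tendsto (fun ε : ℝ => (√(1 - ε ^ 2))⁻¹) (𝓝[>] 0) (𝓝 1) := by
    simpa using hcont.tendsto.mono_left (nhdsWithin_le_nhds (s := Ioi (0 : ℝ)))
  simpa using ENNReal.Tendsto.pow (n := m) (ENNReal.tendsto_ofReal hlim)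

lemma euclideanHausdorffMeasure_mul_le_volume_radialShell (hV : Module.finrank ℝ V = m + 1)
    (hP : P.IsSymmetricProjection) (hR : 0 < R) {A : Set V} (hA : MeasurableSet A) :
    μHE[m] (A ∩ {x | ‖P x‖ = R}) * ENNReal.ofReal h ≤ volume (radialShell P R h A) := by
  have hlim := ENNReal.Tendsto.mul_const (b := volume (radialShell P R h A))
    (tendsto_ofReal_inv_sqrt_one_sub_sq_pow m) (Or.inl one_ne_zero)
  rw [one_mul] at hlim
  refine ge_of_tendsto hlim ?_
  filter_upwards [Ioo_mem_nhdsGT (zero_lt_one' ℝ)] with ε hε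
  exact euclideanHausdorffMeasure_mul_le_of_sq_lt_one hV hP hR hA hε.1
    (pow_lt_one₀ hε.1.le hε.2 two_ne_zero)

end Shell

lemma le_of_mul_le_pow_sub {a : ℝ≥0∞} {C R : ℝ} {n : ℕ}
    (H : ∀ h : ℝ, 0 < h → a * ENNReal.ofReal h ≤ ENNReal.ofReal (C * ((R + h) ^ n - R ^ n))) :
    a ≤ ENNReal.ofReal (C * (n * R ^ (n - 1))) := by
  have hslope : Tendsto (fun h : ℝ => h⁻¹ • (C * (R + h) ^ n - C * R ^ n)) (𝓝[>] 0)
      (𝓝 (C * (n * R ^ (n - 1)))) :=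
    (hasDerivAt_iff_tendsto_slope_zero.mp ((hasDerivAt_pow n R).const_mul C)).mono_left
      (nhdsWithin_mono _ fun x hx => ne_of_gt hx)
  refine ge_of_tendsto (ENNReal.tendsto_ofReal hslope) ?_
  filter_upwards [self_mem_nhdsWithin] with h hh
  rw [mem_Ioi] at hh
  have hle := H h hh
  rw [← ENNReal.le_div_iff_mul_le (Or.inl (by simpa using hh)) (Or.inl ENNReal.ofReal_ne_top),
    ← ENNReal.ofReal_div_of_pos hh] at hle
  rwa [smul_eq_mul, ← mul_sub, inv_mul_eq_div]

section Sphere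

variable {V : Type*} [NormedAddCommGroup V] [InnerProductSpace ℝ V] [FiniteDimensional ℝ V]
  [MeasurableSpace V] [BorelSpace V] {N : ℕ} {R : ℝ}

lemma volume_closedBall_eq (hN : 1 ≤ N) (hV : Module.finrank ℝ V = N) (hR : 0 ≤ R) :
    volume (Metric.closedBall (0 : V) R) = ENNReal.ofReal (unitBallVolume N * R ^ N) := by
  have : Nontrivial V := Module.nontrivial_of_finrank_pos (R := ℝ) (by omega)
  rw [Measure.addHaar_closedBall _ _ hR, hV, mul_comm (unitBallVolume N),
    ENNReal.ofReal_mul (by positivity), ← hV, ← volume_real_ball_one V,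
    ofReal_measureReal Metric.isBounded_ball.measure_lt_top.ne]

lemma volume_annulus_eq (hN : 1 ≤ N) (hV : Module.finrank ℝ V = N) (hR : 0 < R) {h : ℝ}
    (hh : 0 < h) : volume {x : V | ‖x‖ ∈ Icc R (R + h)} =
      ENNReal.ofReal (unitBallVolume N * ((R + h) ^ N - R ^ N)) := by
  have : Nontrivial V := Module.nontrivial_of_finrank_pos (R := ℝ) (by omega)
  have hdiff : {x : V | ‖x‖ ∈ Icc R (R + h)} = Metric.closedBall 0 (R + h) \ Metric.ball 0 R := by
    ext x; simp [and_comm]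
  have hpos := unitBallVolume_pos N
  rw [hdiff, measure_sdiff
      ((Metric.ball_subset_ball (by linarith)).trans Metric.ball_subset_closedBall)
      Metric.isOpen_ball.measurableSet.nullMeasurableSet Metric.isBounded_ball.measure_lt_top.ne,
    ← Measure.addHaar_closedBall_eq_addHaar_ball, volume_closedBall_eq hN hV (by linarith),
    volume_closedBall_eq hN hV hR.le, ← ENNReal.ofReal_sub _ (by positivity), mul_sub]

lemma isSymmetricProjection_id {E : Type*} [NormedAddCommGroup E] [InnerProductSpace ℝ E] :
    (LinearMap.id : E →ₗ[ℝ] E).IsSymmetricProjection :=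
  ⟨rfl, fun _ _ => rfl⟩

lemma euclideanHausdorffMeasure_sphere_le {m : ℕ} (hV : Module.finrank ℝ V = m + 1)
    (hR : 0 < R) : μHE[m] (Metric.sphere (0 : V) R) ≤
      ENNReal.ofReal (unitBallVolume (m + 1) * ((m + 1 : ℕ) * R ^ m)) := by
  refine le_of_mul_le_pow_sub (n := m + 1) fun h hh => ?_
  have hsphere : univ ∩ {x : V | ‖LinearMap.id (R := ℝ) x‖ = R} = Metric.sphere 0 R := by
    ext x; simp
  rw [← hsphere, ← volume_annulus_eq le_add_self hV hR hh]
  exact (euclideanHausdorffMeasure_mul_le_volume_radialShell hV isSymmetricProjection_id hR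
    MeasurableSet.univ).trans (measure_mono fun x hx => hx.1)

end Sphere

/-- Orthogonal projection of `ℝ × ℝ × ℝⁿ` onto its last factor. -/
def lastProj (n : ℕ) : LineProd (LineProd (EucSp n)) →ₗ[ℝ] LineProd (LineProd (EucSp n)) :=
  (inr _).toLinearMap ∘ₗ (inr _).toLinearMap ∘ₗ WithLp.sndₗ 2 ℝ ℝ (EucSp n) ∘ₗ
    WithLp.sndₗ 2 ℝ ℝ (LineProd (EucSp n))

lemma lastProj_apply (n : ℕ) (q : LineProd (LineProd (EucSp n))) :
    lastProj n q = pair 0 (pair 0 q.snd.snd) := rfl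

lemma norm_lastProj (n : ℕ) (q : LineProd (LineProd (EucSp n))) :
    ‖lastProj n q‖ = ‖q.snd.snd‖ := by
  rw [← sq_eq_sq₀ (norm_nonneg _) (norm_nonneg _), LineProd.norm_sq_eq, LineProd.norm_sq_eq]
  simp [lastProj_apply]

lemma isSymmetricProjection_lastProj (n : ℕ) : (lastProj n).IsSymmetricProjection where
  isIdempotentElem := rfl
  isSymmetric x y := by simp [lastProj_apply]

lemma euclideanHausdorffMeasure_tube_le {n : ℕ} (hn : 1 ≤ n) {L₁ L₂ R : ℝ} (hR : 0 < R)
    (h₁ : 0 < L₁) (h₂ : 0 < L₂) :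
    μHE[n + 1] (prodDom (Ico 0 L₁) (prodDom (Ico 0 L₂) univ) ∩
        {q : LineProd (LineProd (EucSp n)) | ‖q.snd.snd‖ = R}) ≤
      ENNReal.ofReal (L₁ * L₂ * unitBallVolume n * (n * R ^ (n - 1))) := by
  refine le_of_mul_le_pow_sub (n := n) fun h hh => ?_
  have hV : Module.finrank ℝ (LineProd (LineProd (EucSp n))) = n + 1 + 1 := by
    rw [finrank_lineProd, finrank_lineProd, finrank_euclideanSpace_fin]
  simp only [← norm_lastProj]
  have hsub : radialShell (lastProj n) R h (prodDom (Ico 0 L₁) (prodDom (Ico 0 L₂) univ)) ⊆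
      prodDom (Ico 0 L₁) (prodDom (Ico 0 L₂) {x | ‖x‖ ∈ Icc R (R + h)}) := by
    rintro q ⟨hq, hq₁, hq₂, -⟩
    rw [norm_lastProj] at hq
    have hfst : (radialRetract (lastProj n) R q).fst = q.fst := by
      simp [radialRetract, lastProj_apply]
    have hsnd : (radialRetract (lastProj n) R q).snd.fst = q.snd.fst := by
      simp [radialRetract, lastProj_apply]
    exact ⟨hfst ▸ hq₁, hsnd ▸ hq₂, hq⟩
  calc _ ≤ volume (radialShell (lastProj n) R h _) :=
        euclideanHausdorffMeasure_mul_le_volume_radialShell hV (isSymmetricProjection_lastProj n) hR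
          (measurableSet_prodDom measurableSet_Ico
            (measurableSet_prodDom measurableSet_Ico MeasurableSet.univ))
    _ ≤ _ := measure_mono hsub
    _ = _ := by
        rw [volume_prodDom, volume_prodDom, Real.volume_Ico, Real.volume_Ico, sub_zero, sub_zero,
          volume_annulus_eq hn finrank_euclideanSpace_fin hR hh, mul_assoc (L₁ * L₂),
          ENNReal.ofReal_mul (p := L₁ * L₂) (by positivity), ENNReal.ofReal_mul h₁.le, mul_assoc]

section HausScale

/-- The ratio between Lebesgue measure and Mathlib's Hausdorff measure in dimension `d`. -/
def hausScale (d : ℕ) : ℝ≥0 :=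
  Measure.addHaarScalarFactor (volume : Measure (EucSp d)) (μH[(d : ℝ)] : Measure (EucSp d))

lemma hausScale_ne_zero (d : ℕ) : hausScale d ≠ 0 :=
  Measure.addHaarScalarFactor_volume_hausdorffMeasure_ne_zero d

lemma hausScale_pos (d : ℕ) : (0 : ℝ) < hausScale d :=
  NNReal.coe_pos.mpr (pos_iff_ne_zero.mpr (hausScale_ne_zero d))

variable {Y : Type*} [EMetricSpace Y] [hm : MeasurableSpace Y] [BorelSpace Y] {d : ℕ} {s : Set Y}

lemma hausScale_mul_haus (d : ℕ) (s : Set Y) : (hausScale d : ℝ≥0∞) * haus Y d s = μHE[d] s := by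
  have hborel : hm = borel Y := BorelSpace.measurable_eq
  have hhaus : haus Y d s = μH[(d : ℝ)] s := by subst hborel; rfl
  rw [Measure.euclideanHausdorffMeasure_def, hhaus]
  rfl

lemma haus_eq_ofReal_iff {v : ℝ} :
    haus Y d s = ENNReal.ofReal v ↔ μHE[d] s = ENNReal.ofReal (hausScale d * v) := by
  rw [← hausScale_mul_haus, ENNReal.ofReal_mul (hausScale_pos d).le, ENNReal.ofReal_coe_nnreal,
    ENNReal.mul_right_inj (by exact_mod_cast hausScale_ne_zero d) ENNReal.coe_ne_top]

lemma div_hausScale_le_haus_iff {a : ℝ≥0∞} : a / hausScale d ≤ haus Y d s ↔ a ≤ μHE[d] s := by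
  rw [← hausScale_mul_haus, ENNReal.div_le_iff_le_mul
    (Or.inl (by exact_mod_cast hausScale_ne_zero d)) (Or.inl ENNReal.coe_ne_top), mul_comm]

lemma haus_le_div_hausScale_iff {a : ℝ≥0∞} : haus Y d s ≤ a / hausScale d ↔ μHE[d] s ≤ a := by
  rw [← hausScale_mul_haus, ENNReal.le_div_iff_mul_le
    (Or.inl (by exact_mod_cast hausScale_ne_zero d)) (Or.inl ENNReal.coe_ne_top), mul_comm]

end HausScale

namespace IsFlatCover

section Ball

variable {V Y : Type*} [NormedAddCommGroup V] [NormedSpace ℝ V] [FiniteDimensional ℝ V]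
  [MeasurableSpace V] [EMetricSpace Y] {p : V → Y} {D Λ : Set V}

lemma isClosed_image_closedBall (hp : IsFlatCover p D Λ) (ρ : ℝ) :
    IsClosed (p '' Metric.closedBall 0 ρ) :=
  ((isCompact_closedBall _ _).image hp.lipschitz.continuous).isClosed

lemma isClosedRegion_image_closedBall (hp : IsFlatCover p D Λ) {ρ : ℝ} (hρ : 0 < ρ) :
    IsClosedRegion (p '' Metric.closedBall 0 ρ) := by
  refine ⟨p '' Metric.ball 0 ρ, hp.isOpenMap _ Metric.isOpen_ball, Subset.antisymm ?_
    (closure_minimal (image_mono Metric.ball_subset_closedBall) (hp.isClosed_image_closedBall ρ))⟩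
  rw [← closure_ball _ hρ.ne']
  exact image_closure_subset_closure_image hp.lipschitz.continuous

lemma frontier_image_closedBall_subset (hp : IsFlatCover p D Λ) (ρ : ℝ) :
    frontier (p '' Metric.closedBall 0 ρ) ⊆ p '' Metric.sphere 0 ρ := by
  rw [(hp.isClosed_image_closedBall ρ).frontier_eq]
  rintro _ ⟨⟨x, hx, rfl⟩, hx'⟩
  refine ⟨x, le_antisymm hx (not_lt.mp fun hlt => hx' ?_), rfl⟩
  exact interior_maximal (image_mono Metric.ball_subset_closedBall)
    (hp.isOpenMap _ Metric.isOpen_ball) ⟨x, hlt, rfl⟩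

end Ball

section Profile

variable {V Y : Type*} [NormedAddCommGroup V] [InnerProductSpace ℝ V] [FiniteDimensional ℝ V]
  [MeasurableSpace V] [BorelSpace V] [EMetricSpace Y] {p : V → Y} {D Λ : Set V} {m : ℕ}

lemma le_isoProfile (hp : IsFlatCover p D Λ) (hV : Module.finrank ℝ V = m + 1) {Ψ : ℝ → ℝ}
    (hΨ : RelaxedIsoperimetric D Λ Ψ) {v : ℝ} (hv : 0 ≤ v) :
    ENNReal.ofReal (Ψ (hausScale (m + 1) * v)) / hausScale m ≤
      isoProfile Y (m + 1) (ENNReal.ofReal v) := by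
  let _ : MeasurableSpace Y := borel Y
  have _ : BorelSpace Y := ⟨rfl⟩
  refine le_iInf₂ fun U hU => ?_
  obtain ⟨⟨W, -, hWU⟩, hvol⟩ := hU
  rw [haus_eq_ofReal_iff] at hvol
  rw [Nat.add_sub_cancel, div_hausScale_le_haus_iff]
  have h := hp.le_of_relaxedIsoperimetric hV hΨ (U := U)
    (by rw [hWU]; exact isClosed_closure.measurableSet) (by rw [hvol]; exact ENNReal.ofReal_ne_top)
  rwa [hvol, ENNReal.toReal_ofReal (mul_nonneg (hausScale_pos _).le hv)] at h

lemma isoProfile_le_of_isometric (hp : IsFlatCover p D Λ) (hV : Module.finrank ℝ V = m + 1)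
    {δ : ℝ} (hδ : 0 < δ) (hiso : ∀ x y, dist x y < δ → edist (p x) (p y) = edist x y) {ρ v : ℝ}
    (hρ : 0 < ρ) (hρδ : 2 * ρ < δ)
    (hv : unitBallVolume (m + 1) * ρ ^ (m + 1) = hausScale (m + 1) * v) :
    isoProfile Y (m + 1) (ENNReal.ofReal v) ≤
      ENNReal.ofReal (unitBallVolume (m + 1) * ((m + 1 : ℕ) * ρ ^ m)) / hausScale m := by
  let _ : MeasurableSpace Y := borel Y
  have _ : BorelSpace Y := ⟨rfl⟩
  have hinj : InjOn p (Metric.closedBall 0 ρ) := fun x hx y hy hxy => by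
    have hd : dist x y < δ := by
      linarith [dist_triangle_right x y 0, Metric.mem_closedBall.mp hx, Metric.mem_closedBall.mp hy]
    rw [← edist_eq_zero, ← hiso x y hd, hxy, edist_self]
  have hvol : μHE[m + 1] (p '' Metric.closedBall 0 ρ) =
      ENNReal.ofReal (hausScale (m + 1) * v) := by
    rw [← hv, ← volume_closedBall_eq le_add_self hV hρ.le,
      ← euclideanHausdorffMeasure_eq_volume_of_finrank hV]
    exact euclideanHausdorffMeasure_image_of_locallyIsometric hp.lipschitz.continuous hδ hiso _
      Metric.isClosed_closedBall.measurableSet hinj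
  refine (iInf₂_le (p '' Metric.closedBall 0 ρ)
    ⟨hp.isClosedRegion_image_closedBall hρ, haus_eq_ofReal_iff.mpr hvol⟩).trans ?_
  rw [Nat.add_sub_cancel, haus_le_div_hausScale_iff]
  have himage := euclideanHausdorffMeasure_image_le_of_lipschitzOnWith
    (hp.lipschitz.lipschitzOnWith (s := Metric.sphere (0 : V) ρ)) m
  rw [ENNReal.coe_one, one_pow, one_mul] at himage
  exact (measure_mono (hp.frontier_image_closedBall_subset ρ)).trans
    (himage.trans (euclideanHausdorffMeasure_sphere_le hV hρ))

lemma exists_isoProfile_le_eucIso (hp : IsFlatCover p D Λ) (hV : Module.finrank ℝ V = m + 1) :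
    ∃ v₀ : ℝ, 0 < v₀ ∧ ∀ v, 0 < v → v ≤ v₀ → isoProfile Y (m + 1) (ENNReal.ofReal v) ≤
      ENNReal.ofReal (eucIso (m + 1) (hausScale (m + 1) * v)) / hausScale m := by
  obtain ⟨δ, hδ, hiso⟩ := hp.exists_isometric
  have hscale := hausScale_pos (m + 1)
  have hball := unitBallVolume_pos (m + 1)
  refine ⟨unitBallVolume (m + 1) * (δ / 3) ^ (m + 1) / hausScale (m + 1), by positivity,
    fun v hv hv₀ => ?_⟩
  rw [le_div_iff₀ hscale, mul_comm] at hv₀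
  have ha : 0 < hausScale (m + 1) * v := mul_pos hscale hv
  have hρ := ballRadius_pos (m := m + 1) ha
  have hρv := unitBallVolume_mul_ballRadius_pow (m := m + 1) le_add_self ha.le
  have hρδ : ballRadius (m + 1) (hausScale (m + 1) * v) ≤ δ / 3 := by
    rw [← hρv] at hv₀
    exact (pow_le_pow_iff_left₀ hρ.le (by positivity) (Nat.succ_ne_zero m)).mp
      (le_of_mul_le_mul_left hv₀ hball)
  refine (hp.isoProfile_le_of_isometric hV hδ hiso hρ (by linarith) hρv).trans_eq ?_
  rw [eucIso_eq_ballRadius_pow le_add_self ha, Nat.add_sub_cancel, mul_left_comm, mul_assoc]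

lemma exists_isoProfile_eq_eucIso (hp : IsFlatCover p D Λ) (hV : Module.finrank ℝ V = m + 1)
    {c : ℝ} (hc : 0 < c) (hiso : RelaxedIsoperimetric D Λ (truncEucIso (m + 1) c)) :
    ∃ v₀ : ℝ, 0 < v₀ ∧ ∀ v, 0 < v → v ≤ v₀ → isoProfile Y (m + 1) (ENNReal.ofReal v) =
      ENNReal.ofReal (eucIso (m + 1) (hausScale (m + 1) * v)) / hausScale m := by
  obtain ⟨v₁, hv₁, hle⟩ := hp.exists_isoProfile_le_eucIso hV
  have hscale := hausScale_pos (m + 1)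
  refine ⟨min v₁ (c / hausScale (m + 1)), by positivity, fun v hv hv₀ =>
    le_antisymm (hle v hv (hv₀.trans (min_le_left _ _))) ?_⟩
  have hge := hp.le_isoProfile hV hiso hv.le
  have hvc := hv₀.trans (min_le_right _ _)
  rw [le_div_iff₀ hscale, mul_comm] at hvc
  rwa [truncEucIso_of_le hvc] at hge

end Profile

end IsFlatCover

section Torus

variable {r1 r2 : ℝ} {n : ℕ}

lemma isFlatCover_S1R {r : ℝ} (hr : 0 < r) (m : ℕ) :
    IsFlatCover (Y := S1R r m) (circleCover (2 * Real.pi * r) (id : EucSp m → EucSp m))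
      (prodDom (Ico 0 (2 * Real.pi * r)) univ) (prodPeriods {2 * Real.pi * r} ∅) :=
  (isFlatCover_id (EucSp m)).circleCover (by positivity)

lemma isFlatCover_T2R (hr1 : 0 < r1) (hr2 : 0 < r2) (n : ℕ) :
    IsFlatCover (Y := T2R r1 r2 n) (circleCover (2 * Real.pi * r1)
      (circleCover (2 * Real.pi * r2) (id : EucSp n → EucSp n)))
      (prodDom (Ico 0 (2 * Real.pi * r1)) (prodDom (Ico 0 (2 * Real.pi * r2)) univ))
      (prodPeriods {2 * Real.pi * r1} (prodPeriods {2 * Real.pi * r2} ∅)) :=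
  (isFlatCover_S1R hr2 n).circleCover (by positivity)

lemma finrank_lineProd_eucSp (m : ℕ) : Module.finrank ℝ (LineProd (EucSp m)) = m + 1 := by
  rw [finrank_lineProd, finrank_euclideanSpace_fin]

lemma finrank_lineProd_lineProd_eucSp (n : ℕ) :
    Module.finrank ℝ (LineProd (LineProd (EucSp n))) = n + 2 := by
  rw [finrank_lineProd, finrank_lineProd_eucSp]

lemma exists_isoProfile_S1R_eq_eucIso {r : ℝ} (hr : 0 < r) {m : ℕ} (hm : 1 ≤ m) :
    ∃ v₀ : ℝ, 0 < v₀ ∧ ∀ v, 0 < v → v ≤ v₀ → isoProfile (S1R r m) (m + 1) (ENNReal.ofReal v) =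
      ENNReal.ofReal (eucIso (m + 1) (hausScale (m + 1) * v)) / hausScale m := by
  obtain ⟨c, hc, hiso⟩ := relaxedIsoperimetric_cylinder_small (L := 2 * Real.pi * r) hm
    (by positivity)
  exact (isFlatCover_S1R hr m).exists_isoProfile_eq_eucIso (finrank_lineProd_eucSp m) hc hiso

lemma exists_isoProfile_T2R_eq_eucIso (hr1 : 0 < r1) (hr2 : 0 < r2) (hn : 1 ≤ n) :
    ∃ v₀ : ℝ, 0 < v₀ ∧ ∀ v, 0 < v → v ≤ v₀ →
      isoProfile (T2R r1 r2 n) (n + 2) (ENNReal.ofReal v) =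
        ENNReal.ofReal (eucIso (n + 2) (hausScale (n + 2) * v)) / hausScale (n + 1) := by
  obtain ⟨c, hc, hiso⟩ := relaxedIsoperimetric_torus_small (L₁ := 2 * Real.pi * r1)
    (L₂ := 2 * Real.pi * r2) hn (by positivity) (by positivity)
  exact (isFlatCover_T2R hr1 hr2 n).exists_isoProfile_eq_eucIso
    (finrank_lineProd_lineProd_eucSp n) hc hiso

lemma continuous_t2euc : Continuous (t2euc : T2R r1 r2 n → EucSp n) :=
  continuous_snd.comp ((WithLp.homeomorphProd 2 (Circ r2) (EucSp n)).continuous.comp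
    (continuous_snd.comp (WithLp.homeomorphProd 2 (Circ r1) (S1R r2 n)).continuous))

lemma isOpenMap_t2euc : IsOpenMap (t2euc : T2R r1 r2 n → EucSp n) :=
  isOpenMap_snd.comp ((WithLp.homeomorphProd 2 (Circ r2) (EucSp n)).isOpenMap.comp
    (isOpenMap_snd.comp (WithLp.homeomorphProd 2 (Circ r1) (S1R r2 n)).isOpenMap))

lemma tball_eq_preimage (R : ℝ) : tball r1 r2 n R = t2euc ⁻¹' Metric.closedBall 0 R := by
  ext p; simp [tball]

lemma isClosedRegion_tball {R : ℝ} (hR : 0 < R) : IsClosedRegion (tball r1 r2 n R) := by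
  refine ⟨t2euc ⁻¹' Metric.ball 0 R, Metric.isOpen_ball.preimage continuous_t2euc, ?_⟩
  rw [tball_eq_preimage, ← closure_ball _ hR.ne',
    isOpenMap_t2euc.preimage_closure_eq_closure_preimage continuous_t2euc]

lemma frontier_tball {R : ℝ} (hR : 0 < R) :
    frontier (tball r1 r2 n R) = t2euc ⁻¹' Metric.sphere 0 R := by
  rw [tball_eq_preimage, ← isOpenMap_t2euc.preimage_frontier_eq_frontier_preimage continuous_t2euc,
    frontier_closedBall _ hR.ne']

lemma isoProfile_le_fA (v : ℝ≥0∞) : isoProfile (T2R r1 r2 n) (n + 2) v ≤ fA r1 r2 n v :=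
  le_iInf₂ fun R hR => iInf₂_le (tball r1 r2 n R) ⟨isClosedRegion_tball hR.1, hR.2⟩

lemma preimage_tball_inter (L₁ L₂ R : ℝ) :
    circleCover (2 * Real.pi * r1) (circleCover (2 * Real.pi * r2) (id : EucSp n → EucSp n))
        ⁻¹' tball r1 r2 n R ∩ prodDom (Ico 0 L₁) (prodDom (Ico 0 L₂) univ) =
      prodDom (Ico 0 L₁) (prodDom (Ico 0 L₂) (Metric.closedBall 0 R)) := by
  ext q
  constructor
  · rintro ⟨hq, hq₁, hq₂, -⟩
    exact ⟨hq₁, hq₂, mem_closedBall_zero_iff.mpr hq⟩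
  · rintro ⟨hq₁, hq₂, hq⟩
    exact ⟨mem_closedBall_zero_iff.mp hq, hq₁, hq₂, trivial⟩

lemma haus_tball (hr1 : 0 < r1) (hr2 : 0 < r2) (hn : 1 ≤ n) {R v : ℝ} (hR : 0 ≤ R)
    (hRv : 2 * Real.pi * r1 * (2 * Real.pi * r2) * (unitBallVolume n * R ^ n) =
      hausScale (n + 2) * v) :
    haus (T2R r1 r2 n) (n + 2) (tball r1 r2 n R) = ENNReal.ofReal v := by
  let _ : MeasurableSpace (T2R r1 r2 n) := borel _
  have _ : BorelSpace (T2R r1 r2 n) := ⟨rfl⟩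
  have hclosed : IsClosed (tball r1 r2 n R) := by
    rw [tball_eq_preimage]; exact Metric.isClosed_closedBall.preimage continuous_t2euc
  rw [haus_eq_ofReal_iff, ← (isFlatCover_T2R hr1 hr2 n).euclideanHausdorffMeasure_preimage_inter _
    hclosed.measurableSet, preimage_tball_inter,
    euclideanHausdorffMeasure_eq_volume_of_finrank (finrank_lineProd_lineProd_eucSp n), ← hRv,
    volume_prodDom, volume_prodDom, Real.volume_Ico, Real.volume_Ico, sub_zero, sub_zero,
    volume_closedBall_eq hn finrank_euclideanSpace_fin hR, ← ENNReal.ofReal_mul (by positivity),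
    ← ENNReal.ofReal_mul (by positivity), mul_assoc (2 * Real.pi * r1)]

lemma haus_frontier_tball_le (hr1 : 0 < r1) (hr2 : 0 < r2) (hn : 1 ≤ n) {R : ℝ} (hR : 0 < R) :
    haus (T2R r1 r2 n) (n + 1) (frontier (tball r1 r2 n R)) ≤
      ENNReal.ofReal (2 * Real.pi * r1 * (2 * Real.pi * r2) * unitBallVolume n *
        (n * R ^ (n - 1))) / hausScale (n + 1) := by
  let _ : MeasurableSpace (T2R r1 r2 n) := borel _
  have _ : BorelSpace (T2R r1 r2 n) := ⟨rfl⟩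
  rw [haus_le_div_hausScale_iff,
    ← (isFlatCover_T2R hr1 hr2 n).euclideanHausdorffMeasure_preimage_inter _
      isClosed_frontier.measurableSet, frontier_tball hR]
  refine le_trans (measure_mono ?_) (euclideanHausdorffMeasure_tube_le hn hR
    (L₁ := 2 * Real.pi * r1) (L₂ := 2 * Real.pi * r2) (by positivity) (by positivity))
  rintro q ⟨hq, hqD⟩
  exact ⟨hqD, mem_sphere_zero_iff_norm.mp hq⟩

lemma mul_eucIso_div {N : ℕ} {L₁ L₂ w : ℝ} (h₁ : 0 < L₁) (h₂ : 0 < L₂) (hw : 0 < w) :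
    L₁ * L₂ * eucIso N (w / (L₁ * L₂)) =
      N * unitBallVolume N ^ (1 / N : ℝ) * L₂ ^ (1 - ((N - 1) / N : ℝ)) *
        L₁ ^ (1 - ((N - 1) / N : ℝ)) * w ^ ((N - 1) / N : ℝ) := by
  rw [eucIso_of_pos (by positivity), Real.div_rpow hw.le (by positivity),
    Real.mul_rpow h₁.le h₂.le, Real.rpow_sub h₁, Real.rpow_sub h₂, Real.rpow_one, Real.rpow_one]
  ring

lemma fA_le (hr1 : 0 < r1) (hr2 : 0 < r2) (hn : 1 ≤ n) {v : ℝ} (hv : 0 < v) :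
    fA r1 r2 n (ENNReal.ofReal v) ≤ ENNReal.ofReal (2 * Real.pi * r1 * (2 * Real.pi * r2) *
      eucIso n (hausScale (n + 2) * v / (2 * Real.pi * r1 * (2 * Real.pi * r2)))) /
        hausScale (n + 1) := by
  have hscale := hausScale_pos (n + 2)
  set a := hausScale (n + 2) * v / (2 * Real.pi * r1 * (2 * Real.pi * r2)) with ha
  have ha₀ : 0 < a := by positivity
  have hR := ballRadius_pos (m := n) ha₀
  refine (iInf₂_le (ballRadius n a) ⟨hR, haus_tball hr1 hr2 hn hR.le ?_⟩).trans
    ((haus_frontier_tball_le hr1 hr2 hn hR).trans_eq ?_)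
  · rw [eucIso_eq_ballRadius_pow hn ha₀]
    congr 2
    ring
  · rw [unitBallVolume_mul_ballRadius_pow hn ha₀.le, ha]
    field_simp

lemma exists_isoProfile_T2R_eq_fA (hr1 : 0 < r1) (hr2 : 0 < r2) (hn : 1 ≤ n) :
    ∃ v₀ : ℝ, 0 < v₀ ∧ ∀ v, v₀ ≤ v →
      isoProfile (T2R r1 r2 n) (n + 2) (ENNReal.ofReal v) = fA r1 r2 n (ENNReal.ofReal v) := by
  have h₁ : 0 < 2 * Real.pi * r1 := by positivity
  have h₂ : 0 < 2 * Real.pi * r2 := by positivity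
  obtain ⟨c, hc, hiso⟩ := relaxedIsoperimetric_torus_large hn h₁ h₂
  have hscale := hausScale_pos (n + 2)
  refine ⟨c / hausScale (n + 2), by positivity, fun v hv => le_antisymm (isoProfile_le_fA _) ?_⟩
  have hv₀ : 0 < v := lt_of_lt_of_le (by positivity) hv
  have hge := (isFlatCover_T2R hr1 hr2 n).le_isoProfile (finrank_lineProd_lineProd_eucSp n) hiso
    hv₀.le
  rw [div_le_iff₀ hscale, mul_comm] at hv
  rw [truncPowerIso, if_pos hv, max_eq_left (by positivity),
    ← mul_eucIso_div h₁ h₂ (by positivity)] at hge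
  exact (fA_le hr1 hr2 hn hv₀).trans hge

end Torus

end

theorem isoperimetric_profile_T2xRn_general (r1 r2 : ℝ) (hr1 : 0 < r1) (hr2 : 0 < r2)
    (n : ℕ) (hn : 1 ≤ n) :
    ∃ vs vss : ℝ, 0 < vs ∧ vs ≤ vss ∧
      (∀ v : ℝ, 0 < v → v ≤ vs →
        isoProfile (T2R r1 r2 n) (n+2) (ENNReal.ofReal v)
          = isoProfile (S1R r1 (n+1)) (n+2) (ENNReal.ofReal v)) ∧
      (∀ v : ℝ, vss ≤ v →
        isoProfile (T2R r1 r2 n) (n+2) (ENNReal.ofReal v)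
          = fA r1 r2 n (ENNReal.ofReal v)) := by
  obtain ⟨v₁, hv₁, htorus⟩ := exists_isoProfile_T2R_eq_eucIso hr1 hr2 hn
  obtain ⟨v₂, hv₂, hcylinder⟩ := exists_isoProfile_S1R_eq_eucIso hr1 (m := n + 1) le_add_self
  obtain ⟨v₃, -, hlarge⟩ := exists_isoProfile_T2R_eq_fA hr1 hr2 hn
  refine ⟨min v₁ v₂, max (min v₁ v₂) v₃, lt_min hv₁ hv₂, le_max_left _ _, fun v hv hle => ?_,
    fun v hv => hlarge v ((le_max_right _ _).trans hv)⟩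
  rw [htorus v hv (hle.trans (min_le_left _ _)), hcylinder v hv (hle.trans (min_le_right _ _))]

/-- Theorem 2 of the paper.
Let `0 < r1 ≤ r2` and `2 ≤ n ≤ 5`.  Then there are `0 < ṽ* ≤ ṽ**` such that the
isoperimetric profile of `T² × ℝⁿ = S¹_{r1} × S¹_{r2} × ℝⁿ` satisfies:
for `0 < v ≤ ṽ*` it equals the isoperimetric profile of `S¹_{r1} × ℝ^{n+1}`,
and for `v ≥ ṽ**` it equals `f_n(v)`. -/
theorem isoperimetric_profile_T2xRn (r1 r2 : ℝ) (hr1 : 0 < r1) (hr12 : r1 ≤ r2)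
    (n : ℕ) (hn2 : 2 ≤ n) (hn5 : n ≤ 5) :
    ∃ vs vss : ℝ, 0 < vs ∧ vs ≤ vss ∧
      (∀ v : ℝ, 0 < v → v ≤ vs →
        isoProfile (T2R r1 r2 n) (n+2) (ENNReal.ofReal v)
          = isoProfile (S1R r1 (n+1)) (n+2) (ENNReal.ofReal v)) ∧
      (∀ v : ℝ, vss ≤ v →
        isoProfile (T2R r1 r2 n) (n+2) (ENNReal.ofReal v)
          = fA r1 r2 n (ENNReal.ofReal v)) :=
  isoperimetric_profile_T2xRn_general r1 r2 hr1 (hr1.trans_le hr12) n (by omega)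

end
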